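/- arXiv:1511.00827 — 3 statements merged into one kernel-verified Lean document; each statement's English description precedes it below -/
import Mathlib

section
/- Let (A, 𝔪) be a two-dimensional excellent normal local domain over an algebraically closed field and let I, J ⊆ A be integrally closed 𝔪-primary ideals. If the Rees algebra 𝓡(IJ) = A[(IJ)t] of the product ideal IJ is a Cohen–Macaulay normal domain, then both 𝓡(I) = A[It] and 𝓡(J) = A[Jt] are Cohen–Macaulay normal domains. -/
/-! Auxiliary definitions.

Mathlib does not yet know about excellent rings; the excellence hypothesis of the paper
is used only to guarantee the existence of resolutions and of the normal Hilbert
polynomial, which we hypothesize directly where needed. -/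

/-- The length `ℓ_R(M)` of a module, defined as the Krull dimension of its lattice of
submodules (for modules of finite length this is the usual Jordan–Hölder length). -/
noncomputable def moduleLength (R M : Type*) [CommRing R] [AddCommGroup M] [Module R M] :
    WithBot ℕ∞ :=
  Order.krullDim (Submodule R M)

/-- `x` is integral over the ideal `I`: it satisfies an equation of integral dependence
`x ^ n + c 1 * x ^ (n-1) + ⋯ + c n = 0` with `c i ∈ I ^ i`. -/
def IsIntegralOverIdeal {A : Type*} [CommRing A] (I : Ideal A) (x : A) : Prop :=
  ∃ n : ℕ, 0 < n ∧ ∃ c : ℕ → A, (∀ i, 1 ≤ i → i ≤ n → c i ∈ I ^ i) ∧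
    x ^ n + ∑ i ∈ Finset.Icc 1 n, c i * x ^ (n - i) = 0

/-- The integral closure `J̄` of an ideal `J`: the set of elements integral over `J`
(this set is an ideal; we take the ideal it generates). -/
noncomputable def idealIntegralClosure {A : Type*} [CommRing A] (I : Ideal A) : Ideal A :=
  Ideal.span {x | IsIntegralOverIdeal I x}

/-- An ideal is integrally closed if it contains every element integral over it. -/
def IdealIsIntegrallyClosed {A : Type*} [CommRing A] (I : Ideal A) : Prop :=
  ∀ x, IsIntegralOverIdeal I x → x ∈ I

/-- A Noetherian local ring is Cohen–Macaulay if some regular sequence contained in the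
maximal ideal has length equal to the Krull dimension of the ring. -/
def IsCohenMacaulayLocalRing (R : Type*) [CommRing R] : Prop :=
  IsNoetherianRing R ∧ ∃ h : IsLocalRing R,
    letI := h
    ∃ rs : List R, (∀ x ∈ rs, x ∈ IsLocalRing.maximalIdeal R) ∧
      RingTheory.Sequence.IsRegular R rs ∧ (rs.length : WithBot ℕ∞) = ringKrullDim R

/-- A Noetherian ring is Cohen–Macaulay if all its localizations at primes are
Cohen–Macaulay local rings. -/
def IsCohenMacaulayRing (R : Type*) [CommRing R] : Prop :=
  IsNoetherianRing R ∧ ∀ (P : Ideal R) (hP : P.IsPrime),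
    letI := hP
    IsCohenMacaulayLocalRing (Localization.AtPrime P)

/-- A Cohen–Macaulay normal domain. -/
def IsCMNormalDomain (R : Type*) [CommRing R] : Prop :=
  IsCohenMacaulayRing R ∧ IsDomain R ∧ IsIntegrallyClosed R

section helpers
open Polynomial
open RingTheory.Sequence

lemma isIntegralOverIdeal_of_poly {A : Type*} [CommRing A] [Nontrivial A] (L : Ideal A) (P : A[X])
    (hP : P.Monic) (hc : ∀ k, P.coeff k ∈ L ^ (P.natDegree - k)) (u : A) (hu : P.eval u = 0) :
    IsIntegralOverIdeal L u := by
  have hd : 0 < P.natDegree := by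
    rcases Nat.eq_zero_or_pos P.natDegree with h | h
    · rw [Polynomial.eq_one_of_monic_natDegree_zero hP h] at hu
      simp at hu
    · exact h
  refine ⟨P.natDegree, hd, fun i => P.coeff (P.natDegree - i), ?_, ?_⟩
  · intro i h1 h2
    have := hc (P.natDegree - i)
    rwa [Nat.sub_sub_self h2] at this
  · rw [Polynomial.eval_eq_sum_range, Finset.sum_range_succ, hP.coeff_natDegree, one_mul,
      add_comm] at hu
    rw [← hu]
    congr 1
    refine Finset.sum_nbij' (fun i => P.natDegree - i) (fun i => P.natDegree - i) ?_ ?_ ?_ ?_ ?_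
    · intro i hi; simp at hi ⊢; omega
    · intro i hi; simp at hi ⊢; omega
    · intro i hi; simp at hi ⊢; omega
    · intro i hi; simp at hi ⊢; omega
    · intro i hi; rfl

lemma dt_lemma {A : Type*} [CommRing A] [IsDomain A] [IsNoetherianRing A] [IsIntegrallyClosed A]
    (L M : Ideal A) (hM : M ≠ ⊥) (hL : IdealIsIntegrallyClosed L) (p q : A) (hq : q ≠ 0)
    (h : ∀ m ∈ M, ∃ m' ∈ L * M, p * m = q * m') : ∃ u ∈ L, p = q * u := by
  have h' : ∀ m : M, ∃ m' : M, (m' : A) ∈ L * M ∧ p * m = q * m' := by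
    intro m
    obtain ⟨m', h1, h2⟩ := h m m.2
    exact ⟨⟨m', (Ideal.mul_le_right : L * M ≤ M) h1⟩, h1, h2⟩
  choose f hf1 hf2 using h'
  let φ : Module.End A M :=
    { toFun := f
      map_add' := by
        intro x y
        apply Subtype.ext
        apply mul_left_cancel₀ hq
        rw [← hf2]
        push_cast
        rw [mul_add, mul_add, ← hf2, ← hf2]
      map_smul' := by
        intro r x
        apply Subtype.ext
        apply mul_left_cancel₀ hq
        rw [← hf2]
        simp only [RingHom.id_apply, SetLike.val_smul, smul_eq_mul]
        rw [mul_left_comm q, ← hf2]; ring }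
  have hr : LinearMap.range φ ≤ L • (⊤ : Submodule A M) := by
    rintro _ ⟨m, rfl⟩
    have h1 : (f m : A) ∈ L * M := hf1 m
    have : L • (⊤ : Submodule A M) = Submodule.comap M.subtype (L • M) := by
      apply Submodule.map_injective_of_injective M.subtype_injective
      rw [Submodule.map_smul'', Submodule.map_top, Submodule.map_comap_eq, Submodule.range_subtype]
      exact (inf_eq_right.2 Submodule.smul_le_right).symm
    rw [this]
    exact h1
  obtain ⟨P, hPm, -, hPc, hP0⟩ :=
    LinearMap.exists_monic_and_natDegree_eq_and_coeff_mem_pow_and_aeval_eq_zero A φ L hr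
  let F := FractionRing A
  have hqF : algebraMap A F q ≠ 0 := by simpa using hq
  let u : F := algebraMap A F p / algebraMap A F q
  have hφ : ∀ m : M, algebraMap A F (φ m : A) = u * algebraMap A F m := by
    intro m
    have : algebraMap A F (p * m) = algebraMap A F (q * f m) := by rw [hf2]
    simp only [map_mul] at this
    change algebraMap A F (f m) = u * algebraMap A F m
    rw [div_mul_eq_mul_div, eq_div_iff hqF, this, mul_comm]
  have hpow : ∀ (k : ℕ) (m : M), algebraMap A F ((φ ^ k) m : A) = u ^ k * algebraMap A F m := by
    intro k
    induction k with
    | zero => intro m; simp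
    | succ k ih => intro m; rw [pow_succ, Module.End.mul_apply, ih, hφ, pow_succ]; ring
  have haev : ∀ (m : M), algebraMap A F ((aeval φ P) m : A) = aeval u P * algebraMap A F m := by
    intro m
    rw [aeval_eq_sum_range, aeval_eq_sum_range]
    simp only [LinearMap.sum_apply, Submodule.coe_sum, map_sum, Finset.sum_mul]
    refine Finset.sum_congr rfl fun i _ => ?_
    rw [LinearMap.smul_apply, SetLike.val_smul, smul_eq_mul, map_mul, hpow, Algebra.smul_def,
      mul_assoc]
  obtain ⟨m, hm, hm0⟩ := Submodule.exists_mem_ne_zero_of_ne_bot hM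
  have hu0 : aeval u P = 0 := by
    have := haev ⟨m, hm⟩
    rw [hP0] at this
    simp only [LinearMap.zero_apply, ZeroMemClass.coe_zero, map_zero] at this
    rcases mul_eq_zero.1 this.symm with h | h
    · exact h
    · simp at h; exact absurd h hm0
  have hwint : IsIntegral A u := ⟨P, hPm, hu0⟩
  obtain ⟨v, hv⟩ := IsIntegrallyClosed.isIntegral_iff.1 hwint
  refine ⟨v, ?_, ?_⟩
  · apply hL
    refine isIntegralOverIdeal_of_poly L P hPm hPc v ?_
    rw [← hv, aeval_algebraMap_apply] at hu0
    simpa using hu0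
  · apply IsFractionRing.injective A F
    rw [map_mul, hv, mul_div_cancel₀ _ hqF]

lemma top_closed {A : Type*} [CommRing A] : IdealIsIntegrallyClosed (⊤ : Ideal A) :=
  fun _ _ => trivial

/-- depth two for normal domains -/
lemma depth_two {A : Type*} [CommRing A] [IsDomain A] [IsNoetherianRing A] [IsIntegrallyClosed A]
    (n : Ideal A) [n.IsPrime] (hn : 2 ≤ n.height) (x w : A) (hx : x ≠ 0)
    (h : ∀ s ∈ n, x ∣ s * w) : x ∣ w := by
  by_cases hc : ∀ s ∈ n, ∃ b ∈ n, s * w = x * b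
  · have hnb : n ≠ ⊥ := by
      rintro rfl
      simp at hn
    obtain ⟨u, -, hu⟩ := dt_lemma ⊤ n hnb top_closed w x hx (by
      intro m hm
      obtain ⟨b, hb, h2⟩ := hc m hm
      exact ⟨b, by simpa using hb, by rw [mul_comm, h2]⟩)
    exact ⟨u, hu⟩
  · exfalso
    push Not at hc
    obtain ⟨r, hr, hr2⟩ := hc
    obtain ⟨b, hb⟩ := h r hr
    have hbn : b ∉ n := fun h => hr2 b h hb
    have hw : w ≠ 0 := by
      rintro rfl
      apply hbn
      have : b = 0 := by
        rcases mul_eq_zero.1 (by simpa using hb.symm : x * b = 0) with h | h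
        · exact absurd h hx
        · exact h
      rw [this]; exact n.zero_mem
    have hmin : n ∈ (Ideal.span {r}).minimalPrimes := by
      refine ⟨⟨inferInstance, by simpa [Ideal.span_le] using hr⟩, ?_⟩
      rintro P ⟨hP, hrP⟩ hPn s hs
      have hrP' : r ∈ P := hrP (Ideal.mem_span_singleton_self r)
      obtain ⟨b', hb'⟩ := h s hs
      have : s * b = b' * r := by
        apply mul_left_cancel₀ hw
        apply mul_left_cancel₀ hx
        linear_combination x * b * hb' - x * b' * hb
      have h3 : s * b ∈ P := by rw [this]; exact P.mul_mem_left _ hrP'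
      rcases hP.mem_or_mem h3 with h | h
      · exact h
      · exact absurd (hPn h) hbn
    have := Ideal.height_le_one_of_isPrincipal_of_mem_minimalPrimes (Ideal.span {r}) n hmin
    exact absurd (hn.trans this) (by norm_num)

lemma regular_of_primary {A : Type*} [CommRing A] [IsDomain A] [IsNoetherianRing A]
    [IsIntegrallyClosed A] (n : Ideal A) [n.IsPrime] (hn : 2 ≤ n.height) (q1 q2 : A)
    (h1 : q1 ≠ 0) (N : ℕ) (hN : n ^ N ≤ Ideal.span {q1, q2}) (w w' : A)
    (h : q1 * w' = q2 * w) : ∃ v, w = q1 * v ∧ w' = q2 * v := by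
  have key : ∀ k, (∀ s ∈ n ^ k, q1 ∣ s * w) → q1 ∣ w := by
    intro k
    induction k with
    | zero => intro h; simpa using h 1 (by simp)
    | succ k ih =>
      intro h
      apply ih
      intro s hs
      refine depth_two n hn q1 (s * w) h1 ?_
      intro r hr
      rw [← mul_assoc]
      exact h _ (by rw [pow_succ']; exact Ideal.mul_mem_mul hr hs)
  have : q1 ∣ w := by
    apply key N
    intro s hs
    obtain ⟨a, b, rfl⟩ := Ideal.mem_span_pair.1 (hN hs)
    refine ⟨a * w + b * w', ?_⟩
    linear_combination - b * h
  obtain ⟨v, rfl⟩ := this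
  refine ⟨v, rfl, mul_left_cancel₀ h1 ?_⟩
  linear_combination h


lemma wr_aux {R : Type*} [CommRing R] (L : List R) (z : R) :
    IsSMulRegular (R ⧸ (Ideal.ofList L • ⊤ : Submodule R R)) z ↔
      ∀ w, z * w ∈ Ideal.ofList L → w ∈ Ideal.ofList L := by
  have : (Ideal.ofList L • ⊤ : Submodule R R) = Ideal.ofList L := by
    rw [smul_eq_mul, Ideal.mul_top]
  rw [this, isSMulRegular_quotient_iff_mem_of_smul_mem]
  rfl

lemma wr1 {R : Type*} [CommRing R] (x : R) :
    RingTheory.Sequence.IsWeaklyRegular R [x] ↔ ∀ w, x * w = 0 → w = 0 := by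
  rw [RingTheory.Sequence.isWeaklyRegular_iff]
  constructor
  · intro h w hw
    have := (wr_aux _ _).1 (h 0 (by simp)) w
    simpa [hw] using this
  · intro h i hi
    simp at hi
    subst hi
    refine (wr_aux _ _).2 fun w hw => ?_
    simpa using h w (by simpa using hw)

lemma wr2 {R : Type*} [CommRing R] (x y : R) :
    RingTheory.Sequence.IsWeaklyRegular R [x, y] ↔ (∀ w, x * w = 0 → w = 0) ∧
      (∀ w, x ∣ y * w → x ∣ w) := by
  rw [RingTheory.Sequence.isWeaklyRegular_iff]
  constructor
  · intro h
    refine ⟨fun w hw => ?_, fun w hw => ?_⟩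
    · have := (wr_aux _ _).1 (h 0 (by simp)) w
      simpa [hw] using this
    · have := (wr_aux _ _).1 (h 1 (by simp)) w
      simpa [Ideal.mem_span_singleton, hw] using this
  · intro h i hi
    refine (wr_aux _ _).2 fun w hw => ?_
    simp at hi
    interval_cases i
    · simpa using h.1 w (by simpa using hw)
    · simpa [Ideal.mem_span_singleton] using h.2 w (by simpa [Ideal.mem_span_singleton] using hw)

lemma wr3 {R : Type*} [CommRing R] (x y z : R) :
    RingTheory.Sequence.IsWeaklyRegular R [x, y, z] ↔ (∀ w, x * w = 0 → w = 0) ∧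
      (∀ w, x ∣ y * w → x ∣ w) ∧
      (∀ w, (∃ s t, z * w = x * s + y * t) → ∃ s t, w = x * s + y * t) := by
  have key : ∀ v, v ∈ Ideal.ofList [x, y] ↔ ∃ s t, v = x * s + y * t := by
    intro v
    have : Ideal.ofList [x, y] = Ideal.span {x, y} := by
      rw [Ideal.ofList]; congr 1; ext; simp
    rw [this, Ideal.mem_span_pair]
    constructor
    · rintro ⟨s, t, h⟩; exact ⟨s, t, by rw [← h]; ring⟩
    · rintro ⟨s, t, h⟩; exact ⟨s, t, by rw [h]; ring⟩
  rw [RingTheory.Sequence.isWeaklyRegular_iff]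
  constructor
  · intro h
    refine ⟨fun w hw => ?_, fun w hw => ?_, fun w hw => ?_⟩
    · have := (wr_aux _ _).1 (h 0 (by simp)) w
      simpa [hw] using this
    · have := (wr_aux _ _).1 (h 1 (by simp)) w
      simpa [Ideal.mem_span_singleton, hw] using this
    · have := (wr_aux _ _).1 (h 2 (by simp)) w
      exact (key _).1 (this ((key _).2 hw))
  · intro h i hi
    refine (wr_aux _ _).2 fun w hw => ?_
    simp at hi
    interval_cases i
    · simpa using h.1 w (by simpa using hw)
    · simpa [Ideal.mem_span_singleton] using h.2.1 w (by simpa [Ideal.mem_span_singleton] using hw)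
    · exact (key _).2 (h.2.2 w ((key _).1 hw))

/-- Serre S2 at a maximal ideal. -/
lemma exists_two {B : Type*} [CommRing B] [IsDomain B] [IsNoetherianRing B] [IsIntegrallyClosed B]
    (n : Ideal B) [hnm : n.IsMaximal] (hn : 2 ≤ n.height) :
    ∃ x ∈ n, ∃ y ∈ n, x ≠ 0 ∧ (∀ w, x ∣ y * w → x ∣ w) := by
  have hnb : n ≠ ⊥ := by
    rintro rfl
    simp at hn
  obtain ⟨x, hxn, hx⟩ := Submodule.exists_mem_ne_zero_of_ne_bot hnb
  refine ⟨x, hxn, ?_⟩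
  have hfin := associatedPrimes.finite B (B ⧸ Ideal.span {x})
  have hnot : ¬ ((n : Set B) ⊆ ⋃ q ∈ associatedPrimes B (B ⧸ Ideal.span {x}), (q : Set B)) := by
    intro hsub
    have := (Ideal.subset_union_prime_finite hfin (f := fun q => q) ⊥ ⊥ (by
      intro q hq _ _
      exact hq.1) (I := n)).1 hsub
    obtain ⟨q, hq, hnq⟩ := this
    have hqp : q.IsPrime := hq.1
    have hqn : n = q := hnm.eq_of_le hqp.ne_top hnq
    obtain ⟨w, hw⟩ := ((isAssociatedPrime_iff).1 hq).2
    obtain ⟨w, rfl⟩ := Ideal.Quotient.mk_surjective w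
    have hmem : ∀ s, s ∈ q ↔ x ∣ s * w := by
      intro s
      rw [hw, Submodule.mem_colon_singleton, Submodule.mem_bot]
      rw [show s • (Ideal.Quotient.mk (Ideal.span {x})) w = Ideal.Quotient.mk (Ideal.span {x}) (s * w) from rfl,
        Ideal.Quotient.eq_zero_iff_mem, Ideal.mem_span_singleton]
    have := depth_two n hn x w hx (fun s hs => (hmem s).1 (hqn ▸ hs))
    apply hqp.ne_top
    rw [Ideal.eq_top_iff_one]
    exact (hmem 1).2 (by simpa using this)
  obtain ⟨y, hyn, hy⟩ := Set.not_subset.1 hnot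
  refine ⟨y, hyn, hx, fun w hw => ?_⟩
  rw [biUnion_associatedPrimes_eq_compl_regular] at hy
  simp only [Set.mem_compl_iff, not_not, Set.mem_setOf_eq] at hy
  have := (isSMulRegular_quotient_iff_mem_of_smul_mem _ _).1 hy w
  simp only [smul_eq_mul, Ideal.mem_span_singleton] at this
  exact this hw


lemma height_le_of_dim {B : Type*} [CommRing B] (d : ℕ) (hdim : ringKrullDim B ≤ d)
    (P : Ideal B) [hP : P.IsPrime] : P.height ≤ d := by
  have := (Ideal.height_le_ringKrullDim_of_isPrime (I := P)).trans hdim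
  exact_mod_cast this

lemma max_of_height {B : Type*} [CommRing B] (d : ℕ) (hdim : ringKrullDim B ≤ d)
    (P : Ideal B) [hP : P.IsPrime] (h : d ≤ P.height) : P.IsMaximal := by
  obtain ⟨M, hM, hPM⟩ := Ideal.exists_le_maximal P hP.ne_top
  rcases lt_or_eq_of_le hPM with h1 | h1
  · have h2 := Ideal.height_add_one_le_of_lt_of_isPrime h1
    have h3 := height_le_of_dim d hdim M
    exfalso
    have h4 : ((d : ℕ∞) + 1) ≤ d := (by gcongr : (d : ℕ∞) + 1 ≤ P.height + 1).trans (h2.trans h3)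
    exact absurd h4 (by exact_mod_cast Nat.not_succ_le_self d)
  · rw [h1]; exact hM

lemma poly_case {B : Type*} [CommRing B] [IsDomain B] [IsNoetherianRing B] [IsIntegrallyClosed B]
    (hdim : ringKrullDim B ≤ (2 : ℕ)) (P : Ideal B[X]) [hP : P.IsPrime] (hh : 3 ≤ P.height) :
    ∃ x ∈ P, ∃ y ∈ P, ∃ z ∈ P, RingTheory.Sequence.IsWeaklyRegular B[X] [x, y, z] := by
  have hd : ringKrullDim B[X] ≤ (3 : ℕ) := by
    rw [Polynomial.ringKrullDim_of_isNoetherianRing]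
    calc ringKrullDim B + 1 ≤ (2 : ℕ) + 1 := by gcongr
      _ = (3 : ℕ) := by norm_num
  have hPm : P.IsMaximal := max_of_height 3 hd P (by exact_mod_cast hh)
  set n : Ideal B := P.comap C with hn
  have hnp : n.IsPrime := Ideal.IsPrime.comap _
  have : P.LiesOver n := ⟨rfl⟩
  have h1 := Polynomial.height_eq_height_add_one n P
  have hn2 : 2 ≤ n.height := by
    rw [h1] at hh
    have : (2 : ℕ∞) + 1 ≤ n.height + 1 := by norm_num; exact hh
    exact (ENat.add_le_add_iff_right (by simp)).1 this
  have hnm : n.IsMaximal := max_of_height 2 hdim n (by exact_mod_cast hn2)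
  obtain ⟨x, hxn, y, hyn, hx, hxy⟩ := exists_two n hn2
  -- monic polynomial
  have hlt : ∃ g ∈ P, g.map (Ideal.Quotient.mk n) ≠ 0 := by
    by_contra hcon
    push Not at hcon
    have hcoef : ∀ g ∈ P, ∀ i, g.coeff i ∈ n := by
      intro g hg i
      have := congrArg (fun p => p.coeff i) (hcon g hg)
      simpa [Polynomial.coeff_map, Ideal.Quotient.eq_zero_iff_mem] using this
    have hXP : (X : B[X]) ∉ P := fun h => hnp.ne_top ((Ideal.eq_top_iff_one _).2 (by
      simpa using hcoef _ h 1))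
    obtain ⟨u, hu⟩ := hPm.exists_inv hXP
    obtain ⟨p, hp, hup⟩ := hu
    have h0 := congrArg (fun p => p.coeff 0) hup
    simp at h0
    exact hnp.ne_top ((Ideal.eq_top_iff_one _).2 (h0 ▸ hcoef _ hp 0))
  obtain ⟨g, hgP, hg⟩ := hlt
  letI : Field (B ⧸ n) := Ideal.Quotient.field n
  obtain ⟨c, hc⟩ := Ideal.Quotient.mk_surjective ((g.map (Ideal.Quotient.mk n)).leadingCoeff⁻¹)
  have hmon : ((C c * g).map (Ideal.Quotient.mk n)).Monic := by
    rw [Polynomial.map_mul, Polynomial.map_C, hc, mul_comm]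
    exact Polynomial.monic_mul_leadingCoeff_inv hg
  obtain ⟨f, hf, -, hfm⟩ := Polynomial.lifts_and_natDegree_eq_and_monic
    (f := Ideal.Quotient.mk n) ((Polynomial.mem_lifts _).2 ⟨_, rfl⟩) hmon
  have hnP : n.map C ≤ P := Ideal.map_comap_le
  have hfP : f ∈ P := by
    have h2 : f - C c * g ∈ P := by
      apply hnP
      rw [Ideal.mem_map_C_iff]
      intro i
      have := congrArg (fun p => p.coeff i) hf
      simp only [Polynomial.coeff_map] at this
      rw [Polynomial.coeff_sub]
      exact (Ideal.Quotient.eq).1 this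
    have := P.add_mem h2 (P.mul_mem_left (C c) hgP)
    simpa using this
  refine ⟨C x, hxn, C y, hyn, f, hfP, (wr3 _ _ _).2 ⟨?_, ?_, ?_⟩⟩
  · intro w hw
    rcases mul_eq_zero.1 hw with h | h
    · simp [hx] at h
    · exact h
  · intro w hw
    rw [Polynomial.C_dvd_iff_dvd_coeff] at hw ⊢
    intro i
    exact hxy _ (by simpa using hw i)
  · set N : Ideal B := Ideal.span {x, y} with hN
    have key : ∀ w : B[X], w ∈ N.map C ↔ ∃ s t, w = C x * s + C y * t := by
      intro w
      rw [hN, Ideal.map_span, Set.image_pair, Ideal.mem_span_pair]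
      constructor
      · rintro ⟨s, t, h⟩; exact ⟨s, t, by rw [← h]; ring⟩
      · rintro ⟨s, t, h⟩; exact ⟨s, t, by rw [h]; ring⟩
    have key2 : ∀ w : B[X], w ∈ N.map C ↔ w.map (Ideal.Quotient.mk N) = 0 := by
      intro w
      rw [Ideal.mem_map_C_iff, Polynomial.ext_iff]
      simp [Polynomial.coeff_map, Ideal.Quotient.eq_zero_iff_mem]
    intro w hw
    rw [← key, key2] at hw ⊢
    rw [Polynomial.map_mul] at hw
    exact ((hfm.map _).mul_right_eq_zero_iff).1 hw


lemma dim_quot {S S' : Type*} [CommRing S] [IsDomain S] [CommRing S'] (φ : S →+* S')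
    (hφ : Function.Surjective φ) (r : S) (hr : r ≠ 0) (h0 : φ r = 0) (d : ℕ)
    (hd : ringKrullDim S ≤ (d + 1 : ℕ)) : ringKrullDim S' ≤ d := by
  have h1 := ringKrullDim_quotient_succ_le_of_nonZeroDivisor (mem_nonZeroDivisors_of_ne_zero hr)
  have h2 : ringKrullDim S' ≤ ringKrullDim (S ⧸ Ideal.span {r}) := by
    refine ringKrullDim_le_of_surjective (Ideal.Quotient.lift (Ideal.span {r}) φ ?_) ?_
    · intro a ha
      obtain ⟨b, rfl⟩ := Ideal.mem_span_singleton.1 ha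
      simp [h0]
    · exact Ideal.Quotient.lift_surjective_of_surjective _ _ hφ
  have h3 : ringKrullDim S' + 1 ≤ (d : WithBot ℕ∞) + 1 := by
    calc ringKrullDim S' + 1 ≤ ringKrullDim (S ⧸ Ideal.span {r}) + 1 := by gcongr
      _ ≤ _ := h1
      _ ≤ _ := hd
      _ = _ := by push_cast; rfl
  generalize ringKrullDim S' = e at h3
  induction e with
  | bot => exact bot_le
  | coe e =>
    have h4 : e + 1 ≤ (d : ℕ∞) + 1 := by exact_mod_cast h3
    have h5 : e ≤ (d : ℕ∞) := (ENat.add_le_add_iff_right (by simp)).1 h4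
    exact_mod_cast h5

lemma gen_eval {S T : Type*} [CommRing S] [CommRing T] (g : S →+* T) (z : T) (a b : S) :
    (Polynomial.eval₂RingHom g z) (C a * X - C b) = g a * z - g b := by
  simp

set_option maxHeartbeats 1000000 in
lemma adjoin_dim {A : Type*} [CommRing A] [IsDomain A] [IsNoetherianRing A] (d : ℕ)
    (hdim : ringKrullDim A ≤ d) (f1 : A) (hf1 : f1 ≠ 0) (s : Finset A) :
    ringKrullDim (Algebra.adjoin A (insert (monomial 1 f1) ((monomial 1) '' (s : Set A))) :
      Subalgebra A A[X]) ≤ (d + 1 : ℕ) := by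
  classical
  induction s using Finset.induction_on with
  | empty =>
    have e0 : insert ((monomial 1) f1) ((monomial 1) '' ((∅ : Finset A) : Set A))
        = {(monomial 1) f1} := by simp
    rw [e0, Algebra.adjoin_singleton_eq_range_aeval]
    refine (ringKrullDim_le_of_surjective
      (Polynomial.aeval (R := A) ((monomial 1) f1 : A[X])).rangeRestrict.toRingHom
      (AlgHom.rangeRestrict_surjective _)).trans ?_
    rw [Polynomial.ringKrullDim_of_isNoetherianRing]
    push_cast
    gcongr
  | insert f s hf ih =>
    set T : Set A[X] := insert (monomial 1 f1) ((monomial 1) '' (s : Set A)) with hT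
    have hTfin : T.Finite := (s.finite_toSet.image _).insert _
    have hT' : insert ((monomial 1) f1) ((monomial 1) '' ((insert f s : Finset A) : Set A))
        = insert ((monomial 1) f) T := by
      rw [hT, Finset.coe_insert, Set.image_insert_eq, Set.insert_comm]
    rw [hT']
    set S := Algebra.adjoin A T with hS
    have hfg : S.FG := by
      rw [Subalgebra.fg_def]; exact ⟨T, hTfin, rfl⟩
    have : IsNoetherianRing S := isNoetherianRing_of_fg hfg
    set φ : S[X] →+* A[X] := Polynomial.eval₂RingHom (algebraMap S A[X]) (monomial 1 f) with hφ
    have hrange : ∀ y, (∃ p, φ p = y) ↔ y ∈ Algebra.adjoin A (insert ((monomial 1) f) T) := by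
      intro y
      constructor
      · rintro ⟨p, rfl⟩
        simp only [hφ, Polynomial.coe_eval₂RingHom, Polynomial.eval₂_eq_sum_range]
        refine Subalgebra.sum_mem _ fun i _ => Subalgebra.mul_mem _ ?_ (Subalgebra.pow_mem _
          (Algebra.subset_adjoin (Set.mem_insert _ _)) _)
        exact Algebra.adjoin_mono (Set.subset_insert _ _) (p.coeff i).2
      · intro hy
        induction hy using Algebra.adjoin_induction with
        | mem x hx =>
          rcases hx with rfl | hx
          · exact ⟨X, by simp [hφ]⟩
          · exact ⟨C ⟨x, Algebra.subset_adjoin hx⟩, by simp [hφ]⟩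
        | algebraMap r => exact ⟨C (algebraMap A S r), by simp [hφ]⟩
        | add x y _ _ hx hy =>
          obtain ⟨p, rfl⟩ := hx
          obtain ⟨q, rfl⟩ := hy
          exact ⟨p + q, map_add _ _ _⟩
        | mul x y _ _ hx hy =>
          obtain ⟨p, rfl⟩ := hx
          obtain ⟨q, rfl⟩ := hy
          exact ⟨p * q, map_mul _ _ _⟩
    let ψ : S[X] →+* (Algebra.adjoin A (insert ((monomial 1) f) T)) :=
      φ.codRestrict _ (fun p => (hrange _).1 ⟨p, rfl⟩)
    have hψ : Function.Surjective ψ := by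
      rintro ⟨y, hy⟩
      obtain ⟨p, hp⟩ := (hrange y).2 hy
      exact ⟨p, Subtype.ext hp⟩
    set g : S := ⟨(monomial 1) f1, Algebra.subset_adjoin (Set.mem_insert _ _)⟩ with hg
    refine dim_quot ψ hψ (C (algebraMap A S f1) * X - C (f • g)) ?_ ?_ _ ?_
    · intro h0
      have := congrArg (fun p => p.coeff 1) h0
      simp [coeff_C] at this
      exact hf1 this
    · apply Subtype.ext
      change φ _ = 0
      have e1 : algebraMap S A[X] (f • g) = f • monomial 1 f1 := rfl
      have e2 : algebraMap S A[X] (algebraMap A S f1) = C f1 := rfl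
      refine (gen_eval (algebraMap S A[X]) _ _ _).trans ?_
      rw [e1, e2, C_mul_monomial, smul_monomial, smul_eq_mul, mul_comm, sub_self]
    · rw [Polynomial.ringKrullDim_of_isNoetherianRing]
      push_cast at ih ⊢
      gcongr

lemma rees_dim_le {A : Type*} [CommRing A] [IsDomain A] [IsNoetherianRing A] (d : ℕ)
    (hdim : ringKrullDim A ≤ d) (K : Ideal A) (hK : K ≠ ⊥) :
    ringKrullDim (reesAlgebra K) ≤ (d + 1 : ℕ) := by
  classical
  obtain ⟨f1, hf1K, hf1⟩ := Submodule.exists_mem_ne_zero_of_ne_bot hK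
  obtain ⟨s, hs⟩ := IsNoetherian.noetherian K
  have := adjoin_dim d hdim f1 hf1 s
  have h : (Algebra.adjoin A (insert (monomial 1 f1) ((monomial 1) '' (s : Set A))) :
      Subalgebra A A[X]) = reesAlgebra K := by
    rw [← adjoin_monomial_eq_reesAlgebra]
    apply le_antisymm
    · apply Algebra.adjoin_mono
      rintro _ (rfl | ⟨a, ha, rfl⟩)
      · exact ⟨f1, hf1K, rfl⟩
      · exact ⟨a, hs ▸ Submodule.subset_span ha, rfl⟩
    · rw [← hs, Submodule.map_span, Algebra.adjoin_span]
      exact Algebra.adjoin_mono (Set.subset_insert _ _)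
  rwa [h] at this


section koszul
variable {R : Type*} [CommRing R]

lemma koszul (r1 r2 r3 x1 x2 x3 : R)
    (hr : RingTheory.Sequence.IsWeaklyRegular R [r1, r2, r3])
    (h1 : ∃ N, r1 ^ N ∈ Ideal.span {x1, x2, x3})
    (h2 : ∃ N, r2 ^ N ∈ Ideal.span {x1, x2, x3})
    (h3 : ∃ N, r3 ^ N ∈ Ideal.span {x1, x2, x3})
    (v1 v2 v3 : R) (hv : x1 * v1 + x2 * v2 + x3 * v3 = 0) :
    ∃ w1 w2, v3 = x1 * w2 - x2 * w1 := by
  obtain ⟨hr1, hr2, hr3⟩ := (wr3 _ _ _).1 hr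
  have mem : ∀ u, u ∈ Ideal.span {x1, x2, x3} → ∃ y1 y2 y3, u = y1 * x1 + y2 * x2 + y3 * x3 := by
    intro u hu
    rw [Ideal.mem_span_insert] at hu
    obtain ⟨y1, z, hz, rfl⟩ := hu
    obtain ⟨y2, y3, rfl⟩ := Ideal.mem_span_pair.1 hz
    exact ⟨y1, y2, y3, by ring⟩
  -- level 3
  have E3 : ∀ g, (∃ s t, g * x1 = r1 * s + r2 * t) → (∃ s t, g * x2 = r1 * s + r2 * t) →
      (∃ s t, g * x3 = r1 * s + r2 * t) → ∃ s t, g = r1 * s + r2 * t := by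
    rintro g ⟨s1, t1, e1⟩ ⟨s2, t2, e2⟩ ⟨s3, t3, e3⟩
    obtain ⟨N, hN⟩ := h3
    obtain ⟨y1, y2, y3, hy⟩ := mem _ hN
    have hpow : ∀ M : ℕ, (∃ s t, r3 ^ M * g = r1 * s + r2 * t) → ∃ s t, g = r1 * s + r2 * t := by
      intro M
      induction M with
      | zero => rintro ⟨s, t, h⟩; exact ⟨s, t, by simpa using h⟩
      | succ M ih =>
        rintro ⟨s, t, h⟩
        exact ih (hr3 _ ⟨s, t, by rw [← h]; ring⟩)
    refine hpow N ⟨y1 * s1 + y2 * s2 + y3 * s3, y1 * t1 + y2 * t2 + y3 * t3, ?_⟩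
    rw [hy]
    linear_combination y1 * e1 + y2 * e2 + y3 * e3
  -- level 2
  have E2 : ∀ v1 v2 v3 a b c, x2 * v3 - x3 * v2 = r1 * a → x3 * v1 - x1 * v3 = r1 * b →
      x1 * v2 - x2 * v1 = r1 * c → ∃ g w1 w2 w3, v1 = g * x1 + r1 * w1 ∧ v2 = g * x2 + r1 * w2 ∧
        v3 = g * x3 + r1 * w3 := by
    intro v1 v2 v3 a b c ha hb hc
    obtain ⟨N, hN⟩ := h2
    obtain ⟨y1, y2, y3, hy⟩ := mem _ hN
    have hpow : ∀ M : ℕ, (∃ g w1 w2 w3, r2 ^ M * v1 = g * x1 + r1 * w1 ∧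
        r2 ^ M * v2 = g * x2 + r1 * w2 ∧ r2 ^ M * v3 = g * x3 + r1 * w3) →
        ∃ g w1 w2 w3, v1 = g * x1 + r1 * w1 ∧ v2 = g * x2 + r1 * w2 ∧ v3 = g * x3 + r1 * w3 := by
      intro M
      induction M with
      | zero => rintro ⟨g, w1, w2, w3, h⟩; exact ⟨g, w1, w2, w3, by simpa using h⟩
      | succ M ih =>
        rintro ⟨g, w1, w2, w3, k1, k2, k3⟩
        obtain ⟨s, g', rfl⟩ := E3 g ⟨-w1, r2 ^ M * v1, by linear_combination -k1⟩
          ⟨-w2, r2 ^ M * v2, by linear_combination -k2⟩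
          ⟨-w3, r2 ^ M * v3, by linear_combination -k3⟩
        obtain ⟨u1, hu1⟩ := hr2 (r2 ^ M * v1 - g' * x1)
          ⟨w1 + s * x1, by linear_combination k1⟩
        obtain ⟨u2, hu2⟩ := hr2 (r2 ^ M * v2 - g' * x2)
          ⟨w2 + s * x2, by linear_combination k2⟩
        obtain ⟨u3, hu3⟩ := hr2 (r2 ^ M * v3 - g' * x3)
          ⟨w3 + s * x3, by linear_combination k3⟩
        exact ih ⟨g', u1, u2, u3, by linear_combination hu1, by linear_combination hu2,
          by linear_combination hu3⟩
    refine hpow N ⟨y1 * v1 + y2 * v2 + y3 * v3, y3 * b - y2 * c, y1 * c - y3 * a,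
      y2 * a - y1 * b, ?_, ?_, ?_⟩
    · rw [hy]; linear_combination y3 * hb - y2 * hc
    · rw [hy]; linear_combination y1 * hc - y3 * ha
    · rw [hy]; linear_combination y2 * ha - y1 * hb
  -- level 1
  obtain ⟨N, hN⟩ := h1
  obtain ⟨y1, y2, y3, hy⟩ := mem _ hN
  have hpow : ∀ M : ℕ, (∃ w1 w2 w3, r1 ^ M * v1 = x2 * w3 - x3 * w2 ∧
      r1 ^ M * v2 = x3 * w1 - x1 * w3 ∧ r1 ^ M * v3 = x1 * w2 - x2 * w1) →
      ∃ w1 w2, v3 = x1 * w2 - x2 * w1 := by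
    intro M
    induction M with
    | zero => rintro ⟨w1, w2, w3, h⟩; exact ⟨w1, w2, by simpa using h.2.2⟩
    | succ M ih =>
      rintro ⟨w1, w2, w3, k1, k2, k3⟩
      obtain ⟨g, u1, u2, u3, rfl, rfl, rfl⟩ := E2 w1 w2 w3 (r1 ^ M * v1) (r1 ^ M * v2)
        (r1 ^ M * v3) (by rw [← k1]; ring) (by rw [← k2]; ring) (by rw [← k3]; ring)
      refine ih ⟨u1, u2, u3, ?_, ?_, ?_⟩
      · exact sub_eq_zero.1 (hr1 _ (by linear_combination k1))
      · exact sub_eq_zero.1 (hr1 _ (by linear_combination k2))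
      · exact sub_eq_zero.1 (hr1 _ (by linear_combination k3))
  refine hpow N ⟨v2 * y3 - v3 * y2, v3 * y1 - v1 * y3, v1 * y2 - v2 * y1, ?_, ?_, ?_⟩
  · rw [hy]; linear_combination y1 * hv
  · rw [hy]; linear_combination y2 * hv
  · rw [hy]; linear_combination y3 * hv

lemma take_three (rs : List R) (h : RingTheory.Sequence.IsWeaklyRegular R rs)
    (hl : 3 ≤ rs.length) :
    ∃ r1 ∈ rs, ∃ r2 ∈ rs, ∃ r3 ∈ rs, RingTheory.Sequence.IsWeaklyRegular R [r1, r2, r3] := by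
  match rs, hl with
  | r1 :: r2 :: r3 :: tl, _ =>
    refine ⟨r1, by simp, r2, by simp, r3, by simp, ?_⟩
    have : r1 :: r2 :: r3 :: tl = [r1, r2, r3] ++ tl := rfl
    rw [this, RingTheory.Sequence.isWeaklyRegular_append_iff] at h
    exact h.1

end koszul


lemma int_closed_use {R S : Type*} [CommRing R] [IsDomain R] [IsIntegrallyClosed R] [CommRing S]
    [IsDomain S] [Algebra R S] (hinj : Function.Injective (algebraMap R S)) (z : S)
    (hz : IsIntegral R z) (s r : R) (hs : s ≠ 0) (h : algebraMap R S s * z = algebraMap R S r) :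
    ∃ r', algebraMap R S r' = z := by
  obtain ⟨p, hpm, hp⟩ := hz
  have hinj' : Function.Injective (algebraMap S (FractionRing S)) := IsFractionRing.injective _ _
  have hinj2 : Function.Injective (algebraMap R (FractionRing S)) := by
    rw [IsScalarTower.algebraMap_eq R S (FractionRing S)]
    exact hinj'.comp hinj
  let φ : FractionRing R →ₐ[R] FractionRing S :=
    IsFractionRing.liftAlgHom (R := R) (K := FractionRing R) (g := Algebra.ofId R (FractionRing S))
      (by exact hinj2)
  have hφ : ∀ a : R, φ (algebraMap R _ a) = algebraMap S _ (algebraMap R S a) := by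
    intro a
    rw [φ.commutes, ← IsScalarTower.algebraMap_apply]
  set x : FractionRing R := algebraMap R _ r / algebraMap R _ s with hx
  have hφx : φ x = algebraMap S _ z := by
    rw [hx, map_div₀, hφ, hφ, ← h, map_mul, mul_div_cancel_left₀]
    intro h0
    exact hs (hinj (by rw [map_zero]; exact hinj' (by rw [map_zero]; exact h0)))
  have hxi : IsIntegral R x := by
    rw [← isIntegral_algHom_iff φ φ.toRingHom.injective, hφx]
    exact IsIntegral.algebraMap ⟨p, hpm, hp⟩
  obtain ⟨r', hr'⟩ := IsIntegrallyClosed.isIntegral_iff.1 hxi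
  refine ⟨r', hinj' ?_⟩
  rw [← hφ, hr', hφx]

lemma integral_of_eq {R S : Type*} [CommRing R] [CommRing S] [Algebra R S]
    (z : S) (m : ℕ) (d : ℕ → R)
    (h : z ^ m + ∑ i ∈ Finset.Icc 1 m, algebraMap R S (d i) * z ^ (m - i) = 0) :
    IsIntegral R z := by
  nontriviality R
  refine ⟨X ^ m + ∑ i ∈ Finset.Icc 1 m, C (d i) * X ^ (m - i), ?_, ?_⟩
  · rcases Nat.eq_zero_or_pos m with rfl | hm
    · simp
    · apply monic_X_pow_add
      refine lt_of_le_of_lt (Polynomial.degree_sum_le _ _) ?_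
      rw [Finset.sup_lt_iff (by exact_mod_cast WithBot.bot_lt_coe m)]
      intro i hi
      rw [Finset.mem_Icc] at hi
      refine lt_of_le_of_lt (degree_C_mul_X_pow_le _ _) ?_
      exact_mod_cast (by omega : m - i < m)
  · simp [eval₂_finset_sum]
    exact h

lemma rees_pow_closed {A : Type*} [CommRing A] [IsDomain A] (K : Ideal A) (hK : K ≠ ⊥)
    (h : IsIntegrallyClosed (reesAlgebra K)) (n : ℕ) : IdealIsIntegrallyClosed (K ^ n) := by
  obtain ⟨f, hfK, hf⟩ := Submodule.exists_mem_ne_zero_of_ne_bot hK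
  rintro y ⟨m, hm, c, hc, heq⟩
  set z : A[X] := monomial n y with hz
  let d : ℕ → reesAlgebra K := fun i => if hi : 1 ≤ i ∧ i ≤ m then
    ⟨monomial (n * i) (c i), reesAlgebra.monomial_mem.2 (by
      rw [pow_mul]; exact hc i hi.1 hi.2)⟩ else 0
  have hzi : IsIntegral (reesAlgebra K) z := by
    refine integral_of_eq z m d ?_
    have : ∀ i ∈ Finset.Icc 1 m, algebraMap (reesAlgebra K) A[X] (d i) * z ^ (m - i) =
        monomial (n * m) (c i * y ^ (m - i)) := by
      intro i hi
      rw [Finset.mem_Icc] at hi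
      simp only [d, dif_pos hi]
      change monomial (n * i) (c i) * z ^ (m - i) = _
      rw [hz, monomial_pow, monomial_mul_monomial, ← mul_add]
      congr 3
      omega
    rw [Finset.sum_congr rfl this, hz, monomial_pow, ← map_sum, ← map_add, heq, map_zero]
  obtain ⟨r', hr'⟩ := int_closed_use (R := reesAlgebra K) (S := A[X]) Subtype.val_injective z hzi
    (algebraMap A _ (f ^ n)) ⟨monomial n (f ^ n * y), reesAlgebra.monomial_mem.2
      (Ideal.mul_mem_right _ _ (Ideal.pow_mem_pow hfK n))⟩ (by
        intro h0
        have := congrArg Subtype.val h0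
        change C (f ^ n) = 0 at this
        rw [C_eq_zero] at this
        exact pow_ne_zero n hf this) (by
        change C (f ^ n) * z = monomial n (f ^ n * y)
        rw [hz, C_mul_monomial])
  rw [← reesAlgebra.monomial_mem (I := K), ← hz, ← hr']
  exact r'.2

lemma int_monomial {A : Type*} [CommRing A] [Nontrivial A] (I : Ideal A) (N : ℕ) (u : A)
    (h : IsIntegral (reesAlgebra I) (monomial N u : A[X])) : IsIntegralOverIdeal (I ^ N) u := by
  obtain ⟨p, hpm, hp⟩ := h
  set m := p.natDegree with hm
  have hcoef : ∀ i ≤ m, (algebraMap (reesAlgebra I) A[X] (p.coeff i) * (monomial N u) ^ i).coeff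
      (N * m) = (p.coeff i).1.coeff (N * (m - i)) * u ^ i := by
    intro i hi
    rw [monomial_pow]
    have : N * m = N * (m - i) + N * i := by rw [← mul_add]; congr 1; omega
    rw [this, coeff_mul_monomial]
    rfl
  have hsum := congrArg (fun q : A[X] => q.coeff (N * m)) hp
  simp only [eval₂_eq_sum_range, finset_sum_coeff, coeff_zero] at hsum
  rw [← hm, Finset.sum_congr rfl (fun i hi => hcoef i (by
    have := Finset.mem_range.1 hi; omega)), Finset.sum_range_succ] at hsum
  have hlead : p.coeff m = 1 := hpm.coeff_natDegree
  rw [hlead] at hsum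
  have e1 : ((1 : reesAlgebra I) : A[X]) = 1 := rfl
  simp only [e1, Nat.sub_self, mul_zero, coeff_one_zero, one_mul] at hsum
  refine ⟨m, ?_, fun i => (p.coeff (m - i)).1.coeff (N * i), ?_, ?_⟩
  · rcases Nat.eq_zero_or_pos m with h0 | h0
    · rw [h0] at hsum
      simp at hsum
    · exact h0
  · intro i _ _
    rw [← pow_mul]
    exact (p.coeff (m - i)).2 (N * i)
  · rw [add_comm, ← hsum]
    congr 1
    refine Finset.sum_nbij' (fun i => m - i) (fun i => m - i) ?_ ?_ ?_ ?_ ?_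
    · intro i hi; simp at hi ⊢; omega
    · intro i hi; simp at hi ⊢; omega
    · intro i hi; simp at hi ⊢; omega
    · intro i hi; simp at hi ⊢; omega
    · intro i hi
      simp at hi
      have : m - (m - i) = i := by omega
      rw [this]

lemma rees_intClosed {A : Type*} [CommRing A] [IsDomain A] [IsNoetherianRing A]
    [IsIntegrallyClosed A] (I : Ideal A) (hI : I ≠ ⊥) (h : ∀ n, IdealIsIntegrallyClosed (I ^ n)) :
    IsIntegrallyClosed (reesAlgebra I) := by
  obtain ⟨f, hfI, hf⟩ := Submodule.exists_mem_ne_zero_of_ne_bot hI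
  have key : ∀ (d : ℕ) (z : A[X]), z.natDegree < d → IsIntegral (reesAlgebra I) z →
      z ∈ reesAlgebra I := by
    intro d
    induction d with
    | zero => intro z hz; omega
    | succ d ih =>
      intro z hzd hz
      set N := z.natDegree with hN
      -- almost integral
      have hal : IsAlmostIntegral (reesAlgebra I) z := by
        refine hz.isAlmostIntegral_of_exists_smul_mem_range
          ⟨algebraMap A _ (f ^ N), mem_nonZeroDivisors_of_ne_zero ?_, ?_⟩
        · intro h0
          have := congrArg Subtype.val h0
          change C (f ^ N) = 0 at this
          rw [C_eq_zero] at this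
          exact pow_ne_zero N hf this
        · refine ⟨⟨C (f ^ N) * z, ?_⟩, rfl⟩
          intro i
          rw [coeff_C_mul]
          rcases le_or_gt i N with hi | hi
          · exact Ideal.mul_mem_right _ _ (Ideal.pow_le_pow_right hi (Ideal.pow_mem_pow hfI N))
          · rw [coeff_eq_zero_of_natDegree_lt hi, mul_zero]; exact zero_mem _
      obtain ⟨r, hr, hrz⟩ := hal
      have hal2 : IsAlmostIntegral (reesAlgebra I) (monomial N z.leadingCoeff : A[X]) := by
        have hr0 : r.1 ≠ 0 := fun h0 => nonZeroDivisors.ne_zero hr (Subtype.ext h0)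
        refine ⟨⟨monomial r.1.natDegree r.1.leadingCoeff, reesAlgebra.monomial_mem.2 (r.2 _)⟩,
          mem_nonZeroDivisors_of_ne_zero ?_, ?_⟩
        · intro h0
          have := congrArg Subtype.val h0
          change monomial _ _ = 0 at this
          rw [monomial_eq_zero_iff, leadingCoeff_eq_zero] at this
          exact hr0 this
        · intro n
          obtain ⟨q, hq⟩ := hrz n
          have hq' : q.1 = r.1 * z ^ n := hq
          refine ⟨⟨monomial (r.1.natDegree + N * n) (r.1.leadingCoeff * z.leadingCoeff ^ n),
            reesAlgebra.monomial_mem.2 ?_⟩, ?_⟩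
          · have := q.2 (r.1.natDegree + N * n)
            rw [hq'] at this
            by_cases hz0 : z = 0
            · have hN0 : N = 0 := by rw [hN, hz0]; simp
              rw [hN0] at this ⊢
              rw [hz0] at this ⊢
              rcases Nat.eq_zero_or_pos n with rfl | hn
              · simpa using this
              · rw [leadingCoeff_zero, zero_pow hn.ne', mul_zero]
                exact zero_mem _
            · rw [← leadingCoeff_pow, ← leadingCoeff_mul]
              have hdeg : (r.1 * z ^ n).natDegree = r.1.natDegree + N * n := by
                rw [natDegree_mul hr0 (pow_ne_zero _ hz0), natDegree_pow, mul_comm]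
              rw [leadingCoeff, hdeg]
              exact this
          · change monomial _ _ = monomial _ _ * monomial _ _ ^ n
            rw [monomial_pow, monomial_mul_monomial]
      have hmon := int_monomial I N _ hal2.isIntegral
      have hlc := reesAlgebra.monomial_mem.2 (h N _ hmon)
      by_cases hN0 : N = 0
      · have hzc : z = monomial 0 z.leadingCoeff := by
          rw [leadingCoeff, ← hN, hN0, monomial_zero_left]
          exact eq_C_of_natDegree_eq_zero (hN ▸ hN0)
        rw [hN0] at hlc
        rw [hzc]; exact hlc
      · have hel : z.eraseLead ∈ reesAlgebra I := by
          apply ih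
          · have := z.eraseLead_natDegree_le
            omega
          · have e : z.eraseLead = z - monomial N z.leadingCoeff := by
              rw [eq_sub_iff_add_eq]; exact eraseLead_add_monomial_natDegree_leadingCoeff z
            rw [e]
            exact hz.sub (isIntegral_algebraMap (R := reesAlgebra I) (A := A[X])
              (x := ⟨_, hlc⟩))
        rw [← eraseLead_add_monomial_natDegree_leadingCoeff z]
        exact add_mem hel hlc
  have : IsIntegrallyClosedIn (reesAlgebra I) A[X] := by
    rw [isIntegrallyClosedIn_iff]
    refine ⟨Subtype.val_injective, fun {x} hx => ⟨⟨x, key _ x (Nat.lt_succ_self _) hx⟩, rfl⟩⟩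
  exact IsIntegrallyClosed.of_isIntegrallyClosed_of_isIntegrallyClosedIn (reesAlgebra I) A[X]


lemma exists_M1 {A : Type*} [CommRing A] [IsDomain A] (L : Ideal A) (hL : L ≠ ⊥) (x : A)
    (hx : IsIntegralOverIdeal L x) :
    ∃ M : Ideal A, M ≠ ⊥ ∧ ∀ y ∈ M, x * y ∈ L * M := by
  obtain ⟨m, hm, c, hc, heq⟩ := hx
  set M : Ideal A := ⨆ i ∈ Finset.range m, L ^ i * Ideal.span {x ^ (m - 1 - i)} with hM
  have hle : ∀ i < m, L ^ i * Ideal.span {x ^ (m - 1 - i)} ≤ M := fun i hi =>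
    le_iSup₂_of_le i (Finset.mem_range.2 hi) le_rfl
  refine ⟨M, ?_, ?_⟩
  · have h1 := hle (m - 1) (by omega)
    rw [Nat.sub_self, pow_zero, Ideal.span_singleton_one, Ideal.mul_top] at h1
    intro h0
    rw [h0, le_bot_iff] at h1
    exact pow_ne_zero _ hL h1
  · have hmul : ∀ i, 1 ≤ i → i ≤ m → L ^ i * Ideal.span {x ^ (m - i)} ≤ L * M := by
      intro i h1 h2
      obtain ⟨j, rfl⟩ : ∃ j, i = j + 1 := ⟨i - 1, by omega⟩
      rw [pow_succ', mul_assoc]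
      refine Ideal.mul_mono_right ?_
      have := hle j (by omega)
      rwa [show m - 1 - j = m - (j + 1) by omega] at this
    have hxm : x ^ m ∈ L * M := by
      have : x ^ m = - ∑ i ∈ Finset.Icc 1 m, c i * x ^ (m - i) := by
        rw [eq_neg_iff_add_eq_zero]; exact heq
      rw [this]
      refine neg_mem (Ideal.sum_mem _ fun i hi => ?_)
      rw [Finset.mem_Icc] at hi
      exact hmul i hi.1 hi.2 (Ideal.mul_mem_mul (hc i hi.1 hi.2) (Ideal.mem_span_singleton_self _))
    have : Ideal.span {x} * M ≤ L * M := by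
      rw [hM, Ideal.mul_iSup]
      refine iSup_le fun i => ?_
      rw [Ideal.mul_iSup]
      refine iSup_le fun hi => ?_
      rw [Finset.mem_range] at hi
      rw [mul_left_comm, Ideal.span_singleton_mul_span_singleton, ← pow_succ', ← hM]
      rcases Nat.eq_zero_or_pos i with rfl | h0
      · rw [pow_zero, one_mul, Ideal.span_singleton_le_iff_mem]
        rw [show m - 1 - 0 + 1 = m by omega]
        exact hxm
      · have := hmul i h0 hi.le
        rwa [show m - 1 - i + 1 = m - i by omega]
    intro y hy
    exact this (Ideal.mul_mem_mul (Ideal.mem_span_singleton_self _) hy)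

lemma step_lemma {A : Type*} [CommRing A] [IsDomain A] [IsNoetherianRing A] [IsIntegrallyClosed A]
    (I J : Ideal A) (hI : I ≠ ⊥) (hJ : J ≠ ⊥) (a b c d : A) (ha : a ∈ I) (hb : b ∈ I)
    (hc : c ∈ J) (hd : d ∈ J) (hc0 : c ≠ 0) (hd0 : d ≠ 0)
    (hcl : ∀ n, IdealIsIntegrallyClosed ((I * J) ^ n)) (k : ℕ)
    (hred : ∀ y ∈ (I * J) ^ (k + 2), ∃ α ∈ I * J, ∃ β ∈ (I * J) ^ (k + 1),
      y = (a * c) ^ (k + 1) * α + b * d * β)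
    (hIk : IdealIsIntegrallyClosed (I ^ (k + 1)))
    (x : A) (hx : IsIntegralOverIdeal (I ^ (k + 2)) x) :
    ∃ u ∈ I ^ (k + 1), ∃ v ∈ I ^ (k + 1), x = a * u + b * v := by
  obtain ⟨M1, hM1, hxM1⟩ := exists_M1 (I ^ (k + 2)) (pow_ne_zero _ hI) x hx
  set K := I * J with hK
  have hK0 : K ≠ ⊥ := mul_ne_zero hI hJ
  have hxe : x * (c ^ (k + 1) * d) ∈ K ^ (k + 2) := by
    apply hcl
    obtain ⟨m, hm, e, he, heq⟩ := hx
    set w := c ^ (k + 1) * d with hw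
    have hwJ : w ∈ J ^ (k + 2) := by
      rw [hw, pow_succ J (k + 1)]
      exact Ideal.mul_mem_mul (Ideal.pow_mem_pow hc _) hd
    refine ⟨m, hm, fun i => e i * w ^ i, ?_, ?_⟩
    · intro i h1 h2
      rw [hK, mul_pow, mul_pow]
      exact Ideal.mul_mem_mul (he i h1 h2) (Ideal.pow_mem_pow hwJ i)
    · have : ∀ i ∈ Finset.Icc 1 m, e i * w ^ i * (x * w) ^ (m - i) =
          w ^ m * (e i * x ^ (m - i)) := by
        intro i hi
        rw [Finset.mem_Icc] at hi
        have : w ^ m = w ^ i * w ^ (m - i) := by rw [← pow_add]; congr 1; omega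
        rw [this, mul_pow]; ring
      rw [Finset.sum_congr rfl this, ← Finset.mul_sum, mul_pow, mul_comm (x ^ m), ← mul_add, heq,
        mul_zero]
  obtain ⟨α, hα, β, hβ, hαβ⟩ := hred _ hxe
  set M := K ^ (k + 2) * M1 with hM
  have hM0 : M ≠ ⊥ := mul_ne_zero (pow_ne_zero _ hK0) hM1
  have hMdec : ∀ y ∈ M, ∃ y1 ∈ K * M1, ∃ y2 ∈ K ^ (k + 1) * M1,
      y = (a * c) ^ (k + 1) * y1 + b * d * y2 := by
    intro y hy
    have : M ≤ Ideal.span {(a * c) ^ (k + 1)} * (K * M1) ⊔ Ideal.span {b * d} *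
        (K ^ (k + 1) * M1) := by
      rw [hM, ← mul_assoc _ K M1, ← mul_assoc _ (K ^ (k + 1)) M1, ← Ideal.sup_mul]
      refine Ideal.mul_mono_left ?_
      intro z hz
      obtain ⟨α, hα, β, hβ, rfl⟩ := hred z hz
      exact Submodule.add_mem_sup (Ideal.mul_mem_mul (Ideal.mem_span_singleton_self _) hα)
        (Ideal.mul_mem_mul (Ideal.mem_span_singleton_self _) hβ)
    obtain ⟨z1, hz1, z2, hz2, rfl⟩ := Submodule.mem_sup.1 (this hy)
    obtain ⟨y1, hy1, rfl⟩ := Ideal.mem_span_singleton_mul.1 hz1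
    obtain ⟨y2, hy2, rfl⟩ := Ideal.mem_span_singleton_mul.1 hz2
    exact ⟨y1, hy1, y2, hy2, rfl⟩
  have hxN : ∀ (N : Ideal A) y, y ∈ N * M1 → x * y ∈ N * (I ^ (k + 2) * M1) := by
    intro N y hy
    have : Ideal.span {x} * M1 ≤ I ^ (k + 2) * M1 := by
      intro z hz
      obtain ⟨w, hw, rfl⟩ := Ideal.mem_span_singleton_mul.1 hz
      exact hxM1 w hw
    have h2 : N * (Ideal.span {x} * M1) ≤ N * (I ^ (k + 2) * M1) := Ideal.mul_mono_right this
    apply h2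
    rw [mul_left_comm]
    exact Ideal.mul_mem_mul (Ideal.mem_span_singleton_self _) hy
  obtain ⟨u, hu, hu2⟩ := dt_lemma (I ^ (k + 1)) M hM0 hIk (a ^ k * α) d hd0 (by
    intro m hm
    obtain ⟨y1, hy1, y2, hy2, rfl⟩ := hMdec m hm
    refine ⟨a ^ k * c ^ (k + 1) * (x * y1) + (-(a ^ k * b * β * y1) + b * a ^ k * α * y2), ?_, ?_⟩
    · refine add_mem ?_ (add_mem (neg_mem ?_) ?_)
      · have h1 := Ideal.mul_mem_mul (Ideal.mul_mem_mul (Ideal.pow_mem_pow ha k)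
          (Ideal.pow_mem_pow hc (k + 1))) (hxN _ _ hy1)
        convert! h1 using 1
        rw [hM, hK]; ring
      · have h1 := Ideal.mul_mem_mul (Ideal.mul_mem_mul (Ideal.mul_mem_mul (Ideal.pow_mem_pow ha k)
          hb) hβ) hy1
        convert! h1 using 1
        rw [hM]; ring
      · have h1 := Ideal.mul_mem_mul (Ideal.mul_mem_mul (Ideal.mul_mem_mul hb
          (Ideal.pow_mem_pow ha k)) hα) hy2
        convert! h1 using 1
        rw [hM]; ring
    · linear_combination (-(a ^ k * y1)) * hαβ)
  obtain ⟨v, hv, hv2⟩ := dt_lemma (I ^ (k + 1)) M hM0 hIk β (c ^ (k + 1)) (pow_ne_zero _ hc0) (by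
    intro m hm
    obtain ⟨y1, hy1, y2, hy2, rfl⟩ := hMdec m hm
    refine ⟨a ^ (k + 1) * β * y1 + (d * (x * y2) + -(a ^ (k + 1) * α * y2)), ?_, ?_⟩
    · refine add_mem ?_ (add_mem ?_ (neg_mem ?_))
      · have h1 := Ideal.mul_mem_mul (Ideal.mul_mem_mul (Ideal.pow_mem_pow ha (k + 1))
          hβ) hy1
        convert! h1 using 1
        rw [hM]; ring
      · have h1 := Ideal.mul_mem_mul hd (hxN _ _ hy2)
        convert! h1 using 1
        rw [hM, hK]; ring
      · have h1 := Ideal.mul_mem_mul (Ideal.mul_mem_mul (Ideal.pow_mem_pow ha (k + 1)) hα) hy2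
        convert! h1 using 1
        rw [hM]; ring
    · linear_combination (-y2) * hαβ)
  refine ⟨u, hu, v, hv, ?_⟩
  have hne : c ^ (k + 1) * d ≠ 0 := mul_ne_zero (pow_ne_zero _ hc0) hd0
  apply mul_right_cancel₀ hne
  rw [hαβ, hv2]
  linear_combination (a * c ^ (k + 1)) * hu2


section graded
variable {A : Type*} [CommRing A] (K : Ideal A)

/-- the degree one element `g t`. -/
noncomputable def mon (i : ℕ) (g : A) (hg : g ∈ K ^ i) : reesAlgebra K :=
  ⟨monomial i g, reesAlgebra.monomial_mem.2 hg⟩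

/-- homogeneous component. -/
noncomputable def hcomp (i : ℕ) (f : reesAlgebra K) : reesAlgebra K :=
  mon K i (f.1.coeff i) (f.2 i)

lemma hcomp_add (i : ℕ) (f g : reesAlgebra K) : hcomp K i (f + g) = hcomp K i f + hcomp K i g := by
  apply Subtype.ext
  simp [hcomp, mon]

lemma hcomp_zero (i : ℕ) : hcomp K i 0 = 0 := by
  apply Subtype.ext
  simp [hcomp, mon]

lemma hcomp_mul (n : ℕ) (f g : reesAlgebra K) : hcomp K n (f * g) =
    ∑ x ∈ Finset.HasAntidiagonal.antidiagonal n, hcomp K x.1 f * hcomp K x.2 g := by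
  apply Subtype.ext
  have e : ((∑ x ∈ Finset.HasAntidiagonal.antidiagonal n, hcomp K x.1 f * hcomp K x.2 g : reesAlgebra K) : A[X]) =
      ∑ x ∈ Finset.HasAntidiagonal.antidiagonal n, (hcomp K x.1 f).1 * (hcomp K x.2 g).1 := by
    push_cast; rfl
  rw [e]
  have h2 : ∀ x ∈ Finset.HasAntidiagonal.antidiagonal n, (hcomp K x.1 f).1 * (hcomp K x.2 g).1 =
      monomial n (f.1.coeff x.1 * g.1.coeff x.2) := by
    intro x hx
    rw [Finset.HasAntidiagonal.mem_antidiagonal] at hx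
    change monomial _ _ * monomial _ _ = _
    rw [monomial_mul_monomial, hx]
  rw [Finset.sum_congr rfl h2, ← map_sum]
  change monomial n ((f.1 * g.1).coeff n) = _
  rw [coeff_mul]

lemma hcomp_of_lt (n : ℕ) (f : reesAlgebra K) (h : f.1.natDegree < n) : hcomp K n f = 0 := by
  apply Subtype.ext
  change monomial n (f.1.coeff n) = 0
  rw [coeff_eq_zero_of_natDegree_lt h, monomial_zero_right]

lemma sum_hcomp (f : reesAlgebra K) : f = ∑ i ∈ Finset.range (f.1.natDegree + 1), hcomp K i f := by
  apply Subtype.ext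
  conv_lhs => rw [f.1.as_sum_range]
  push_cast
  rfl

/-- the largest homogeneous ideal inside `P`. -/
noncomputable def pstar (P : Ideal (reesAlgebra K)) : Ideal (reesAlgebra K) where
  carrier := {f | ∀ i, hcomp K i f ∈ P}
  add_mem' := by
    intro f g hf hg i
    rw [hcomp_add]; exact P.add_mem (hf i) (hg i)
  zero_mem' := by
    intro i; rw [hcomp_zero]; exact P.zero_mem
  smul_mem' := by
    intro c f hf i
    rw [smul_eq_mul, hcomp_mul]
    exact Ideal.sum_mem _ fun x _ => P.mul_mem_left _ (hf _)

lemma pstar_le (P : Ideal (reesAlgebra K)) : pstar K P ≤ P := by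
  intro f hf
  rw [sum_hcomp K f]
  exact Ideal.sum_mem _ fun i _ => hf i

lemma exists_max (P : Ideal (reesAlgebra K)) (f : reesAlgebra K) (hf : f ∉ pstar K P) :
    ∃ i, hcomp K i f ∉ P ∧ ∀ j, i < j → hcomp K j f ∈ P := by
  classical
  have hf' : ∃ i, hcomp K i f ∉ P := by
    by_contra h
    push Not at h
    exact hf h
  set d := f.1.natDegree
  obtain ⟨i0, hi0⟩ := hf'
  have hle : i0 ≤ d := by
    by_contra h
    exact hi0 (by rw [hcomp_of_lt K i0 f (by omega)]; exact P.zero_mem)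
  refine ⟨Nat.findGreatest (fun i => hcomp K i f ∉ P) d,
    Nat.findGreatest_spec (P := fun i => hcomp K i f ∉ P) hle hi0, ?_⟩
  intro j hj
  rcases le_or_gt j d with h | h
  · have := Nat.findGreatest_is_greatest hj h
    push Not at this
    exact this
  · rw [hcomp_of_lt K j f h]; exact P.zero_mem

lemma pstar_prime (P : Ideal (reesAlgebra K)) [hP : P.IsPrime] : (pstar K P).IsPrime := by
  classical
  refine ⟨fun h => hP.ne_top (top_le_iff.1 (h ▸ pstar_le K P)), ?_⟩
  intro f g hfg
  by_contra hcon
  push Not at hcon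
  obtain ⟨i, hi, hi'⟩ := exists_max K P f hcon.1
  obtain ⟨j, hj, hj'⟩ := exists_max K P g hcon.2
  have h1 := hfg (i + j)
  rw [hcomp_mul, ← Finset.add_sum_erase _ _ (Finset.HasAntidiagonal.mem_antidiagonal.2 (rfl : (i, j).1 + (i, j).2
    = i + j))] at h1
  have h2 : ∑ x ∈ (Finset.HasAntidiagonal.antidiagonal (i + j)).erase (i, j), hcomp K x.1 f * hcomp K x.2 g
      ∈ P := by
    refine Ideal.sum_mem _ fun x hx => ?_
    rw [Finset.mem_erase, Finset.HasAntidiagonal.mem_antidiagonal] at hx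
    rcases lt_trichotomy i x.1 with h | h | h
    · exact P.mul_mem_right _ (hi' _ h)
    · exact absurd (Prod.ext h.symm (by simp; omega)) hx.1
    · exact P.mul_mem_left _ (hj' _ (by omega))
  have h3 := (P.add_mem_iff_left h2).1 h1
  rcases hP.mem_or_mem h3 with h | h
  · exact hi h
  · exact hj h

/-- evaluation of the constant coefficient. -/
noncomputable def ev0 : reesAlgebra K →+* A :=
  (Polynomial.constantCoeff).comp ((reesAlgebra K).val : reesAlgebra K →+* A[X])

lemma ev0_apply (f : reesAlgebra K) : ev0 K f = f.1.coeff 0 := rfl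

/-- reduction modulo `p`. -/
noncomputable def redmod (p : Ideal A) : reesAlgebra K →+* (A ⧸ p)[X] :=
  (Polynomial.mapRingHom (Ideal.Quotient.mk p)).comp ((reesAlgebra K).val : reesAlgebra K →+* A[X])

lemma mem_ker_redmod (p : Ideal A) (f : reesAlgebra K) :
    f ∈ RingHom.ker (redmod K p) ↔ ∀ i, f.1.coeff i ∈ p := by
  rw [RingHom.mem_ker]
  change f.1.map (Ideal.Quotient.mk p) = 0 ↔ _
  rw [Polynomial.ext_iff]
  simp [Polynomial.coeff_map, Ideal.Quotient.eq_zero_iff_mem]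

/-- graded ideals. -/
noncomputable def gIdeal (E : ℕ → Ideal A) (hE : ∀ i j, E i * K ^ j ≤ E (i + j)) :
    Ideal (reesAlgebra K) where
  carrier := {f | ∀ n, f.1.coeff n ∈ E n}
  add_mem' := by
    intro f g hf hg n
    change (f.1 + g.1).coeff n ∈ _
    rw [coeff_add]; exact (E n).add_mem (hf n) (hg n)
  zero_mem' := by
    intro n; change (0 : A[X]).coeff n ∈ _; simp
  smul_mem' := by
    intro c f hf n
    change (c.1 * f.1).coeff n ∈ _
    rw [coeff_mul]
    refine Ideal.sum_mem _ fun x hx => ?_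
    rw [Finset.HasAntidiagonal.mem_antidiagonal, add_comm] at hx
    rw [← hx, mul_comm]
    exact hE _ _ (Ideal.mul_mem_mul (hf _) (c.2 _))

lemma mem_gIdeal (E : ℕ → Ideal A) (hE) (f : reesAlgebra K) :
    f ∈ gIdeal K E hE ↔ ∀ n, f.1.coeff n ∈ E n := Iff.rfl

lemma mon_mem_pow (n : ℕ) (y : A) (hy : y ∈ K ^ n) :
    mon K n y hy ∈ (Ideal.span {z | ∃ g, ∃ hg : g ∈ K ^ 1, z = mon K 1 g hg}) ^ n := by
  set N := Ideal.span {z | ∃ g, ∃ hg : g ∈ K ^ 1, z = mon K 1 g hg} with hN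
  induction n generalizing y with
  | zero => rw [pow_zero, Ideal.one_eq_top]; trivial
  | succ n ih =>
    have key : ∀ y ∈ K ^ n * K, ∃ hy : y ∈ K ^ (n + 1), mon K (n + 1) y hy ∈ N ^ (n + 1) := by
      intro y hy
      induction hy using Submodule.mul_induction_on' with
      | mem_mul_mem a ha b hb =>
        refine ⟨by rw [pow_succ]; exact Ideal.mul_mem_mul ha hb, ?_⟩
        have : mon K (n + 1) (a * b) (by rw [pow_succ]; exact Ideal.mul_mem_mul ha hb) =
            mon K n a ha * mon K 1 b (by simpa using hb) := by
          apply Subtype.ext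
          change monomial _ _ = monomial _ _ * monomial _ _
          rw [monomial_mul_monomial]
        rw [this, pow_succ]
        exact Ideal.mul_mem_mul (ih a ha) (Ideal.subset_span ⟨b, _, rfl⟩)
      | add x hx y hy h1 h2 =>
        obtain ⟨a1, a2⟩ := h1
        obtain ⟨b1, b2⟩ := h2
        refine ⟨add_mem a1 b1, ?_⟩
        have : mon K (n + 1) (x + y) (add_mem a1 b1) = mon K (n + 1) x a1 + mon K (n + 1) y b1 := by
          apply Subtype.ext
          change monomial _ _ = monomial _ _ + monomial _ _
          rw [map_add]
        rw [this]
        exact add_mem a2 b2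
    obtain ⟨h1, h2⟩ := key y (by rwa [← pow_succ])
    exact h2

end graded

/-- a prime strictly between -/
lemma exists_p {A : Type*} [CommRing A] [IsDomain A] [IsNoetherianRing A] [IsLocalRing A]
    (hdim : ringKrullDim A = 2) : ∃ p : Ideal A, p.IsPrime ∧ p ≠ ⊥ ∧
      p < IsLocalRing.maximalIdeal A := by
  have hm : (IsLocalRing.maximalIdeal A).height = 2 := by
    have := IsLocalRing.maximalIdeal_height_eq_ringKrullDim (R := A)
    rw [hdim] at this
    have h2 : (((IsLocalRing.maximalIdeal A).height : ℕ∞) : WithBot ℕ∞) =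
      ((2 : ℕ∞) : WithBot ℕ∞) := this
    exact WithBot.coe_inj.1 h2
  have hmb : IsLocalRing.maximalIdeal A ≠ ⊥ := by
    intro h; rw [h] at hm; simp at hm
  obtain ⟨x, hx, hx0⟩ := Submodule.exists_mem_ne_zero_of_ne_bot hmb
  obtain ⟨p, hp, hpm⟩ := Ideal.exists_minimalPrimes_le (I := Ideal.span {x})
    (J := IsLocalRing.maximalIdeal A) ((Ideal.span_singleton_le_iff_mem _).2 hx)
  have h1 := Ideal.height_le_one_of_isPrincipal_of_mem_minimalPrimes _ p hp
  refine ⟨p, hp.1.1, ?_, lt_of_le_of_ne hpm ?_⟩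
  · rintro rfl
    have := hp.1.2 (Ideal.mem_span_singleton_self x)
    exact hx0 (by simpa using this)
  · rintro rfl
    rw [hm] at h1
    exact absurd h1 (by norm_num)

lemma height_M {A : Type*} [CommRing A] [IsDomain A] [IsNoetherianRing A] [IsLocalRing A]
    (hdim : ringKrullDim A = 2) (K : Ideal A) (n : ℕ) (hK : IsLocalRing.maximalIdeal A ^ n ≤ K) :
    3 ≤ ((IsLocalRing.maximalIdeal A).comap (ev0 K)).height := by
  obtain ⟨p, hp, hpb, hpm⟩ := exists_p hdim
  set m := IsLocalRing.maximalIdeal A with hm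
  have i1 : (RingHom.ker (redmod K p)).IsPrime := RingHom.ker_isPrime _
  have i2 : (p.comap (ev0 K)).IsPrime := Ideal.IsPrime.comap _
  have i3 : (m.comap (ev0 K)).IsPrime := Ideal.IsPrime.comap _
  have h1 : (⊥ : Ideal (reesAlgebra K)) < RingHom.ker (redmod K p) := by
    rw [bot_lt_iff_ne_bot]
    obtain ⟨x, hx, hx0⟩ := Submodule.exists_mem_ne_zero_of_ne_bot hpb
    intro h
    have : algebraMap A (reesAlgebra K) x ∈ RingHom.ker (redmod K p) := by
      rw [mem_ker_redmod]
      intro i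
      change (C x).coeff i ∈ p
      rw [coeff_C]; split_ifs
      · exact hx
      · exact zero_mem _
    rw [h, Ideal.mem_bot] at this
    have := congrArg (ev0 K) this
    rw [ev0_apply] at this
    change (C x).coeff 0 = _ at this
    simp [hx0] at this
  have h2 : RingHom.ker (redmod K p) < p.comap (ev0 K) := by
    refine lt_of_le_of_ne (fun f hf => ((mem_ker_redmod K p f).1 hf) 0) ?_
    intro h
    apply hpm.not_ge
    have : m ^ n ≤ p := by
      refine hK.trans fun g hg => ?_
      have h3 : mon K 1 g (by simpa using hg) ∈ p.comap (ev0 K) := by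
        rw [Ideal.mem_comap, ev0_apply]
        change (monomial 1 g).coeff 0 ∈ p
        rw [coeff_monomial]; simp
      rw [← h, mem_ker_redmod] at h3
      have := h3 1
      change (monomial 1 g).coeff 1 ∈ p at this
      simpa using this
    exact Ideal.IsPrime.le_of_pow_le this
  have h3 : p.comap (ev0 K) < m.comap (ev0 K) := by
    refine lt_of_le_of_ne (Ideal.comap_mono hpm.le) ?_
    intro h
    apply hpm.not_ge
    intro x hx
    have : algebraMap A (reesAlgebra K) x ∈ m.comap (ev0 K) := by
      rw [Ideal.mem_comap, ev0_apply]
      change (C x).coeff 0 ∈ m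
      simpa using hx
    rw [← h, Ideal.mem_comap, ev0_apply] at this
    change (C x).coeff 0 ∈ p at this
    simpa using this
  have := Ideal.height_add_one_le_of_lt_of_isPrime h1
  have := Ideal.height_add_one_le_of_lt_of_isPrime h2
  have := Ideal.height_add_one_le_of_lt_of_isPrime h3
  calc (3 : ℕ∞) = 0 + 1 + 1 + 1 := by norm_num
    _ ≤ (⊥ : Ideal (reesAlgebra K)).height + 1 + 1 + 1 := by gcongr; exact zero_le
    _ ≤ (RingHom.ker (redmod K p)).height + 1 + 1 := by gcongr
    _ ≤ (p.comap (ev0 K)).height + 1 := by gcongr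
    _ ≤ _ := by assumption


lemma avoid1 (k : Type*) [Field k] [Infinite k] {A : Type*} [CommRing A] [Algebra k A]
    (I : Ideal A) (S : Set (Ideal A)) (hS : S.Finite) (h : ∀ D ∈ S, ¬ I ≤ D) :
    ∃ a ∈ I, ∀ D ∈ S, a ∉ D := by
  by_contra hcon
  push Not at hcon
  have : Finite S := hS
  obtain ⟨⟨D, hD⟩, hD'⟩ := Subspace.exists_eq_top_of_iUnion_eq_univ (k := k)
    (E := I.restrictScalars k) (ι := S)
    (p := fun D => (D.1.restrictScalars k).comap (I.restrictScalars k).subtype) (by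
      rw [Set.eq_univ_iff_forall]
      rintro ⟨a, ha⟩
      obtain ⟨D, hD, haD⟩ := hcon a ha
      exact Set.mem_iUnion.2 ⟨⟨D, hD⟩, haD⟩)
  apply h D hD
  intro a ha
  have : (⟨a, ha⟩ : I.restrictScalars k) ∈
    (D.restrictScalars k).comap (I.restrictScalars k).subtype := by
    have e : (D.restrictScalars k).comap (I.restrictScalars k).subtype = ⊤ := hD'
    rw [e]; trivial
  exact this

lemma avoid2 (k : Type*) [Field k] [Infinite k] {A : Type*} [CommRing A] [Algebra k A]
    (I J : Ideal A) (S : Set (Ideal A)) (hS : S.Finite) (h : ∀ D ∈ S, ¬ I * J ≤ D) :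
    ∃ a ∈ I, ∃ c ∈ J, ∀ D ∈ S, a * c ∉ D := by
  obtain ⟨a, ha, ha'⟩ := avoid1 k I ((fun D : Ideal A => ⨅ c ∈ J, Submodule.comap (LinearMap.mulRight A c) D)
    '' S) (hS.image _) (by
      rintro _ ⟨D, hD, rfl⟩ hle
      apply h D hD
      rw [Ideal.mul_le]
      intro a ha c hc
      have := hle ha
      simp only [Submodule.mem_iInf] at this
      exact this c hc)
  obtain ⟨c, hc, hc'⟩ := avoid1 k J ((fun D : Ideal A => Submodule.comap (LinearMap.mulLeft A a) D)
    '' S) (hS.image _) (by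
      rintro _ ⟨D, hD, rfl⟩ hle
      apply ha' _ ⟨D, hD, rfl⟩
      simp only [Submodule.mem_iInf]
      intro c hc
      exact hle hc)
  exact ⟨a, ha, c, hc, fun D hD hm => hc' _ ⟨D, hD, rfl⟩ hm⟩

section
variable {A : Type*} [CommRing A] (K : Ideal A)

lemma mon_congr (i : ℕ) {g g' : A} (h : g = g') (hg : g ∈ K ^ i) (hg' : g' ∈ K ^ i) :
    mon K i g hg = mon K i g' hg' := by subst h; rfl

lemma mon_add (i : ℕ) (g g' : A) (hg : g ∈ K ^ i) (hg' : g' ∈ K ^ i) :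
    mon K i (g + g') (add_mem hg hg') = mon K i g hg + mon K i g' hg' := by
  apply Subtype.ext
  change monomial _ _ = monomial _ _ + monomial _ _
  rw [map_add]

lemma mon_smul (i : ℕ) (c g : A) (hg : g ∈ K ^ i) :
    mon K i (c * g) (Ideal.mul_mem_left _ c hg) = algebraMap A (reesAlgebra K) c * mon K i g hg := by
  apply Subtype.ext
  change monomial _ _ = C c * monomial _ _
  rw [C_mul_monomial]

lemma mon_mul (i j : ℕ) (g h : A) (hg : g ∈ K ^ i) (hh : h ∈ K ^ j) (hgh : g * h ∈ K ^ (i + j)) :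
    mon K i g hg * mon K j h hh = mon K (i + j) (g * h) hgh := by
  apply Subtype.ext
  change monomial _ _ * monomial _ _ = monomial _ _
  rw [monomial_mul_monomial]

/-- degree one part of `P` -/
noncomputable def deg1 (P : Ideal (reesAlgebra K)) : Ideal A where
  carrier := {g | ∃ hg : g ∈ K ^ 1, mon K 1 g hg ∈ P}
  add_mem' := by
    rintro a b ⟨ha, ha'⟩ ⟨hb, hb'⟩
    exact ⟨add_mem ha hb, by rw [mon_add K 1 a b ha hb]; exact add_mem ha' hb'⟩
  zero_mem' := ⟨zero_mem _, by
    have : mon K 1 0 (zero_mem _) = 0 := by apply Subtype.ext; exact monomial_zero_right _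
    rw [this]; exact zero_mem _⟩
  smul_mem' := by
    rintro c a ⟨ha, ha'⟩
    exact ⟨Ideal.mul_mem_left _ c ha, by
      have := P.mul_mem_left (algebraMap A (reesAlgebra K) c) ha'
      rw [← mon_smul] at this; exact this⟩

lemma mem_deg1 (P : Ideal (reesAlgebra K)) (g : A) (hg : g ∈ K ^ 1) :
    g ∈ deg1 K P ↔ mon K 1 g hg ∈ P := ⟨fun ⟨_, h⟩ => h, fun h => ⟨hg, h⟩⟩

/-- ideal generated by degree one elements. -/
noncomputable def Npos : Ideal (reesAlgebra K) :=
  Ideal.span {z | ∃ g, ∃ hg : g ∈ K ^ 1, z = mon K 1 g hg}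

lemma Npos_le (P : Ideal (reesAlgebra K)) (h : K ≤ deg1 K P) : Npos K ≤ P := by
  unfold Npos
  rw [Ideal.span_le]
  rintro _ ⟨g, hg, rfl⟩
  exact (mem_deg1 K P g hg).1 (h (by simpa using hg))

lemma hcomp_alg (i : ℕ) (x : A) : hcomp K i (algebraMap A (reesAlgebra K) x) =
    if i = 0 then algebraMap A (reesAlgebra K) x else 0 := by
  apply Subtype.ext
  split_ifs with h
  · subst h
    change monomial 0 ((C x).coeff 0) = C x
    simp
  · change monomial i ((C x).coeff i) = 0
    rw [coeff_C, if_neg h, monomial_zero_right]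

lemma hcomp_mon (i j : ℕ) (g : A) (hg : g ∈ K ^ i) : hcomp K j (mon K i g hg) =
    if j = i then mon K i g hg else 0 := by
  apply Subtype.ext
  split_ifs with h
  · subst h
    change monomial j ((monomial j g).coeff j) = monomial j g
    simp
  · change monomial j ((monomial i g).coeff j) = 0
    rw [coeff_monomial, if_neg (Ne.symm h), monomial_zero_right]

lemma alg_mem_pstar (P : Ideal (reesAlgebra K)) (x : A) (h : algebraMap A (reesAlgebra K) x ∈ P) :
    algebraMap A (reesAlgebra K) x ∈ pstar K P := by
  intro i
  rw [hcomp_alg]; split_ifs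
  · exact h
  · exact zero_mem _

lemma mon_mem_pstar (P : Ideal (reesAlgebra K)) (i : ℕ) (g : A) (hg : g ∈ K ^ i)
    (h : mon K i g hg ∈ P) : mon K i g hg ∈ pstar K P := by
  intro j
  rw [hcomp_mon]; split_ifs
  · exact h
  · exact zero_mem _

lemma map_le_pstar (P : Ideal (reesAlgebra K)) (m : Ideal A)
    (h : m.map (algebraMap A (reesAlgebra K)) ≤ P) :
    m.map (algebraMap A (reesAlgebra K)) ≤ pstar K P := by
  rw [Ideal.map_le_iff_le_comap] at h ⊢
  intro x hx
  exact alg_mem_pstar K P x (h hx)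
end

lemma pstar_le_M {A : Type*} [CommRing A] [IsLocalRing A] (K : Ideal A)
    (P : Ideal (reesAlgebra K)) [hP : P.IsPrime] :
    pstar K P ≤ (IsLocalRing.maximalIdeal A).comap (ev0 K) := by
  intro f hf
  rw [Ideal.mem_comap, ev0_apply, IsLocalRing.mem_maximalIdeal, mem_nonunits_iff]
  intro hu
  have h := hf 0
  have e : hcomp K 0 f = algebraMap A (reesAlgebra K) (f.1.coeff 0) := by
    apply Subtype.ext
    change monomial 0 _ = C _
    simp
  rw [e] at h
  exact hP.ne_top (Ideal.eq_top_of_isUnit_mem _ h (hu.map _))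

lemma Npos_le_M {A : Type*} [CommRing A] (K m : Ideal A) : Npos K ≤ m.comap (ev0 K) := by
  unfold Npos
  rw [Ideal.span_le]
  rintro _ ⟨g, hg, rfl⟩
  change (monomial 1 g).coeff 0 ∈ m
  rw [coeff_monomial]; simp

/-- the chain argument. -/
lemma chain {A : Type*} [CommRing A] [IsDomain A] [IsNoetherianRing A] [IsLocalRing A]
    (hdim : ringKrullDim A = 2) (K : Ideal A) (hK : K ≠ ⊥) (q1 q2 : A) (h1 : q1 ∈ K ^ 1)
    (h2 : q2 ∈ K ^ 1)
    (av1 : ∀ P ∈ ((IsLocalRing.maximalIdeal A).map (algebraMap A (reesAlgebra K))).minimalPrimes,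
      ¬ K ≤ deg1 K P → q1 ∉ deg1 K P)
    (av2 : ∀ P ∈ ((IsLocalRing.maximalIdeal A).map (algebraMap A (reesAlgebra K)) ⊔
      Ideal.span {mon K 1 q1 h1}).minimalPrimes, ¬ K ≤ deg1 K P → q2 ∉ deg1 K P)
    (P : Ideal (reesAlgebra K)) [hP : P.IsPrime]
    (hm : (IsLocalRing.maximalIdeal A).map (algebraMap A (reesAlgebra K)) ≤ P)
    (hq1 : mon K 1 q1 h1 ∈ P) (hq2 : mon K 1 q2 h2 ∈ P) : Npos K ≤ P := by
  by_contra hN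
  have hKP : ¬ K ≤ deg1 K P := fun h => hN (Npos_le K P h)
  set m := IsLocalRing.maximalIdeal A with hmdef
  set P1 := pstar K P with hP1
  have i1 : P1.IsPrime := pstar_prime K P
  have hm1 : m.map (algebraMap A (reesAlgebra K)) ≤ P1 := map_le_pstar K P m hm
  have hq11 := mon_mem_pstar K P 1 q1 h1 hq1
  have hq21 := mon_mem_pstar K P 1 q2 h2 hq2
  obtain ⟨P2, hP2, h21⟩ := Ideal.exists_minimalPrimes_le (I := m.map (algebraMap A (reesAlgebra K)) ⊔
      Ideal.span {mon K 1 q1 h1}) (J := P1) (sup_le hm1 ((Ideal.span_singleton_le_iff_mem _).2 hq11))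
  have i2 : P2.IsPrime := hP2.1.1
  obtain ⟨P3, hP3, h32⟩ := Ideal.exists_minimalPrimes_le (I := m.map (algebraMap A (reesAlgebra K)))
    (J := P2) (le_sup_left.trans hP2.1.2)
  have i3 : P3.IsPrime := hP3.1.1
  have n1 : ¬ K ≤ deg1 K P1 := fun h => hN ((Npos_le K P1 h).trans (pstar_le K P))
  have n2 : ¬ K ≤ deg1 K P2 := fun h => hN ((Npos_le K P2 h).trans (h21.trans (pstar_le K P)))
  have n3 : ¬ K ≤ deg1 K P3 := fun h => hN ((Npos_le K P3 h).trans
    (h32.trans (h21.trans (pstar_le K P))))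
  have l1 : P1 < m.comap (ev0 K) := by
    refine lt_of_le_of_ne (pstar_le_M K P) ?_
    intro h
    exact hN ((Npos_le_M K m).trans (h ▸ pstar_le K P))
  have l2 : P2 < P1 := by
    refine lt_of_le_of_ne h21 ?_
    intro h
    apply av2 P2 hP2 n2
    rw [mem_deg1 K P2 q2 h2, h]; exact hq21
  have l3 : P3 < P2 := by
    refine lt_of_le_of_ne h32 ?_
    intro h
    apply av1 P3 hP3 n3
    rw [mem_deg1 K P3 q1 h1, h]
    exact hP2.1.2 (Ideal.mem_sup_right (Ideal.mem_span_singleton_self _))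
  have l4 : ⊥ < P3 := by
    rw [bot_lt_iff_ne_bot]
    intro h
    obtain ⟨p, hp, hpb, hpm⟩ := exists_p hdim
    obtain ⟨x, hx, hx0⟩ := Submodule.exists_mem_ne_zero_of_ne_bot hpb
    have := hP3.1.2 (Ideal.mem_map_of_mem (algebraMap A (reesAlgebra K)) (hpm.le hx))
    rw [h, Ideal.mem_bot] at this
    have := congrArg (fun f : reesAlgebra K => f.1.coeff 0) this
    change (C x).coeff 0 = (0 : A[X]).coeff 0 at this
    simp [hx0] at this
  have i4 : (m.comap (ev0 K)).IsPrime := Ideal.IsPrime.comap _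
  have e1 := Ideal.height_add_one_le_of_lt_of_isPrime l1
  have e2 := Ideal.height_add_one_le_of_lt_of_isPrime l2
  have e3 := Ideal.height_add_one_le_of_lt_of_isPrime l3
  have e4 := Ideal.height_add_one_le_of_lt_of_isPrime l4
  have hfin := height_le_of_dim 3 (rees_dim_le 2 hdim.le K hK) (m.comap (ev0 K))
  have : (4 : ℕ∞) ≤ 3 := calc
    (4 : ℕ∞) = 0 + 1 + 1 + 1 + 1 := by norm_num
    _ ≤ (⊥ : Ideal (reesAlgebra K)).height + 1 + 1 + 1 + 1 := by gcongr; exact zero_le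
    _ ≤ P3.height + 1 + 1 + 1 := by gcongr
    _ ≤ P2.height + 1 + 1 := by gcongr
    _ ≤ P1.height + 1 := by gcongr
    _ ≤ _ := e1
    _ ≤ _ := hfin
  exact absurd this (by norm_num)

lemma exists_ab (k : Type*) [Field k] [Infinite k] {A : Type*} [CommRing A] [IsDomain A]
    [IsNoetherianRing A] [IsLocalRing A] [Algebra k A]
    (hdim : ringKrullDim A = 2) (I J : Ideal A) (hI : I ≠ ⊥) (hJ : J ≠ ⊥) :
    ∃ a ∈ I, ∃ b ∈ I, ∃ c ∈ J, ∃ d ∈ J, a ≠ 0 ∧ b ≠ 0 ∧ c ≠ 0 ∧ d ≠ 0 ∧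
      ∃ n, (I * J) ^ (n + 1) ≤ Ideal.span {a * c, b * d} * (I * J) ^ n := by
  set K := I * J with hKdef
  have hK : K ≠ ⊥ := mul_ne_zero hI hJ
  have hKb : ¬ I * J ≤ ⊥ := fun h => hK (le_bot_iff.1 h)
  set m := IsLocalRing.maximalIdeal A with hmdef
  set a0 := m.map (algebraMap A (reesAlgebra K)) with ha0
  obtain ⟨a, ha, c, hc, h1⟩ := avoid2 k I J
    (insert ⊥ ((deg1 K '' a0.minimalPrimes) ∩ {D | ¬ K ≤ D}))
    (Set.Finite.insert _ (((Ideal.finite_minimalPrimes_of_isNoetherianRing _ _).image _).subset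
      Set.inter_subset_left)) (by
      rintro D (rfl | hD)
      · exact hKb
      · exact hD.2)
  have hac : a * c ∈ K ^ 1 := by rw [pow_one]; exact Ideal.mul_mem_mul ha hc
  obtain ⟨b, hb, d, hd, h2⟩ := avoid2 k I J
    (insert ⊥ ((deg1 K '' (a0 ⊔ Ideal.span {mon K 1 (a * c) hac}).minimalPrimes) ∩ {D | ¬ K ≤ D}))
    (Set.Finite.insert _ (((Ideal.finite_minimalPrimes_of_isNoetherianRing _ _).image _).subset
      Set.inter_subset_left)) (by
      rintro D (rfl | hD)
      · exact hKb
      · exact hD.2)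
  have hbd : b * d ∈ K ^ 1 := by rw [pow_one]; exact Ideal.mul_mem_mul hb hd
  have hac0 := h1 ⊥ (Set.mem_insert _ _)
  have hbd0 := h2 ⊥ (Set.mem_insert _ _)
  rw [Ideal.mem_bot] at hac0 hbd0
  refine ⟨a, ha, b, hb, c, hc, d, hd, left_ne_zero_of_mul hac0, left_ne_zero_of_mul hbd0,
    right_ne_zero_of_mul hac0, right_ne_zero_of_mul hbd0, ?_⟩
  set a2 := a0 ⊔ Ideal.span {mon K 1 (a * c) hac, mon K 1 (b * d) hbd} with ha2
  have hrad : Npos K ≤ a2.radical := by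
    rw [Ideal.radical_eq_sInf]
    refine le_sInf ?_
    rintro P ⟨hP, hPp⟩
    have hx : ∀ x ∈ ({mon K 1 (a * c) hac, mon K 1 (b * d) hbd} : Set (reesAlgebra K)), x ∈ P :=
      fun x hx => hP (Ideal.mem_sup_right (Ideal.subset_span hx))
    exact chain hdim K hK (a * c) (b * d) hac hbd
      (fun P hP hKP => h1 _ (Set.mem_insert_of_mem _ ⟨⟨P, hP, rfl⟩, hKP⟩))
      (fun P hP hKP => h2 _ (Set.mem_insert_of_mem _ ⟨⟨P, hP, rfl⟩, hKP⟩)) P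
      (le_sup_left.trans hP) (hx _ (by simp)) (hx _ (by simp))
  obtain ⟨n, hn⟩ := Ideal.exists_pow_le_of_le_radical_of_fg hrad (IsNoetherian.noetherian _)
  refine ⟨n, ?_⟩
  set Q := Ideal.span {a * c, b * d} with hQ
  have hQK : Q ≤ K := by
    rw [hQ, Ideal.span_le]
    rintro x (rfl | rfl)
    · simpa using hac
    · simpa using hbd
  let E : ℕ → Ideal A := fun i => m * K ^ i ⊔ (if i = 0 then ⊥ else Q * K ^ (i - 1))
  have hE : ∀ i j, E i * K ^ j ≤ E (i + j) := by
    intro i j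
    simp only [E, Ideal.sup_mul]
    refine sup_le_sup ?_ ?_
    · rw [pow_add, mul_assoc]
    · by_cases hi : i = 0
      · simp [hi]
      · rw [if_neg hi, if_neg (by omega), mul_assoc, ← pow_add]
        rw [show i - 1 + j = i + j - 1 by omega]
  have ha2E : a2 ≤ gIdeal K E hE := by
    refine sup_le ?_ ?_
    · rw [ha0, Ideal.map_le_iff_le_comap]
      intro x hx
      rw [Ideal.mem_comap, mem_gIdeal]
      intro i
      change (C x).coeff i ∈ _
      rw [coeff_C]; split_ifs with hi
      · subst hi
        simp only [E]
        exact Ideal.mem_sup_left (by simpa using hx)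
      · exact zero_mem _
    · have hg : ∀ g (hg : g ∈ K ^ 1), g ∈ Q → mon K 1 g hg ∈ gIdeal K E hE := by
        intro g hg hgQ
        rw [mem_gIdeal]
        intro i
        change (monomial 1 g).coeff i ∈ _
        rw [coeff_monomial]; split_ifs with hi
        · subst hi
          simp only [E]
          exact Ideal.mem_sup_right (by simpa using hgQ)
        · exact zero_mem _
      rw [Ideal.span_le]
      rintro x (rfl | rfl)
      · exact hg _ _ (Ideal.subset_span (by simp))
      · exact hg _ _ (Ideal.subset_span (by simp))
  have hle : K ^ (n + 1) ≤ Q * K ^ n ⊔ m • K ^ (n + 1) := by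
    intro y hy
    have hy' := mon_mem_pow K (n + 1) y hy
    have := ha2E (hn (Ideal.pow_le_pow_right (Nat.le_succ n) hy')) (n + 1)
    change (monomial (n + 1) y).coeff (n + 1) ∈ _ at this
    simp only [coeff_monomial, if_true, E, if_neg (Nat.succ_ne_zero n), Nat.add_sub_cancel] at this
    rw [sup_comm]
    exact this
  exact Submodule.le_of_le_smul_of_le_jacobson_bot (IsNoetherian.noetherian _)
    (by rw [IsLocalRing.jacobson_eq_maximalIdeal ⊥ bot_ne_top]) hle


lemma mem_span_pair_mul' {A : Type*} [CommRing A] (q1 q2 : A) (L : Ideal A) (y : A) :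
    y ∈ Ideal.span {q1, q2} * L ↔ ∃ u ∈ L, ∃ v ∈ L, y = q1 * u + q2 * v := by
  rw [Ideal.span_insert, Ideal.sup_mul, Submodule.mem_sup]
  constructor
  · rintro ⟨a, ha, b, hb, rfl⟩
    obtain ⟨u, hu, rfl⟩ := Ideal.mem_span_singleton_mul.1 ha
    obtain ⟨v, hv, rfl⟩ := Ideal.mem_span_singleton_mul.1 hb
    exact ⟨u, hu, v, hv, rfl⟩
  · rintro ⟨u, hu, v, hv, rfl⟩
    exact ⟨q1 * u, Ideal.mem_span_singleton_mul.2 ⟨u, hu, rfl⟩, q2 * v,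
      Ideal.mem_span_singleton_mul.2 ⟨v, hv, rfl⟩, rfl⟩

lemma Npos_le_of_red {A : Type*} [CommRing A] (K : Ideal A) (q1 q2 : A) (h1 : q1 ∈ K ^ 1)
    (h2 : q2 ∈ K ^ 1) (n : ℕ) (hn : K ^ (n + 1) ≤ Ideal.span {q1, q2} * K ^ n)
    (P : Ideal (reesAlgebra K)) [hP : P.IsPrime] (hq1 : mon K 1 q1 h1 ∈ P)
    (hq2 : mon K 1 q2 h2 ∈ P) : Npos K ≤ P := by
  apply Npos_le
  intro g hg
  have hg1 : g ∈ K ^ 1 := by simpa using hg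
  rw [mem_deg1 K P g hg1]
  apply hP.mem_of_pow_mem (n + 1)
  obtain ⟨u, hu, v, hv, e⟩ := (mem_span_pair_mul' q1 q2 (K ^ n) (g ^ (n + 1))).1
    (hn (Ideal.pow_mem_pow hg _))
  have : mon K 1 g hg1 ^ (n + 1) = mon K 1 q1 h1 * mon K n u hu + mon K 1 q2 h2 * mon K n v hv := by
    apply Subtype.ext
    change (monomial 1 g) ^ (n + 1) = monomial 1 q1 * monomial n u + monomial 1 q2 * monomial n v
    rw [monomial_pow, monomial_mul_monomial, monomial_mul_monomial, ← map_add, e, one_mul, add_comm n 1]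
  rw [this]
  exact P.add_mem (P.mul_mem_right _ hq1) (P.mul_mem_right _ hq2)

lemma M_le {A : Type*} [CommRing A] (K m : Ideal A) (P : Ideal (reesAlgebra K))
    (h1 : m.map (algebraMap A (reesAlgebra K)) ≤ P) (h2 : Npos K ≤ P) : m.comap (ev0 K) ≤ P := by
  intro f hf
  rw [sum_hcomp K f]
  refine Ideal.sum_mem _ fun i _ => ?_
  rcases Nat.eq_zero_or_pos i with rfl | hi
  · have e : hcomp K 0 f = algebraMap A (reesAlgebra K) (f.1.coeff 0) := by
      apply Subtype.ext
      change monomial 0 _ = C _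
      simp
    rw [e]
    exact h1 (Ideal.mem_map_of_mem _ hf)
  · exact h2 (Ideal.pow_le_self hi.ne' (mon_mem_pow K i _ (f.2 i)))

/-- primes containing the three elements -/
lemma M_le_three {A : Type*} [CommRing A] (K m : Ideal A) (N : ℕ) (hN : m ^ N ≤ K)
    (q1 q2 : A) (h1 : q1 ∈ K ^ 1)
    (h2 : q2 ∈ K ^ 1) (n : ℕ) (hn : K ^ (n + 1) ≤ Ideal.span {q1, q2} * K ^ n)
    (P : Ideal (reesAlgebra K)) [hP : P.IsPrime]
    (x1 : algebraMap A (reesAlgebra K) q1 ∈ P) (x2 : mon K 1 q2 h2 ∈ P)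
    (x3 : algebraMap A (reesAlgebra K) q2 - mon K 1 q1 h1 ∈ P) : m.comap (ev0 K) ≤ P := by
  have e : algebraMap A (reesAlgebra K) q2 ^ 2 = algebraMap A (reesAlgebra K) q2 *
      (algebraMap A (reesAlgebra K) q2 - mon K 1 q1 h1) +
      algebraMap A (reesAlgebra K) q1 * mon K 1 q2 h2 := by
    have : algebraMap A (reesAlgebra K) q2 * mon K 1 q1 h1 =
      algebraMap A (reesAlgebra K) q1 * mon K 1 q2 h2 := by
      apply Subtype.ext
      change C q2 * monomial 1 q1 = C q1 * monomial 1 q2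
      rw [C_mul_monomial, C_mul_monomial, mul_comm]
    rw [mul_sub, this]; ring
  have y2 : algebraMap A (reesAlgebra K) q2 ∈ P := by
    apply hP.mem_of_pow_mem 2
    rw [e]
    exact P.add_mem (P.mul_mem_left _ x3) (P.mul_mem_left _ x2)
  have y1 : mon K 1 q1 h1 ∈ P := by
    have := P.sub_mem y2 x3
    simpa using this
  refine M_le K m P ?_ (Npos_le_of_red K q1 q2 h1 h2 n hn P y1 x2)
  rw [Ideal.map_le_iff_le_comap]
  have i : (P.comap (algebraMap A (reesAlgebra K))).IsPrime := Ideal.IsPrime.comap _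
  have hQ : Ideal.span {q1, q2} ≤ P.comap (algebraMap A (reesAlgebra K)) := by
    rw [Ideal.span_le]
    rintro x (rfl | rfl)
    · exact x1
    · exact y2
  apply Ideal.IsPrime.le_of_pow_le (n := N * (n + 1))
  rw [pow_mul]
  exact (Ideal.pow_right_mono hN _).trans (hn.trans (Ideal.mul_le_left.trans hQ))

lemma mem_map_aux {R S : Type*} [CommRing R] [CommRing S] (φ : R →+* S) (x1 x2 v : R) (w1 w2 : S)
    (hw : φ v = φ x1 * w2 - φ x2 * w1) : φ v ∈ (Ideal.span {x1, x2}).map φ := by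
  have a1 : φ x1 ∈ (Ideal.span {x1, x2}).map φ :=
    Ideal.mem_map_of_mem φ (Ideal.subset_span (Set.mem_insert _ _))
  have a2 : φ x2 ∈ (Ideal.span {x1, x2}).map φ :=
    Ideal.mem_map_of_mem φ (Ideal.subset_span (Set.mem_insert_of_mem _ rfl))
  rw [hw]
  exact Ideal.sub_mem _ (Ideal.mul_mem_right _ _ a1) (Ideal.mul_mem_right _ _ a2)

lemma koszul_loc {R S : Type*} [CommRing R] [CommRing S] [Algebra R S] (M : Ideal R) [M.IsPrime]
    [IsLocalization.AtPrime S M] [IsLocalRing S] (r1 r2 r3 : S)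
    (hr1 : r1 ∈ IsLocalRing.maximalIdeal S) (hr2 : r2 ∈ IsLocalRing.maximalIdeal S)
    (hr3 : r3 ∈ IsLocalRing.maximalIdeal S)
    (hwr : RingTheory.Sequence.IsWeaklyRegular S [r1, r2, r3]) (x1 x2 x3 v1 v2 v3 : R)
    (hrad : M ≤ (Ideal.span {x1, x2, x3}).radical) (hv : x1 * v1 + x2 * v2 + x3 * v3 = 0) :
    ∃ s, s ∉ M ∧ s * v3 ∈ Ideal.span {x1, x2} := by
  set φ := algebraMap R S with hφ
  have hmap : (Ideal.span {x1, x2, x3}).map φ = Ideal.span {φ x1, φ x2, φ x3} := by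
    rw [Ideal.map_span]; congr 1
    simp [Set.image_insert_eq]
  have hradS : IsLocalRing.maximalIdeal S ≤ (Ideal.span {φ x1, φ x2, φ x3}).radical := by
    rw [← IsLocalization.AtPrime.map_eq_maximalIdeal M S, Ideal.map_le_iff_le_comap]
    intro f hf
    obtain ⟨e, he⟩ := hrad hf
    refine ⟨e, ?_⟩
    rw [← hmap, ← map_pow]
    exact Ideal.mem_map_of_mem _ he
  obtain ⟨w1, w2, hw⟩ := koszul r1 r2 r3 (φ x1) (φ x2) (φ x3) hwr (hradS hr1)
    (hradS hr2) (hradS hr3) (φ v1) (φ v2) (φ v3) (by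
      rw [← map_mul, ← map_mul, ← map_mul, ← map_add, ← map_add, hv, map_zero])
  have hmem : φ v3 ∈ (Ideal.span {x1, x2}).map φ := mem_map_aux φ _ _ _ _ _ hw
  obtain ⟨s, hs, hsm⟩ := (IsLocalization.algebraMap_mem_map_algebraMap_iff M.primeCompl S _ _).1 hmem
  exact ⟨s, hs, hsm⟩

set_option maxHeartbeats 800000 in
lemma half {A : Type*} [CommRing A] [IsDomain A] [IsNoetherianRing A] [IsLocalRing A]
    (hdim : ringKrullDim A = 2) (K : Ideal A) (N : ℕ) (hN : IsLocalRing.maximalIdeal A ^ N ≤ K)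
    (hCM : IsCohenMacaulayRing (reesAlgebra K)) (q1 q2 : A) (h1 : q1 ∈ K ^ 1)
    (h2 : q2 ∈ K ^ 1) (n : ℕ) (hn : K ^ (n + 1) ≤ Ideal.span {q1, q2} * K ^ n)
    (y : A) (hy : y ∈ K ^ 2) : ∃ z ∈ K, ∃ w, y = q1 * z + q2 * w := by
  set m := IsLocalRing.maximalIdeal A with hm
  set M := m.comap (ev0 K) with hM
  have iM : M.IsPrime := Ideal.IsPrime.comap _
  let S := Localization.AtPrime M
  obtain ⟨-, hloc, (rs : List S), hrs, hreg, hlen⟩ := hCM.2 M iM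
  have hdimS : ringKrullDim S = M.height := IsLocalization.AtPrime.ringKrullDim_eq_height M S
  have h3 : 3 ≤ rs.length := by
    have h := height_M hdim K N hN
    have hlen' : ((rs.length : ℕ∞) : WithBot ℕ∞) = ((M.height : ℕ∞) : WithBot ℕ∞) :=
      hlen.trans hdimS
    rw [← WithBot.coe_inj.1 hlen'] at h
    exact_mod_cast h
  obtain ⟨r1, hr1, r2, hr2, r3, hr3, hwr⟩ := take_three rs hreg.toIsWeaklyRegular h3
  have hy1 : y ∈ K ^ 1 := Ideal.pow_le_pow_right (by norm_num) hy
  set x1 := algebraMap A (reesAlgebra K) q1 with hx1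
  set x2 := mon K 1 q2 h2 with hx2
  set x3 := algebraMap A (reesAlgebra K) q2 - mon K 1 q1 h1 with hx3
  have hrad : M ≤ (Ideal.span {x1, x2, x3}).radical := by
    rw [Ideal.radical_eq_sInf]
    refine le_sInf ?_
    rintro P ⟨hP, hPp⟩
    exact M_le_three K m N hN q1 q2 h1 h2 n hn P (hP (Ideal.subset_span (Or.inl rfl)))
      (hP (Ideal.subset_span (Or.inr (Or.inl rfl)))) (hP (Ideal.subset_span (Or.inr (Or.inr rfl))))
  obtain ⟨s, hs, hsm⟩ := koszul_loc M r1 r2 r3 (hrs _ hr1) (hrs _ hr2) (hrs _ hr3) hwr x1 x2 x3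
    (mon K 2 y hy) (-(algebraMap A (reesAlgebra K) y)) (mon K 1 y hy1) hrad (by
      apply Subtype.ext
      change C q1 * monomial 2 y + monomial 1 q2 * (-(C y)) + (C q2 - monomial 1 q1) * monomial 1 y = 0
      rw [sub_mul, C_mul_monomial, C_mul_monomial, monomial_mul_monomial, mul_neg, monomial_mul_C]
      ring)
  obtain ⟨f, g, hfg⟩ := Ideal.mem_span_pair.1 hsm
  have hc := congrArg (fun f : reesAlgebra K => f.1.coeff 1) hfg
  change (f.1 * C q1 + g.1 * monomial 1 q2).coeff 1 = (s.1 * monomial 1 y).coeff 1 at hc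
  have t1 : (g.1 * monomial 1 q2).coeff 1 = g.1.coeff 0 * q2 := coeff_mul_monomial g.1 1 0 q2
  have t2 : (s.1 * monomial 1 y).coeff 1 = s.1.coeff 0 * y := coeff_mul_monomial s.1 1 0 y
  rw [coeff_add, coeff_mul_C, t1, t2] at hc
  have hu : IsUnit (s.1.coeff 0) := by
    by_contra h
    exact hs (show s ∈ M from h)
  obtain ⟨u, hu⟩ := hu
  refine ⟨↑u⁻¹ * f.1.coeff 1, Ideal.mul_mem_left _ _ (by simpa using f.2 1), ↑u⁻¹ * g.1.coeff 0, ?_⟩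
  have : y = ↑u⁻¹ * (s.1.coeff 0 * y) := by rw [← hu, ← mul_assoc]; simp
  rw [this, ← hc]; ring

lemma K_two {A : Type*} [CommRing A] [IsDomain A] [IsNoetherianRing A] [IsLocalRing A]
    [IsIntegrallyClosed A]
    (hdim : ringKrullDim A = 2) (K : Ideal A) (N : ℕ) (hN : IsLocalRing.maximalIdeal A ^ N ≤ K)
    (hCM : IsCohenMacaulayRing (reesAlgebra K)) (q1 q2 : A) (h1 : q1 ∈ K)
    (h2 : q2 ∈ K) (hq1 : q1 ≠ 0) (n : ℕ) (hn : K ^ (n + 1) ≤ Ideal.span {q1, q2} * K ^ n)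
    (y : A) (hy : y ∈ K ^ 2) : ∃ z ∈ K, ∃ w ∈ K, y = q1 * z + q2 * w := by
  have h1' : q1 ∈ K ^ 1 := by simpa using h1
  have h2' : q2 ∈ K ^ 1 := by simpa using h2
  obtain ⟨z, hz, w, e⟩ := half hdim K N hN hCM q1 q2 h1' h2' n hn y hy
  have hq2w : q2 * w ∈ K ^ 2 := by
    have : q2 * w = y - q1 * z := by rw [e]; ring
    rw [this]
    refine sub_mem hy ?_
    rw [pow_two]; exact Ideal.mul_mem_mul h1 hz
  obtain ⟨k, hk, r, e2⟩ := half hdim K N hN hCM q2 q1 h2' h1' n (by rwa [Set.pair_comm]) (q2 * w) hq2w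
  have hht : 2 ≤ (IsLocalRing.maximalIdeal A).height := by
    have h := IsLocalRing.maximalIdeal_height_eq_ringKrullDim (R := A)
    rw [hdim] at h
    have h' : (((IsLocalRing.maximalIdeal A).height : ℕ∞) : WithBot ℕ∞) =
      ((2 : ℕ∞) : WithBot ℕ∞) := h
    exact (WithBot.coe_inj.1 h').ge
  obtain ⟨v, hv, -⟩ := regular_of_primary (IsLocalRing.maximalIdeal A) hht q1 q2 hq1 (N * (n + 1)) (by
    rw [pow_mul]
    exact (Ideal.pow_right_mono hN _).trans (hn.trans Ideal.mul_le_left)) (w - k) r (by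
      rw [mul_sub, e2]; ring)
  refine ⟨z, hz, w, ?_, e⟩
  rw [show w = q1 * v + k by rw [← hv]; ring]
  exact add_mem (Ideal.mul_mem_right _ _ h1) hk

lemma K_red {A : Type*} [CommRing A] (K : Ideal A) (q1 q2 : A) (h1 : q1 ∈ K)
    (h : ∀ y ∈ K ^ 2, ∃ z ∈ K, ∃ w ∈ K, y = q1 * z + q2 * w) (k : ℕ) :
    ∀ y ∈ K ^ (k + 2), ∃ α ∈ K, ∃ β ∈ K ^ (k + 1), y = q1 ^ (k + 1) * α + q2 * β := by
  induction k with
  | zero =>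
    intro y hy
    obtain ⟨z, hz, w, hw, e⟩ := h y hy
    exact ⟨z, hz, w, by simpa using hw, by rw [e]; ring⟩
  | succ k ih =>
    have hle : K ^ (k + 1 + 2) ≤ Ideal.span {q1, q2} * K ^ (k + 2) := by
      have h2 : K ^ 2 ≤ Ideal.span {q1, q2} * K := fun y hy => by
        rw [mem_span_pair_mul']
        obtain ⟨z, hz, w, hw, e⟩ := h y hy
        exact ⟨z, hz, w, hw, e⟩
      calc K ^ (k + 1 + 2) = K ^ 2 * K ^ (k + 1) := by ring
        _ ≤ (Ideal.span {q1, q2} * K) * K ^ (k + 1) := Ideal.mul_mono_left h2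
        _ = Ideal.span {q1, q2} * K ^ (k + 2) := by ring
    intro y hy
    obtain ⟨u, hu, v, hv, e⟩ := (mem_span_pair_mul' _ _ _ _).1 (hle hy)
    obtain ⟨α, hα, β, hβ, e2⟩ := ih u hu
    refine ⟨α, hα, q1 * β + v, add_mem ?_ hv, ?_⟩
    · rw [pow_succ']; exact Ideal.mul_mem_mul h1 hβ
    · rw [e, e2]; ring

/-- powers are closed -/
lemma I_powers (k : Type*) [Field k] [Infinite k] {A : Type*} [CommRing A] [IsDomain A]
    [IsNoetherianRing A] [IsLocalRing A] [IsIntegrallyClosed A] [Algebra k A]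
    (hdim : ringKrullDim A = 2) (I J : Ideal A) (N N' : ℕ)
    (hI : IsLocalRing.maximalIdeal A ^ N ≤ I) (hJ : IsLocalRing.maximalIdeal A ^ N' ≤ J)
    (hIcl : IdealIsIntegrallyClosed I)
    (hCM : IsCMNormalDomain (reesAlgebra (I * J))) :
    (∀ n, IdealIsIntegrallyClosed (I ^ n)) ∧ ∃ a ∈ I, ∃ b ∈ I, a ≠ 0 ∧ b ≠ 0 ∧
      I ^ 2 ≤ Ideal.span {a, b} * I := by
  obtain ⟨p, hp, hpb, hpm⟩ := exists_p hdim
  have hmb : IsLocalRing.maximalIdeal A ≠ ⊥ := fun h => hpb (le_bot_iff.1 (h ▸ hpm.le))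
  have hIb : I ≠ ⊥ := fun h => pow_ne_zero N hmb (le_bot_iff.1 (h ▸ hI))
  have hJb : J ≠ ⊥ := fun h => pow_ne_zero N' hmb (le_bot_iff.1 (h ▸ hJ))
  obtain ⟨a, ha, b, hb, c, hc, d, hd, ha0, hb0, hc0, hd0, n, hn⟩ := exists_ab k hdim I J hIb hJb
  have hK : IsLocalRing.maximalIdeal A ^ (N + N') ≤ I * J := by
    rw [pow_add]; exact Ideal.mul_mono hI hJ
  have hred := K_red (I * J) (a * c) (b * d) (Ideal.mul_mem_mul ha hc)
    (K_two hdim (I * J) _ hK hCM.1 (a * c) (b * d) (Ideal.mul_mem_mul ha hc)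
      (Ideal.mul_mem_mul hb hd) (mul_ne_zero ha0 hc0) n hn)
  have hcl := rees_pow_closed (I * J) (mul_ne_zero hIb hJb) hCM.2.2
  have step := fun k => step_lemma I J hIb hJb a b c d ha hb hc hd hc0 hd0 hcl k (hred k)
  have hall : ∀ n, IdealIsIntegrallyClosed (I ^ (n + 1)) := by
    intro n
    induction n with
    | zero => simpa using hIcl
    | succ n ih =>
      intro x hx
      obtain ⟨u, hu, v, hv, rfl⟩ := step n ih x hx
      rw [pow_succ']
      exact add_mem (Ideal.mul_mem_mul ha hu) (Ideal.mul_mem_mul hb hv)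
  refine ⟨fun n => ?_, a, ha, b, hb, ha0, hb0, ?_⟩
  · cases n with
    | zero => rw [pow_zero, Ideal.one_eq_top]; exact top_closed
    | succ n => exact hall n
  · intro x hx
    rw [mem_span_pair_mul']
    have : IsIntegralOverIdeal (I ^ 2) x := by
      refine ⟨1, one_pos, fun _ => -x, ?_, by simp⟩
      intro i h1 h2
      obtain rfl : i = 1 := by omega
      rw [pow_one]; exact neg_mem hx
    obtain ⟨u, hu, v, hv, e⟩ := step 0 (hall 0) x this
    exact ⟨u, by simpa using hu, v, by simpa using hv, e⟩


lemma cm_of_height3 {R : Type*} [CommRing R] [IsDomain R] [IsNoetherianRing R]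
    [IsIntegrallyClosed R] (hdim : ringKrullDim R ≤ (3 : ℕ))
    (h : ∀ (P : Ideal R) [P.IsPrime], 3 ≤ P.height →
      ∃ x ∈ IsLocalRing.maximalIdeal (Localization.AtPrime P),
      ∃ y ∈ IsLocalRing.maximalIdeal (Localization.AtPrime P),
      ∃ z ∈ IsLocalRing.maximalIdeal (Localization.AtPrime P),
        IsWeaklyRegular (Localization.AtPrime P) [x, y, z]) : IsCohenMacaulayRing R := by
  refine ⟨inferInstance, fun P hP => ?_⟩
  have iN : IsNoetherianRing (Localization.AtPrime P) :=
    IsLocalization.isNoetherianRing P.primeCompl _ inferInstance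
  have iD : IsDomain (Localization.AtPrime P) :=
    IsLocalization.isDomain_localization P.primeCompl_le_nonZeroDivisors
  have iC : IsIntegrallyClosed (Localization.AtPrime P) :=
    isIntegrallyClosed_of_isLocalization _ P.primeCompl P.primeCompl_le_nonZeroDivisors
  have hd : ringKrullDim (Localization.AtPrime P) = P.height :=
    IsLocalization.AtPrime.ringKrullDim_eq_height P _
  have hmh : (IsLocalRing.maximalIdeal (Localization.AtPrime P)).height = P.height := by
    have := IsLocalRing.maximalIdeal_height_eq_ringKrullDim (R := Localization.AtPrime P)
    rw [hd] at this
    exact WithBot.coe_inj.1 this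
  have key : ∀ rs : List (Localization.AtPrime P),
      (∀ x ∈ rs, x ∈ IsLocalRing.maximalIdeal (Localization.AtPrime P)) →
      IsWeaklyRegular (Localization.AtPrime P) rs → (rs.length : ℕ∞) = P.height →
      IsCohenMacaulayLocalRing (Localization.AtPrime P) := by
    intro rs h1 h2 h3
    refine ⟨iN, inferInstance, rs, h1, ?_, ?_⟩
    · exact IsRegular.of_isWeaklyRegular_of_mem_maximalIdeal _ h1 h2
    · rw [hd, ← h3]; rfl
  have hle := height_le_of_dim 3 hdim P
  obtain ⟨n, hn⟩ := ENat.ne_top_iff_exists.1 (ne_top_of_le_ne_top (ENat.natCast_ne_top 3) hle)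
  rw [← hn] at hle
  have hn3 : n ≤ 3 := by exact_mod_cast hle
  interval_cases n
  · exact key [] (by simp) (IsWeaklyRegular.nil _ _) (by rw [← hn]; rfl)
  · have : IsLocalRing.maximalIdeal (Localization.AtPrime P) ≠ ⊥ := by
      intro h0
      rw [h0, ← hn] at hmh
      simp at hmh
    obtain ⟨x, hx, hx0⟩ := Submodule.exists_mem_ne_zero_of_ne_bot this
    refine key [x] (by simpa using hx) ((wr1 x).2 fun w hw => ?_) (by rw [← hn]; rfl)
    exact (mul_eq_zero.1 hw).resolve_left hx0
  · obtain ⟨x, hx, y, hy, hx0, hxy⟩ := exists_two (IsLocalRing.maximalIdeal (Localization.AtPrime P))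
      (by rw [hmh, ← hn]; rfl)
    refine key [x, y] (List.forall_mem_cons.2 ⟨hx, List.forall_mem_singleton.2 hy⟩) ((wr2 x y).2 ⟨fun w hw => ?_, hxy⟩) (by rw [← hn]; rfl)
    exact (mul_eq_zero.1 hw).resolve_left hx0
  · obtain ⟨x, hx, y, hy, z, hz, hw⟩ := h P (by rw [← hn]; rfl)
    refine key [x, y, z] ?_ hw (by rw [← hn]; rfl)
    intro t ht
    simp only [List.mem_cons, List.not_mem_nil, or_false] at ht
    rcases ht with rfl | rfl | rfl <;> assumption


lemma I_red {A : Type*} [CommRing A] (I : Ideal A) (a b : A) (h : I ^ 2 ≤ Ideal.span {a, b} * I)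
    (n : ℕ) (hn : 1 ≤ n) : I ^ (n + 1) ≤ Ideal.span {a, b} * I ^ n := by
  obtain ⟨n, rfl⟩ : ∃ k, n = k + 1 := ⟨n - 1, by omega⟩
  calc I ^ (n + 1 + 1) = I ^ 2 * I ^ n := by ring
    _ ≤ (Ideal.span {a, b} * I) * I ^ n := Ideal.mul_mono_left h
    _ = _ := by ring

section

lemma ab_reg {A : Type*} [CommRing A] [IsDomain A] [IsNoetherianRing A] [IsLocalRing A]
    [IsIntegrallyClosed A] (hdim : ringKrullDim A = 2) (I : Ideal A) (N : ℕ)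
    (hN : IsLocalRing.maximalIdeal A ^ N ≤ I) (a b : A) (ha0 : a ≠ 0)
    (hI : I ^ 2 ≤ Ideal.span {a, b} * I) (w w' : A) (h : a * w' = b * w) : ∃ v, w = a * v ∧ w' = b * v := by
  have hht : 2 ≤ (IsLocalRing.maximalIdeal A).height := by
    have h := IsLocalRing.maximalIdeal_height_eq_ringKrullDim (R := A)
    rw [hdim] at h
    have h' : (((IsLocalRing.maximalIdeal A).height : ℕ∞) : WithBot ℕ∞) =
      ((2 : ℕ∞) : WithBot ℕ∞) := h
    exact (WithBot.coe_inj.1 h').ge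
  refine regular_of_primary (IsLocalRing.maximalIdeal A) hht a b ha0 (N * 2) ?_ w w' h
  rw [pow_mul]
  exact (Ideal.pow_right_mono hN _).trans (hI.trans Ideal.mul_le_left)


lemma b_colon {A : Type*} [CommRing A] [IsDomain A] [IsNoetherianRing A] [IsLocalRing A]
    [IsIntegrallyClosed A] (hdim : ringKrullDim A = 2) (I : Ideal A) (N : ℕ)
    (hN : IsLocalRing.maximalIdeal A ^ N ≤ I) (a b : A) (ha : a ∈ I) (ha0 : a ≠ 0)
    (hI : I ^ 2 ≤ Ideal.span {a, b} * I) (n : ℕ) (w : A) (h : b * w ∈ I ^ (n + 1)) : w ∈ I ^ n := by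
  induction n generalizing w with
  | zero => simp
  | succ n ih =>
    obtain ⟨u, hu, v, hv, e⟩ := (mem_span_pair_mul' _ _ _ _).1 (I_red I a b hI (n + 1) (by omega) h)
    obtain ⟨s, hs1, hs2⟩ := ab_reg hdim I N hN a b ha0 hI (w - v) u (by rw [mul_sub, e]; ring)
    have hs := ih s (by rw [← hs2]; exact hu)
    rw [show w = a * s + v by rw [← hs1]; ring]
    refine add_mem ?_ hv
    rw [pow_succ']; exact Ideal.mul_mem_mul ha hs


lemma wreg {A : Type*} [CommRing A] [IsDomain A] [IsNoetherianRing A] [IsLocalRing A]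
    [IsIntegrallyClosed A] (hdim : ringKrullDim A = 2) (I : Ideal A) (N : ℕ)
    (hN : IsLocalRing.maximalIdeal A ^ N ≤ I) (a b : A) (ha : a ∈ I) (hb : b ∈ I) (ha0 : a ≠ 0)
    (hI : I ^ 2 ≤ Ideal.span {a, b} * I) (ha1 : a ∈ I ^ 1) (hb1 : b ∈ I ^ 1) : IsWeaklyRegular (reesAlgebra I)
    [algebraMap A (reesAlgebra I) a, mon I 1 b hb1,
      algebraMap A (reesAlgebra I) b - mon I 1 a ha1] := by
  rw [wr3]
  refine ⟨?_, ?_, ?_⟩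
  · intro w hw
    have hw' : C a * w.1 = 0 := congrArg Subtype.val hw
    apply Subtype.ext
    exact (mul_eq_zero.1 hw').resolve_left (by simpa using ha0)
  · rintro w ⟨f, hf⟩
    have hf' : monomial 1 b * w.1 = C a * f.1 := congrArg Subtype.val hf
    rw [sum_hcomp I w]
    refine Finset.dvd_sum fun n _ => ?_
    have hc := congrArg (fun p : A[X] => p.coeff (n + 1)) hf'
    simp only [coeff_C_mul] at hc
    rw [coeff_monomial_mul] at hc
    obtain ⟨s, hs1, hs2⟩ := ab_reg hdim I N hN a b ha0 hI (w.1.coeff n) (f.1.coeff (n + 1)) hc.symm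
    have hs : s ∈ I ^ n := b_colon hdim I N hN a b ha ha0 hI n s (by rw [← hs2]; exact f.2 _)
    refine ⟨mon I n s hs, ?_⟩
    apply Subtype.ext
    change monomial n (w.1.coeff n) = C a * monomial n s
    rw [C_mul_monomial, hs1]
  · rintro w ⟨f, g, hfg⟩
    have hf' : (C b - monomial 1 a) * w.1 = C a * f.1 + monomial 1 b * g.1 :=
      congrArg Subtype.val hfg
    have hmem : w ∈ Ideal.span {algebraMap A (reesAlgebra I) a, mon I 1 b hb1} := by
      rw [sum_hcomp I w]
      refine Ideal.sum_mem _ fun n _ => ?_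
      rw [Ideal.mem_span_pair]
      rcases Nat.eq_zero_or_pos n with rfl | hn
      · have hc := congrArg (fun p : A[X] => p.coeff 0) hf'
        simp only [mul_coeff_zero, coeff_sub, coeff_C_zero, coeff_add, coeff_monomial] at hc
        norm_num at hc
        obtain ⟨s, hs1, hs2⟩ := ab_reg hdim I N hN a b ha0 hI (w.1.coeff 0) (f.1.coeff 0) hc.symm
        refine ⟨algebraMap A _ s, 0, ?_⟩
        apply Subtype.ext
        change C s * C a + 0 * monomial 1 b = monomial 0 (w.1.coeff 0)
        rw [hs1, zero_mul, add_zero, ← C_mul, mul_comm]; rfl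
      · obtain ⟨n, rfl⟩ : ∃ k, n = k + 1 := ⟨n - 1, by omega⟩
        have hc := congrArg (fun p : A[X] => p.coeff (n + 1 + 1)) hf'
        simp only [sub_mul, coeff_sub, coeff_add, coeff_C_mul, coeff_monomial_mul] at hc
        obtain ⟨s, hs1, hs2⟩ := ab_reg hdim I N hN a b ha0 hI
          (w.1.coeff (n + 1 + 1) - g.1.coeff (n + 1)) (w.1.coeff (n + 1) + f.1.coeff (n + 1 + 1))
          (by linear_combination -hc)
        have hf2 := f.2 (n + 1 + 1)
        have hs : s ∈ I ^ n := b_colon hdim I N hN a b ha ha0 hI n s (by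
          rw [← hs2]; exact add_mem (w.2 _) (Ideal.pow_le_pow_right (Nat.le_succ _) hf2))
        obtain ⟨u, hu, v, hv, e⟩ := (mem_span_pair_mul' _ _ _ _).1
          (I_red I a b hI (n + 1) (by omega) hf2)
        refine ⟨mon I (n + 1) (-u) (neg_mem hu), mon I n (s - v)
          (sub_mem hs (Ideal.pow_le_pow_right (Nat.le_succ _) hv)), ?_⟩
        apply Subtype.ext
        change monomial (n + 1) (-u) * C a + monomial n (s - v) * monomial 1 b =
          monomial (n + 1) (w.1.coeff (n + 1))
        rw [monomial_mul_C, monomial_mul_monomial, ← map_add]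
        congr 1
        linear_combination -hs2 + e
    obtain ⟨s, t, h⟩ := Ideal.mem_span_pair.1 hmem
    exact ⟨s, t, by rw [← h]; ring⟩
end

/-- the irrelevant case -/
lemma case_M {A : Type*} [CommRing A] [IsDomain A] [IsNoetherianRing A] [IsLocalRing A]
    [IsIntegrallyClosed A] (hdim : ringKrullDim A = 2) (I : Ideal A) (N : ℕ)
    (hN : IsLocalRing.maximalIdeal A ^ N ≤ I) (hIt : I ≠ ⊤) (a b : A) (ha : a ∈ I) (hb : b ∈ I)
    (ha0 : a ≠ 0) (hb0 : b ≠ 0) (hI : I ^ 2 ≤ Ideal.span {a, b} * I) (ha1 : a ∈ I ^ 1)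
    (hb1 : b ∈ I ^ 1) (P : Ideal (reesAlgebra I)) [hP : P.IsPrime] (hh : 3 ≤ P.height)
    (h1 : mon I 1 a ha1 ∈ P) (h2 : mon I 1 b hb1 ∈ P) :
    ∃ x ∈ IsLocalRing.maximalIdeal (Localization.AtPrime P),
      ∃ y ∈ IsLocalRing.maximalIdeal (Localization.AtPrime P),
      ∃ z ∈ IsLocalRing.maximalIdeal (Localization.AtPrime P),
        IsWeaklyRegular (Localization.AtPrime P) [x, y, z] := by
  set m := IsLocalRing.maximalIdeal A with hm
  have hIb : I ≠ ⊥ := fun h => ha0 (by rw [h] at ha; simpa using ha)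
  have hNP := Npos_le_of_red I a b ha1 hb1 1 (by simpa using hI) P h1 h2
  have hPM : P ≤ m.comap (ev0 I) := by
    intro f hf
    rw [Ideal.mem_comap, ev0_apply, hm, IsLocalRing.mem_maximalIdeal, mem_nonunits_iff]
    intro hu
    have e : f - algebraMap A (reesAlgebra I) (f.1.coeff 0) ∈ P := by
      refine M_le I ⊥ P (by simp) hNP ?_
      rw [Ideal.mem_comap, ev0_apply]
      change (f.1 - C (f.1.coeff 0)).coeff 0 ∈ _
      simp
    have : algebraMap A (reesAlgebra I) (f.1.coeff 0) ∈ P := by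
      have := P.sub_mem hf e
      simpa using this
    exact hP.ne_top (Ideal.eq_top_of_isUnit_mem _ this (hu.map _))
  have hmax := max_of_height 3 (rees_dim_le 2 hdim.le I hIb) P hh
  have hMp : (m.comap (ev0 I)).IsPrime := Ideal.IsPrime.comap _
  have hPe : P = m.comap (ev0 I) := hmax.eq_of_le hMp.ne_top hPM
  have hIm : I ≤ m := IsLocalRing.le_maximalIdeal hIt
  have mC : ∀ x ∈ I, algebraMap A (reesAlgebra I) x ∈ P := by
    intro x hx
    rw [hPe, Ideal.mem_comap, ev0_apply]
    change (C x).coeff 0 ∈ m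
    simpa using hIm hx
  have hw := wreg hdim I N hN a b ha hb ha0 hI ha1 hb1
  have := (IsWeaklyRegular.isRegular_of_isLocalization_of_mem (Localization.AtPrime P) P hw (by
    intro r hr
    simp only [List.mem_cons, List.not_mem_nil, or_false] at hr
    rcases hr with rfl | rfl | rfl
    · exact mC a ha
    · exact h2
    · exact P.sub_mem (mC b hb) h1)).toIsWeaklyRegular
  refine ⟨_, ?_, _, ?_, _, ?_, this⟩
  · exact (IsLocalization.AtPrime.to_map_mem_maximal_iff _ P _).2 (mC a ha)
  · exact (IsLocalization.AtPrime.to_map_mem_maximal_iff _ P _).2 h2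
  · exact (IsLocalization.AtPrime.to_map_mem_maximal_iff _ P _).2 (P.sub_mem (mC b hb) h1)


lemma wr3_equiv {L L' : Type*} [CommRing L] [CommRing L'] (e : L ≃+* L') (x y z : L')
    (h : IsWeaklyRegular L' [x, y, z]) : IsWeaklyRegular L [e.symm x, e.symm y, e.symm z] := by
  rw [wr3] at h ⊢
  obtain ⟨h1, h2, h3⟩ := h
  refine ⟨fun w hw => ?_, ?_, ?_⟩
  · have := h1 (e w) (by
      have := congrArg e hw
      simpa using this)
    simpa using this
  · rintro w ⟨s, hs⟩
    obtain ⟨t, ht⟩ := h2 (e w) ⟨e s, by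
      have := congrArg e hs
      simpa using this⟩
    refine ⟨e.symm t, e.injective ?_⟩
    simpa using ht
  · rintro w ⟨s, t, hs⟩
    obtain ⟨s', t', h'⟩ := h3 (e w) ⟨e s, e t, by
      have := congrArg e hs
      simpa using this⟩
    refine ⟨e.symm s', e.symm t', e.injective ?_⟩
    simpa using h'

section transfer

/-- the extended prime -/
def extP {R S : Type*} [CommRing R] [CommRing S] (ψ : R →+* S) (τ : R) (hs : ∀ s : S, ∃ (N : ℕ) (r : R), ψ r = ψ τ ^ N * s)
    (P : Ideal R) : Ideal S where
  carrier := {s | ∃ (N : ℕ) (r : R), r ∈ P ∧ ψ r = ψ τ ^ N * s}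
  zero_mem' := ⟨0, 0, P.zero_mem, by simp⟩
  add_mem' := by
    rintro x y ⟨N, r, hr, e⟩ ⟨N', r', hr', e'⟩
    refine ⟨N + N', τ ^ N' * r + τ ^ N * r', P.add_mem (P.mul_mem_left _ hr) (P.mul_mem_left _ hr'), ?_⟩
    simp only [map_add, map_mul, map_pow, e, e']
    ring
  smul_mem' := by
    rintro c x ⟨N, r, hr, e⟩
    obtain ⟨N', r', e'⟩ := hs c
    refine ⟨N' + N, r' * r, P.mul_mem_left _ hr, ?_⟩
    simp only [map_mul, e, e', smul_eq_mul]
    ring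


lemma mem_extP_iff {R S : Type*} [CommRing R] [CommRing S] [IsDomain S] (ψ : R →+* S)
    (hinj : Function.Injective ψ) (τ : R) (hs : ∀ s : S, ∃ (N : ℕ) (r : R), ψ r = ψ τ ^ N * s)
    (P : Ideal R) [hP : P.IsPrime] (hτ : τ ∉ P) (N : ℕ) (r : R) (s : S) (h : ψ r = ψ τ ^ N * s) : s ∈ extP ψ τ hs P ↔ r ∈ P := by
  constructor
  · rintro ⟨N', r', hr', e⟩
    have : τ ^ N' * r = τ ^ N * r' := by
      apply hinj
      simp only [map_mul, map_pow, h, e]; ring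
    have h2 : τ ^ N' * r ∈ P := by rw [this]; exact P.mul_mem_left _ hr'
    exact (hP.mem_or_mem h2).resolve_left fun h3 => hτ (hP.mem_of_pow_mem _ h3)
  · intro hr
    exact ⟨N, r, hr, h⟩

lemma extP_prime {R S : Type*} [CommRing R] [CommRing S] [IsDomain S] (ψ : R →+* S)
    (hinj : Function.Injective ψ) (τ : R) (hs : ∀ s : S, ∃ (N : ℕ) (r : R), ψ r = ψ τ ^ N * s)
    (P : Ideal R) [hP : P.IsPrime] (hτ : τ ∉ P) : (extP ψ τ hs P).IsPrime := by
  refine ⟨?_, ?_⟩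
  · rw [Ideal.ne_top_iff_one, mem_extP_iff ψ hinj τ hs P hτ 0 1 1 (by simp)]
    exact fun h => hP.ne_top ((Ideal.eq_top_iff_one _).2 h)
  · intro x y hxy
    obtain ⟨N, r, e⟩ := hs x
    obtain ⟨N', r', e'⟩ := hs y
    rw [mem_extP_iff ψ hinj τ hs P hτ N r x e, mem_extP_iff ψ hinj τ hs P hτ N' r' y e']
    rw [mem_extP_iff ψ hinj τ hs P hτ (N + N') (r * r') (x * y)
      (by rw [map_mul, e, e']; ring)] at hxy
    exact hP.mem_or_mem hxy

lemma locEquiv {R S : Type*} [CommRing R] [CommRing S] [IsDomain S] (ψ : R →+* S)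
    (hinj : Function.Injective ψ) (τ : R) (hs : ∀ s : S, ∃ (N : ℕ) (r : R), ψ r = ψ τ ^ N * s)
    (P : Ideal R) [hP : P.IsPrime] (hτ : τ ∉ P) {L L' : Type*} [CommRing L] [CommRing L'] [Algebra R L] [Algebra S L']
    [IsLocalization.AtPrime L P] (P' : Ideal S) [P'.IsPrime] (hP' : P' = extP ψ τ hs P)
    [IsLocalization.AtPrime L' P'] : Nonempty (L ≃+* L') := by
  letI : Algebra R L' := ((algebraMap S L').comp ψ).toAlgebra
  have hal : ∀ r, algebraMap R L' r = algebraMap S L' (ψ r) := fun r => rfl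
  have hSinj : Function.Injective (algebraMap S L') :=
    IsLocalization.injective L' P'.primeCompl_le_nonZeroDivisors
  have hmem : ∀ r, ψ r ∈ P' ↔ r ∈ P := fun r => by
    rw [hP']; exact mem_extP_iff ψ hinj τ hs P hτ 0 r (ψ r) (by simp)
  have : IsLocalization P.primeCompl L' := by
    rw [isLocalization_iff]
    refine ⟨?_, ?_, ?_⟩
    · rintro ⟨y, hy⟩
      rw [hal]
      exact IsLocalization.map_units L' (⟨ψ y, fun h => hy ((hmem y).1 h)⟩ : P'.primeCompl)
    · intro z
      obtain ⟨⟨s, s', hs'⟩, hz⟩ := IsLocalization.surj P'.primeCompl z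
      obtain ⟨N, f, e⟩ := hs s
      obtain ⟨N', g, e'⟩ := hs s'
      have hg : g ∉ P := by
        intro hg
        apply hs'
        rw [SetLike.mem_coe, hP', mem_extP_iff ψ hinj τ hs P hτ N' g s' e']
        exact hg
      refine ⟨⟨τ ^ N' * f, ⟨τ ^ N * g, fun h => ?_⟩⟩, ?_⟩
      · rcases hP.mem_or_mem h with h | h
        · exact hτ (hP.mem_of_pow_mem _ h)
        · exact hg h
      · simp only [hal, map_mul, map_pow, e, e'] at hz ⊢
        linear_combination (algebraMap S L' (ψ τ)) ^ N * (algebraMap S L' (ψ τ)) ^ N' * hz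
    · intro x y hxy
      exact ⟨1, by rw [hinj (hSinj hxy)]⟩
  exact ⟨(IsLocalization.algEquiv P.primeCompl L L').toRingEquiv⟩


lemma transfer {R S : Type*} [CommRing R] [CommRing S] [IsDomain S] (ψ : R →+* S)
    (hinj : Function.Injective ψ) (τ : R) (hs : ∀ s : S, ∃ (N : ℕ) (r : R), ψ r = ψ τ ^ N * s)
    (P : Ideal R) [hP : P.IsPrime] (hτ : τ ∉ P) (hh : 3 ≤ P.height)
    (hS : ∀ (P' : Ideal S) [P'.IsPrime], 3 ≤ P'.height →
      ∃ x ∈ P', ∃ y ∈ P', ∃ z ∈ P', IsWeaklyRegular S [x, y, z]) :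
    ∃ x ∈ IsLocalRing.maximalIdeal (Localization.AtPrime P),
      ∃ y ∈ IsLocalRing.maximalIdeal (Localization.AtPrime P),
      ∃ z ∈ IsLocalRing.maximalIdeal (Localization.AtPrime P),
        IsWeaklyRegular (Localization.AtPrime P) [x, y, z] := by
  have iP' := extP_prime ψ hinj τ hs P hτ
  obtain ⟨e⟩ := locEquiv ψ hinj τ hs P hτ (L := Localization.AtPrime P)
    (L' := Localization.AtPrime (extP ψ τ hs P)) (extP ψ τ hs P) rfl
  have hd := ringKrullDim_eq_of_ringEquiv e
  rw [IsLocalization.AtPrime.ringKrullDim_eq_height P,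
    IsLocalization.AtPrime.ringKrullDim_eq_height (extP ψ τ hs P)] at hd
  rw [WithBot.coe_inj.1 hd] at hh
  obtain ⟨x, hx, y, hy, z, hz, hw⟩ := hS _ hh
  have hreg := (IsWeaklyRegular.isRegular_of_isLocalization_of_mem
    (Localization.AtPrime (extP ψ τ hs P)) (extP ψ τ hs P) hw (by
    intro r hr
    simp only [List.mem_cons, List.not_mem_nil, or_false] at hr
    rcases hr with rfl | rfl | rfl <;> assumption)).toIsWeaklyRegular
  have hmm : ∀ t ∈ extP ψ τ hs P, e.symm (algebraMap S _ t) ∈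
      IsLocalRing.maximalIdeal (Localization.AtPrime P) := by
    intro t ht
    have h1 := (IsLocalization.AtPrime.to_map_mem_maximal_iff
      (Localization.AtPrime (extP ψ τ hs P)) (extP ψ τ hs P) t).2 ht
    rw [IsLocalRing.mem_maximalIdeal, mem_nonunits_iff] at h1 ⊢
    intro hu
    apply h1
    have := hu.map e
    simpa using this
  exact ⟨_, hmm x hx, _, hmm y hy, _, hmm z hz, wr3_equiv e _ _ _ hreg⟩

end transfer


/-- evaluation of the Rees algebra at `1/q`. -/
noncomputable def kap {A : Type*} [CommRing A] [IsDomain A] (I : Ideal A) (q : A) :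
    reesAlgebra I →+* FractionRing A :=
  (eval₂RingHom (algebraMap A (FractionRing A)) (algebraMap A (FractionRing A) q)⁻¹).comp
    ((reesAlgebra I).val : reesAlgebra I →+* A[X])

lemma kap_apply {A : Type*} [CommRing A] [IsDomain A] (I : Ideal A) (q : A) (f : reesAlgebra I) :
    kap I q f = eval₂ (algebraMap A (FractionRing A)) (algebraMap A (FractionRing A) q)⁻¹ f.1 := rfl

lemma kap_mon {A : Type*} [CommRing A] [IsDomain A] (I : Ideal A) (q : A) (i : ℕ) (g : A)
    (hg : g ∈ I ^ i) : kap I q (mon I i g hg) =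
      algebraMap A (FractionRing A) g * (algebraMap A (FractionRing A) q)⁻¹ ^ i := by
  rw [kap_apply]
  exact eval₂_monomial _ _

lemma kap_clear {A : Type*} [CommRing A] [IsDomain A] (I : Ideal A) (q : A) (hq : q ∈ I)
    (hq0 : q ≠ 0) (f : reesAlgebra I) (d : ℕ) (hd : f.1.natDegree ≤ d) :
    ∃ y ∈ I ^ d, kap I q f * algebraMap A (FractionRing A) q ^ d = algebraMap A _ y := by
  have hQ : algebraMap A (FractionRing A) q ≠ 0 := by simpa using hq0
  refine ⟨∑ i ∈ Finset.range (f.1.natDegree + 1), f.1.coeff i * q ^ (d - i), ?_, ?_⟩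
  · refine Ideal.sum_mem _ fun i hi => ?_
    rw [Finset.mem_range] at hi
    have := Ideal.mul_mem_mul (f.2 i) (Ideal.pow_mem_pow hq (d - i))
    rwa [← pow_add, Nat.add_sub_cancel' (by omega)] at this
  · rw [kap_apply, eval₂_eq_sum_range, Finset.sum_mul, map_sum]
    refine Finset.sum_congr rfl fun i hi => ?_
    rw [Finset.mem_range] at hi
    rw [map_mul, map_pow, mul_assoc]
    congr 1
    rw [inv_pow, ← div_eq_inv_mul, div_eq_iff (pow_ne_zero _ hQ), ← pow_add]
    congr 1; omega

lemma kap_normal {A : Type*} [CommRing A] [IsDomain A] [IsIntegrallyClosed A] (I : Ideal A) (q : A)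
    (hq : q ∈ I) (hq0 : q ≠ 0) (hcl : ∀ n, IdealIsIntegrallyClosed (I ^ n)) :
    IsIntegrallyClosed (kap I q).range := by
  classical
  set F := FractionRing A
  have hQ : algebraMap A F q ≠ 0 := by simpa using hq0
  have hA : ∀ x : A, algebraMap A F x ∈ (kap I q).range := fun x =>
    ⟨mon I 0 x (by simp), by rw [kap_mon]; simp [F]⟩
  have hfs : FaithfulSMul (kap I q).range F := by
    rw [faithfulSMul_iff_algebraMap_injective]
    exact Subtype.val_injective
  have : IsFractionRing (kap I q).range F := by
    refine IsFractionRing.of_field _ _ fun z => ?_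
    obtain ⟨x, y, hy, rfl⟩ := IsFractionRing.div_surjective (A := A) z
    exact ⟨⟨_, hA x⟩, ⟨_, hA y⟩, rfl⟩
  rw [isIntegrallyClosed_iff F]
  rintro z ⟨p, hp, hpz⟩
  have hcl0 : ∀ β : (kap I q).range, ∃ d0 : ℕ, ∀ d, d0 ≤ d → ∃ y ∈ I ^ d,
      (β : F) * algebraMap A F q ^ d = algebraMap A F y := by
    rintro ⟨_, f, rfl⟩
    exact ⟨_, fun d hd => kap_clear I q hq hq0 f d hd⟩
  choose D hD using hcl0
  set m := p.natDegree with hm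
  set d := ∑ i ∈ Finset.range m, D (p.coeff i) with hd
  have hc : ∀ i : ℕ, ∃ y : A, i < m → y ∈ I ^ d ∧ (p.coeff i : F) * algebraMap A F q ^ d = algebraMap A F y := by
    intro i
    by_cases hi : i < m
    · obtain ⟨y, h1, h2⟩ := hD (p.coeff i) d
        (Finset.single_le_sum (f := fun i => D (p.coeff i)) (fun _ _ => Nat.zero_le _)
          (Finset.mem_range.2 hi))
      exact ⟨y, fun _ => ⟨h1, h2⟩⟩
    · exact ⟨0, fun h => absurd h hi⟩
  choose c hc using hc
  have hpz' : z ^ m + ∑ i ∈ Finset.range m, (p.coeff i : F) * z ^ i = 0 := by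
    rw [eval₂_eq_sum_range, Finset.sum_range_succ, hp.coeff_natDegree, map_one, one_mul,
      add_comm] at hpz
    exact hpz
  have hsum : ∑ i ∈ Finset.Icc 1 m, (p.coeff (m - i) : F) * z ^ (m - i)
      = ∑ i ∈ Finset.range m, (p.coeff i : F) * z ^ i := by
    refine Finset.sum_nbij' (fun i => m - i) (fun i => m - i) ?_ ?_ ?_ ?_ ?_
    · intro i hi; simp at hi ⊢; omega
    · intro i hi; simp at hi ⊢; omega
    · intro i hi; simp at hi ⊢; omega
    · intro i hi; simp at hi ⊢; omega
    · intro i hi; rfl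
  have hmpos : 0 < m := by
    rcases Nat.eq_zero_or_pos m with h | h
    · rw [h] at hpz'
      simp at hpz'
    · exact h
  set w := algebraMap A F q ^ d * z with hw
  have heq : w ^ m + ∑ i ∈ Finset.Icc 1 m, algebraMap A F (c (m - i) * q ^ (d * (i - 1))) * w ^ (m - i)
      = 0 := by
    have e : ∀ i ∈ Finset.Icc 1 m, algebraMap A F (c (m - i) * q ^ (d * (i - 1))) * w ^ (m - i) =
        algebraMap A F q ^ (d * m) * ((p.coeff (m - i) : F) * z ^ (m - i)) := by
      intro i hi
      rw [Finset.mem_Icc] at hi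
      rw [map_mul, ← (hc (m - i) (by omega)).2, map_pow, hw, mul_pow, ← pow_mul]
      have e2 : d * m = d + d * (i - 1) + d * (m - i) := by
        have : m = 1 + (i - 1) + (m - i) := by omega
        conv_lhs => rw [this]
        ring
      rw [e2, pow_add, pow_add]; ring
    rw [Finset.sum_congr rfl e, ← Finset.mul_sum, hsum, hw, mul_pow, ← pow_mul, ← mul_add, hpz',
      mul_zero]
  have hwint : IsIntegral A w := integral_of_eq w m _ heq
  obtain ⟨x, hx⟩ := IsIntegrallyClosed.isIntegral_iff.1 hwint
  have hxI : x ∈ I ^ d := by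
    apply hcl d
    refine ⟨m, hmpos, fun i => c (m - i) * q ^ (d * (i - 1)), ?_, ?_⟩
    · intro i h1 h2
      have h3 := Ideal.mul_mem_mul (hc (m - i) (by omega)).1 (Ideal.pow_mem_pow hq (d * (i - 1)))
      rw [← pow_mul]
      rwa [← pow_add, show d + d * (i - 1) = d * i by
        obtain ⟨j, rfl⟩ : ∃ j, i = j + 1 := ⟨i - 1, by omega⟩
        simp; ring] at h3
    · apply IsFractionRing.injective A F
      rw [map_zero, ← heq, ← hx]
      simp only [map_add, map_sum, map_mul, map_pow]
  refine ⟨⟨z, mon I d x hxI, ?_⟩, rfl⟩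
  rw [kap_mon]
  change algebraMap A F x * (algebraMap A F q)⁻¹ ^ d = z
  rw [hx, hw, inv_pow, mul_right_comm, mul_inv_cancel₀ (pow_ne_zero _ hQ), one_mul]

lemma lift_through {R S T : Type*} [CommRing R] [CommRing S] [CommRing T] (g : R →+* T)
    (j : S →+* T) (hj : Function.Injective j) (h : ∀ r, ∃ s, j s = g r) :
    ∃ ψ : R →+* S, ∀ r, j (ψ r) = g r := by
  choose s hs using h
  exact ⟨{ toFun := s
           map_one' := hj (by rw [hs, map_one, map_one])
           map_zero' := hj (by rw [hs, map_zero, map_zero])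
           map_add' := fun x y => hj (by rw [hs, map_add, map_add, hs, hs])
           map_mul' := fun x y => hj (by rw [hs, map_mul, map_mul, hs, hs]) }, hs⟩

lemma case_q {A : Type*} [CommRing A] [IsDomain A] [IsNoetherianRing A] [IsIntegrallyClosed A]
    (hdim : ringKrullDim A ≤ (2 : ℕ)) (I : Ideal A) (q : A)
    (hq : q ∈ I) (hq1 : q ∈ I ^ 1) (hq0 : q ≠ 0) (hcl : ∀ n, IdealIsIntegrallyClosed (I ^ n))
    (P : Ideal (reesAlgebra I)) [hP : P.IsPrime] (hh : 3 ≤ P.height) (hτ : mon I 1 q hq1 ∉ P) :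
    ∃ x ∈ IsLocalRing.maximalIdeal (Localization.AtPrime P),
      ∃ y ∈ IsLocalRing.maximalIdeal (Localization.AtPrime P),
      ∃ z ∈ IsLocalRing.maximalIdeal (Localization.AtPrime P),
        IsWeaklyRegular (Localization.AtPrime P) [x, y, z] := by
  classical
  set F := FractionRing A
  have hQ : algebraMap A F q ≠ 0 := by simpa using hq0
  have hIb : I ≠ ⊥ := fun h => hq0 (by rw [h] at hq; simpa using hq)
  have hN : IsNoetherianRing (kap I q).range := isNoetherianRing_range _
  have hn := kap_normal I q hq hq0 hcl
  have hBd : ringKrullDim (kap I q).range ≤ (2 : ℕ) := by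
    refine dim_quot (kap I q).rangeRestrict (kap I q).rangeRestrict_surjective
      (mon I 1 q hq1 - 1) ?_ ?_ 2 (rees_dim_le 2 hdim I hIb)
    · intro h
      have := congrArg (fun f : reesAlgebra I => f.1.coeff 0) h
      simp [mon, coeff_monomial] at this
    · apply Subtype.ext
      change kap I q _ = 0
      rw [map_sub, map_one, kap_mon, pow_one, mul_inv_cancel₀ hQ, sub_self]
  let g : reesAlgebra I →+* F[X] :=
    (compRingHom (C (algebraMap A F q)⁻¹ * X)).comp ((mapRingHom (algebraMap A F)).comp
      ((reesAlgebra I).val : reesAlgebra I →+* A[X]))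
  have hgc : ∀ f n, (g f).coeff n = algebraMap A F (f.1.coeff n) * (algebraMap A F q)⁻¹ ^ n := by
    intro f n
    change ((f.1.map (algebraMap A F)).comp (C (algebraMap A F q)⁻¹ * X)).coeff n = _
    rw [comp_C_mul_X_coeff, coeff_map]
  have hjinj : Function.Injective (mapRingHom (kap I q).range.subtype) :=
    map_injective _ Subtype.val_injective
  obtain ⟨ψ, hψ⟩ := lift_through g (mapRingHom (kap I q).range.subtype) hjinj (by
    intro f
    have : (g f) ∈ lifts (kap I q).range.subtype := by
      rw [lifts_iff_coeff_lifts]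
      intro n
      refine ⟨⟨kap I q (hcomp I n f), _, rfl⟩, ?_⟩
      rw [hgc, hcomp]
      exact kap_mon _ _ _ _ _
    obtain ⟨s, hs⟩ := (mem_lifts _).1 this
    exact ⟨s, hs⟩)
  have hψc : ∀ f n, (((ψ f).coeff n : (kap I q).range) : F) =
      algebraMap A F (f.1.coeff n) * (algebraMap A F q)⁻¹ ^ n := by
    intro f n
    rw [← hgc, ← hψ, coe_mapRingHom, coeff_map]; rfl
  have hψinj : Function.Injective ψ := by
    intro f f' h
    apply Subtype.ext
    ext n
    have h1 := hψc f n
    rw [h, hψc] at h1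
    exact IsFractionRing.injective A F (mul_right_cancel₀ (pow_ne_zero _ (inv_ne_zero hQ)) h1).symm
  have hmonψ : ∀ i y hy, ψ (mon I i y hy) = monomial i ((kap I q).rangeRestrict (mon I i y hy)) := by
    intro i y hy
    ext n
    rw [hψc, coeff_monomial]
    change algebraMap A F ((monomial i y).coeff n) * _ = _
    rw [coeff_monomial]
    split_ifs with h
    · subst h
      exact (kap_mon _ _ _ _ _).symm
    · simp
  have hτX : ψ (mon I 1 q hq1) = X := by
    rw [hmonψ, ← monomial_one_one_eq_X]
    congr 1
    apply Subtype.ext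
    change kap I q _ = 1
    rw [kap_mon, pow_one, mul_inv_cancel₀ hQ]
  refine transfer ψ hψinj (mon I 1 q hq1) ?_ P hτ hh (fun P' _ h => poly_case hBd P' h)
  have hadd : ∀ s s' : (kap I q).range[X],
      (∃ (N : ℕ) (r : reesAlgebra I), ψ r = ψ (mon I 1 q hq1) ^ N * s) →
      (∃ (N : ℕ) (r : reesAlgebra I), ψ r = ψ (mon I 1 q hq1) ^ N * s') →
      (∃ (N : ℕ) (r : reesAlgebra I), ψ r = ψ (mon I 1 q hq1) ^ N * (s + s')) := by
    rintro s s' ⟨N, r, e⟩ ⟨N', r', e'⟩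
    refine ⟨N + N', mon I 1 q hq1 ^ N' * r + mon I 1 q hq1 ^ N * r', ?_⟩
    simp only [map_add, map_mul, map_pow, e, e']
    ring
  intro s
  induction s using Polynomial.induction_on' with
  | add s s' h h' => exact hadd s s' h h'
  | monomial n β =>
    obtain ⟨β, f, rfl⟩ := β
    have e : (⟨kap I q f, ⟨f, rfl⟩⟩ : (kap I q).range) = (kap I q).rangeRestrict f := rfl
    rw [e, sum_hcomp I f, map_sum, map_sum]
    refine Finset.sum_induction _ (fun s => ∃ (N : ℕ) (r : reesAlgebra I), ψ r = ψ (mon I 1 q hq1) ^ N * s) hadd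
      ⟨0, 0, by simp⟩ ?_
    intro i _
    refine ⟨i, hcomp I i f * mon I 1 q hq1 ^ n, ?_⟩
    rw [map_mul, map_pow, hτX, hcomp, hmonψ, X_pow_eq_monomial, X_pow_eq_monomial,
      monomial_mul_monomial, monomial_mul_monomial, mul_one, one_mul]

lemma case_top {A : Type*} [CommRing A] [IsDomain A] [IsNoetherianRing A] [IsIntegrallyClosed A]
    (hdim : ringKrullDim A ≤ (2 : ℕ)) (I : Ideal A) (hI : I = ⊤)
    (P : Ideal (reesAlgebra I)) [hP : P.IsPrime] (hh : 3 ≤ P.height) :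
    ∃ x ∈ IsLocalRing.maximalIdeal (Localization.AtPrime P),
      ∃ y ∈ IsLocalRing.maximalIdeal (Localization.AtPrime P),
      ∃ z ∈ IsLocalRing.maximalIdeal (Localization.AtPrime P),
        IsWeaklyRegular (Localization.AtPrime P) [x, y, z] := by
  refine transfer ((reesAlgebra I).val : reesAlgebra I →+* A[X]) Subtype.val_injective 1 ?_ P
    (fun h => hP.ne_top ((Ideal.eq_top_iff_one _).2 h)) hh (fun P' _ h => poly_case hdim P' h)
  intro s
  refine ⟨0, ⟨s, fun n => ?_⟩, ?_⟩
  · rw [hI, ← Ideal.one_eq_top, one_pow, Ideal.one_eq_top]; trivial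
  · rw [pow_zero, one_mul]; rfl

lemma main_half (k : Type*) [Field k] [Infinite k] {A : Type*} [CommRing A] [IsDomain A]
    [IsNoetherianRing A] [IsLocalRing A] [IsIntegrallyClosed A] [Algebra k A]
    (hdim : ringKrullDim A = 2) (I J : Ideal A) (N N' : ℕ)
    (hI : IsLocalRing.maximalIdeal A ^ N ≤ I) (hJ : IsLocalRing.maximalIdeal A ^ N' ≤ J)
    (hIcl : IdealIsIntegrallyClosed I)
    (hCM : IsCMNormalDomain (reesAlgebra (I * J))) : IsCMNormalDomain (reesAlgebra I) := by
  obtain ⟨hcl, a, ha, b, hb, ha0, hb0, hred⟩ := I_powers k hdim I J N N' hI hJ hIcl hCM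
  have hIb : I ≠ ⊥ := fun h => ha0 (by rw [h] at ha; simpa using ha)
  have hd2 : ringKrullDim A ≤ (2 : ℕ) := by rw [hdim]; rfl
  have hn := rees_intClosed I hIb hcl
  have ha1 : a ∈ I ^ 1 := by rwa [pow_one]
  have hb1 : b ∈ I ^ 1 := by rwa [pow_one]
  refine ⟨cm_of_height3 (rees_dim_le 2 hd2 I hIb) ?_, inferInstance, hn⟩
  intro P _ hh
  by_cases hIt : I = ⊤
  · exact case_top hd2 I hIt P hh
  by_cases h1 : mon I 1 a ha1 ∈ P
  · by_cases h2 : mon I 1 b hb1 ∈ P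
    · exact case_M hdim I N hI hIt a b ha hb ha0 hb0 hred ha1 hb1 P hh h1 h2
    · exact case_q hd2 I b hb hb1 hb0 hcl P hh h2
  · exact case_q hd2 I a ha ha1 ha0 hcl P hh h1


end helpers

/-- If `I` and `J` are integrally closed `𝔪`-primary ideals and the
Rees algebra of `IJ` is a Cohen–Macaulay normal domain, then so are the Rees algebras
of `I` and of `J`. -/
theorem stmt6 (k : Type*) [Field k] [IsAlgClosed k]
    (A : Type*) [CommRing A] [IsDomain A] [IsNoetherianRing A] [IsLocalRing A]
    [Algebra k A] [IsIntegrallyClosed A]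
    (hdim : ringKrullDim A = 2)
    (I : Ideal A) (hIprim : ∃ n : ℕ, IsLocalRing.maximalIdeal A ^ n ≤ I)
    (hIcl : IdealIsIntegrallyClosed I)
    (J : Ideal A) (hJprim : ∃ n : ℕ, IsLocalRing.maximalIdeal A ^ n ≤ J)
    (hJcl : IdealIsIntegrallyClosed J)
    (hIJ : IsCMNormalDomain (reesAlgebra (I * J))) :
    IsCMNormalDomain (reesAlgebra I) ∧ IsCMNormalDomain (reesAlgebra J) := by
  obtain ⟨N, hN⟩ := hIprim
  obtain ⟨N', hN'⟩ := hJprim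
  haveI : Infinite k := IsAlgClosed.instInfinite
  exact ⟨main_half k hdim I J N N' hN hN' hIcl hIJ,
    main_half k hdim J I N' N hN' hN hJcl (by rwa [mul_comm J I])⟩
end

section
/- Let p ≥ 1 be an integer, k an algebraically closed field, B = k[x,y,z]/(x² + y³ + z^{6p+1}), and 𝔪 = (x,y,z)B. Then the extended Rees algebra 𝓡'(𝔪) = B[𝔪t, t⁻¹] ⊆ B[t, t⁻¹] is isomorphic as a k-algebra to k[X,Y,Z,U]/(X² + Y³U + Z^{6p+1}U^{6p−1}), via the map sending X ↦ xt, Y ↦ yt, Z ↦ zt, U ↦ t⁻¹. -/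
open LaurentPolynomial

/-- The extended Rees algebra `B[It, t⁻¹]`: the `B`-subalgebra of the Laurent polynomial
ring `B[t, t⁻¹]` generated by `t⁻¹` and the elements `b·t` with `b ∈ I`. -/
noncomputable def extendedReesAlgebra (B : Type*) [CommRing B] (I : Ideal B) :
    Subalgebra B (LaurentPolynomial B) :=
  Algebra.adjoin B
    ({LaurentPolynomial.T (-1)} ∪
      ((fun b => LaurentPolynomial.C b * LaurentPolynomial.T 1) '' (I : Set B)))

set_option synthInstance.maxHeartbeats 1000000
set_option maxHeartbeats 2000000

namespace Stmt11

variable (p : ℕ) (k : Type*) [Field k]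

/-- The ring `B = k[x,y,z]/(x² + y³ + z^{6p+1})`, with `x = X 0`, `y = X 1`, `z = X 2`. -/
abbrev B : Type _ :=
  MvPolynomial (Fin 3) k ⧸
    (Ideal.span {(MvPolynomial.X 0 : MvPolynomial (Fin 3) k) ^ 2 +
      MvPolynomial.X 1 ^ 3 + MvPolynomial.X 2 ^ (6 * p + 1)})

/-- The images `x, y, z` of the variables in `B`. -/
noncomputable def v (i : Fin 3) : B p k :=
  Ideal.Quotient.mk _ (MvPolynomial.X i)

/-- The map `B → L` given by `(x,y,z) ↦ (X U, Y U, Z U)`. -/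
theorem exists_lift {L : Type*} [CommRing L] (f : MvPolynomial (Fin 4) k →+* L) (hp : 1 ≤ p)
    (hf : f (MvPolynomial.X 0 ^ 2 + MvPolynomial.X 1 ^ 3 * MvPolynomial.X 3 +
        MvPolynomial.X 2 ^ (6 * p + 1) * MvPolynomial.X 3 ^ (6 * p - 1)) = 0) :
    ∃ g : B p k →+* L,
      (∀ a : k, g (algebraMap k (B p k) a) = f (MvPolynomial.C a)) ∧
      g (v p k 0) = f (MvPolynomial.X 0) * f (MvPolynomial.X 3) ∧
      g (v p k 1) = f (MvPolynomial.X 1) * f (MvPolynomial.X 3) ∧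
      g (v p k 2) = f (MvPolynomial.X 2) * f (MvPolynomial.X 3) := by
  refine ⟨Ideal.Quotient.lift _ (MvPolynomial.eval₂Hom (f.comp MvPolynomial.C)
    ![f (MvPolynomial.X 0) * f (MvPolynomial.X 3),
      f (MvPolynomial.X 1) * f (MvPolynomial.X 3),
      f (MvPolynomial.X 2) * f (MvPolynomial.X 3)]) ?_, ?_, ?_, ?_, ?_⟩
  · intro a ha
    obtain ⟨c, rfl⟩ := Ideal.mem_span_singleton'.1 ha
    rw [map_mul]
    convert mul_zero _
    obtain ⟨q, rfl⟩ : ∃ q, p = q + 1 := ⟨p - 1, by omega⟩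
    have e1 : 6 * (q + 1) - 1 = 6 * q + 5 := by omega
    rw [e1] at hf
    simp only [map_add, map_mul, map_pow] at hf
    simp only [map_add, map_pow, MvPolynomial.coe_eval₂Hom, MvPolynomial.eval₂_X]
    simp only [Matrix.cons_val_zero, Matrix.cons_val_one, Matrix.cons_val]
    linear_combination (f (MvPolynomial.X 3)) ^ 2 * hf
  · intro a
    have : algebraMap k (B p k) a = Ideal.Quotient.mk _ (MvPolynomial.C a) := rfl
    rw [this, Ideal.Quotient.lift_mk]
    simp
  all_goals
    rw [v, Ideal.Quotient.lift_mk]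
    simp

theorem ring_aux {R : Type*} [CommRing R] (hp : 1 ≤ p) (x y z t s : R)
    (hB : x ^ 2 + y ^ 3 + z ^ (6 * p + 1) = 0) (hT : t * s = 1) :
    (x * t) ^ 2 + (y * t) ^ 3 * s + (z * t) ^ (6 * p + 1) * s ^ (6 * p - 1) = 0 := by
  obtain ⟨q, hq⟩ : ∃ q, 6 * p = q + 1 := ⟨6 * p - 1, by omega⟩
  rw [hq] at hB ⊢
  have hT2 : t ^ q * s ^ q = 1 := by rw [← mul_pow, hT, one_pow]
  rw [Nat.add_sub_cancel]
  linear_combination t ^ 2 * hB + y ^ 3 * t ^ 2 * hT + z ^ (q + 1 + 1) * t ^ 2 * hT2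

theorem cancel_U (hp : 1 ≤ p) (n : ℕ) : ∀ g : MvPolynomial (Fin 4) k,
    ((MvPolynomial.X 0 : MvPolynomial (Fin 4) k) ^ 2 + MvPolynomial.X 1 ^ 3 * MvPolynomial.X 3 +
        MvPolynomial.X 2 ^ (6 * p + 1) * MvPolynomial.X 3 ^ (6 * p - 1)) ∣
      MvPolynomial.X 3 ^ n * g →
    ((MvPolynomial.X 0 : MvPolynomial (Fin 4) k) ^ 2 + MvPolynomial.X 1 ^ 3 * MvPolynomial.X 3 +
        MvPolynomial.X 2 ^ (6 * p + 1) * MvPolynomial.X 3 ^ (6 * p - 1)) ∣ g := by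
  have hU : Prime (MvPolynomial.X 3 : MvPolynomial (Fin 4) k) := MvPolynomial.X_prime
  have hnd : ¬ (MvPolynomial.X 3 : MvPolynomial (Fin 4) k) ∣
      (MvPolynomial.X 0 ^ 2 + MvPolynomial.X 1 ^ 3 * MvPolynomial.X 3 +
        MvPolynomial.X 2 ^ (6 * p + 1) * MvPolynomial.X 3 ^ (6 * p - 1)) := by
    intro h
    have h2 := map_dvd (MvPolynomial.eval (![1, 0, 0, 0] : Fin 4 → k)) h
    simp at h2
  induction n with
  | zero => intro g h; simpa using h
  | succ n ih =>
    intro g h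
    apply ih
    obtain ⟨c, hc⟩ := h
    have hd : (MvPolynomial.X 3 : MvPolynomial (Fin 4) k) ∣ _ * c :=
      ⟨MvPolynomial.X 3 ^ n * g, by rw [← hc]; ring⟩
    obtain ⟨d, rfl⟩ := (hU.dvd_or_dvd hd).resolve_left hnd
    refine ⟨d, mul_left_cancel₀ hU.ne_zero ?_⟩
    linear_combination hc

/-- For `p ≥ 1` and `k` algebraically closed, the extended Rees
algebra `𝓡'(𝔪) = B[𝔪t, t⁻¹] ⊆ B[t,t⁻¹]` of `𝔪 = (x,y,z) ⊆ B = k[x,y,z]/(x²+y³+z^{6p+1})`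
is isomorphic over `k` to `k[X,Y,Z,U]/(X² + Y³U + Z^{6p+1}U^{6p-1})` via
`X ↦ xt`, `Y ↦ yt`, `Z ↦ zt`, `U ↦ t⁻¹`:  the `k`-algebra map
`k[X,Y,Z,U] → B[t,t⁻¹]` so defined has kernel `(X² + Y³U + Z^{6p+1}U^{6p-1})` and its
image is exactly `𝓡'(𝔪)`. -/
theorem stmt11 (hp : 1 ≤ p) [IsAlgClosed k] :
    RingHom.ker (MvPolynomial.aeval
        (![LaurentPolynomial.C (v p k 0) * LaurentPolynomial.T 1,
           LaurentPolynomial.C (v p k 1) * LaurentPolynomial.T 1,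
           LaurentPolynomial.C (v p k 2) * LaurentPolynomial.T 1,
           LaurentPolynomial.T (-1)] : Fin 4 → LaurentPolynomial (B p k)) :
        MvPolynomial (Fin 4) k →ₐ[k] LaurentPolynomial (B p k)).toRingHom =
      Ideal.span {(MvPolynomial.X 0 : MvPolynomial (Fin 4) k) ^ 2 +
        MvPolynomial.X 1 ^ 3 * MvPolynomial.X 3 +
        MvPolynomial.X 2 ^ (6 * p + 1) * MvPolynomial.X 3 ^ (6 * p - 1)} ∧
    Set.range (MvPolynomial.aeval
        (![LaurentPolynomial.C (v p k 0) * LaurentPolynomial.T 1,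
           LaurentPolynomial.C (v p k 1) * LaurentPolynomial.T 1,
           LaurentPolynomial.C (v p k 2) * LaurentPolynomial.T 1,
           LaurentPolynomial.T (-1)] : Fin 4 → LaurentPolynomial (B p k)) :
        MvPolynomial (Fin 4) k →ₐ[k] LaurentPolynomial (B p k)) =
      (extendedReesAlgebra (B p k) (Ideal.span {v p k 0, v p k 1, v p k 2}) :
        Set (LaurentPolynomial (B p k))) := by
  set φ := (MvPolynomial.aeval
        (![LaurentPolynomial.C (v p k 0) * LaurentPolynomial.T 1,
           LaurentPolynomial.C (v p k 1) * LaurentPolynomial.T 1,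
           LaurentPolynomial.C (v p k 2) * LaurentPolynomial.T 1,
           LaurentPolynomial.T (-1)] : Fin 4 → LaurentPolynomial (B p k)) :
        MvPolynomial (Fin 4) k →ₐ[k] LaurentPolynomial (B p k)) with hφ
  set F := (MvPolynomial.X 0 : MvPolynomial (Fin 4) k) ^ 2 +
        MvPolynomial.X 1 ^ 3 * MvPolynomial.X 3 +
        MvPolynomial.X 2 ^ (6 * p + 1) * MvPolynomial.X 3 ^ (6 * p - 1) with hF
  have h0 : φ (MvPolynomial.X 0) = LaurentPolynomial.C (v p k 0) * LaurentPolynomial.T 1 := by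
    simp [hφ]
  have h1 : φ (MvPolynomial.X 1) = LaurentPolynomial.C (v p k 1) * LaurentPolynomial.T 1 := by
    simp [hφ]
  have h2 : φ (MvPolynomial.X 2) = LaurentPolynomial.C (v p k 2) * LaurentPolynomial.T 1 := by
    simp [hφ]
  have h3 : φ (MvPolynomial.X 3) = LaurentPolynomial.T (-1) := by
    simp [hφ]
  have hC : ∀ a : k, φ (MvPolynomial.C a) =
      LaurentPolynomial.C (algebraMap k (B p k) a) := by
    intro a
    rw [hφ, MvPolynomial.aeval_C]
    rfl
  have hT : (LaurentPolynomial.T 1 : LaurentPolynomial (B p k)) * LaurentPolynomial.T (-1) = 1 := by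
    rw [← LaurentPolynomial.T_add]; simp
  clear_value φ
  constructor
  · apply le_antisymm
    · intro g hg
      have hg' : φ g = 0 := hg
      let A := MvPolynomial (Fin 4) k ⧸ Ideal.span {F}
      let u : A := Ideal.Quotient.mk _ (MvPolynomial.X 3)
      let f : MvPolynomial (Fin 4) k →+* Localization.Away u :=
        (algebraMap A (Localization.Away u)).comp (Ideal.Quotient.mk _)
      have hfF : f F = 0 := by
        have : (Ideal.Quotient.mk (Ideal.span {F})) F = 0 :=
          Ideal.Quotient.eq_zero_iff_mem.2 (Ideal.mem_span_singleton_self F)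
        change algebraMap A (Localization.Away u) (Ideal.Quotient.mk (Ideal.span {F}) F) = 0
        rw [this, map_zero]
      obtain ⟨g₀, e, e0, e1, e2⟩ := exists_lift p k f hp hfF
      have hu : IsUnit (f (MvPolynomial.X 3)) :=
        IsLocalization.Away.algebraMap_isUnit u
      obtain ⟨w, hw⟩ := hu
      let ψ := LaurentPolynomial.eval₂ g₀ w⁻¹
      have hψ : ψ.comp φ.toRingHom = f := by
        apply MvPolynomial.ringHom_ext
        · intro a
          change ψ (φ _) = _
          rw [hC]
          simp [ψ, e]
        · intro i
          change ψ (φ _) = _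
          fin_cases i
          · change ψ (φ (MvPolynomial.X 0)) = f (MvPolynomial.X 0)
            rw [h0]; simp [ψ, e0, ← hw]
          · change ψ (φ (MvPolynomial.X 1)) = f (MvPolynomial.X 1)
            rw [h1]; simp [ψ, e1, ← hw]
          · change ψ (φ (MvPolynomial.X 2)) = f (MvPolynomial.X 2)
            rw [h2]; simp [ψ, e2, ← hw]
          · change ψ (φ (MvPolynomial.X 3)) = f (MvPolynomial.X 3)
            rw [h3]; simp [ψ, ← hw]
      have hfg : f g = 0 := by
        rw [← hψ]
        change ψ (φ g) = 0
        rw [hg', map_zero]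
      have hfg' : algebraMap A (Localization.Away u) (Ideal.Quotient.mk _ g) = 0 := hfg
      obtain ⟨⟨_, n, rfl⟩, hm⟩ :=
        (IsLocalization.map_eq_zero_iff (Submonoid.powers u) (Localization.Away u) _).1 hfg'
      have hm' : Ideal.Quotient.mk (Ideal.span {F}) (MvPolynomial.X 3 ^ n * g) = 0 := by
        rw [map_mul, map_pow]; exact hm
      rw [Ideal.Quotient.eq_zero_iff_mem, Ideal.mem_span_singleton] at hm'
      exact Ideal.mem_span_singleton.2 (cancel_U p k hp n g hm')
    · rw [Ideal.span_singleton_le_iff_mem]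
      change φ F = 0
      have hB : v p k 0 ^ 2 + v p k 1 ^ 3 + v p k 2 ^ (6 * p + 1) = 0 :=
        Ideal.Quotient.eq_zero_iff_mem.2 (Ideal.mem_span_singleton_self _)
      have hB' := congrArg (LaurentPolynomial.C : B p k →+* LaurentPolynomial (B p k)) hB
      simp only [map_add, map_pow, map_zero] at hB'
      rw [hF]
      simp only [map_add, map_mul, map_pow, h0, h1, h2, h3]
      exact ring_aux (R := LaurentPolynomial (B p k)) p hp _ _ _ _ _ hB' hT
  · have hCb : ∀ b : B p k, LaurentPolynomial.C b ∈ φ.range := by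
      intro b
      obtain ⟨q, rfl⟩ := Ideal.Quotient.mk_surjective b
      induction q using MvPolynomial.induction_on with
      | C a => exact ⟨MvPolynomial.C a, hC a⟩
      | add a b ha hb => rw [map_add, map_add]; exact add_mem ha hb
      | mul_X a i ha =>
        rw [map_mul, map_mul]
        refine mul_mem ha ?_
        change LaurentPolynomial.C (v p k i) ∈ φ.range
        have hv : ∀ c : LaurentPolynomial (B p k), c * LaurentPolynomial.T 1 ∈ φ.range →
            c ∈ φ.range := by
          intro c hc
          have := mul_mem hc (⟨_, h3⟩ : LaurentPolynomial.T (-1) ∈ φ.range)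
          rwa [mul_assoc, hT, mul_one] at this
        apply hv
        fin_cases i
        · exact ⟨_, h0⟩
        · exact ⟨_, h1⟩
        · exact ⟨_, h2⟩
    have hsub : ∀ r : LaurentPolynomial (B p k),
        r ∈ extendedReesAlgebra (B p k) (Ideal.span {v p k 0, v p k 1, v p k 2}) →
        r ∈ φ.range := by
      intro r hr
      unfold extendedReesAlgebra at hr
      induction hr using Algebra.adjoin_induction with
      | mem x hx =>
        rcases hx with hx | ⟨b, hb, rfl⟩
        · rw [Set.mem_singleton_iff.1 hx]; exact ⟨_, h3⟩
        · change LaurentPolynomial.C b * LaurentPolynomial.T 1 ∈ φ.range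
          induction hb using Submodule.span_induction with
          | mem x hx =>
            rcases hx with rfl | rfl | rfl
            · exact ⟨_, h0⟩
            · exact ⟨_, h1⟩
            · exact ⟨_, h2⟩
          | zero => rw [map_zero, zero_mul]; exact zero_mem _
          | add x y _ _ hx hy => rw [map_add, add_mul]; exact add_mem hx hy
          | smul a x _ hx =>
            rw [smul_eq_mul, map_mul, mul_assoc]; exact mul_mem (hCb a) hx
      | algebraMap b => exact hCb b
      | add x y _ _ hx hy => exact add_mem hx hy
      | mul x y _ _ hx hy => exact mul_mem hx hy
    have hgen : ∀ b ∈ Ideal.span {v p k 0, v p k 1, v p k 2},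
        LaurentPolynomial.C b * LaurentPolynomial.T 1 ∈
          extendedReesAlgebra (B p k) (Ideal.span {v p k 0, v p k 1, v p k 2}) :=
      fun b hb => Algebra.subset_adjoin (Or.inr ⟨b, hb, rfl⟩)
    ext r
    constructor
    · rintro ⟨g, rfl⟩
      change φ g ∈ extendedReesAlgebra (B p k) (Ideal.span {v p k 0, v p k 1, v p k 2})
      induction g using MvPolynomial.induction_on with
      | C a =>
        rw [hC]
        exact Subalgebra.algebraMap_mem
          (extendedReesAlgebra (B p k) (Ideal.span {v p k 0, v p k 1, v p k 2}))
          (algebraMap k (B p k) a)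
      | add a b ha hb => rw [map_add]; exact add_mem ha hb
      | mul_X a i ha =>
        rw [map_mul]
        refine mul_mem ha ?_
        fin_cases i
        · change φ (MvPolynomial.X 0) ∈ _
          rw [h0]; exact hgen _ (Ideal.subset_span (by simp))
        · change φ (MvPolynomial.X 1) ∈ _
          rw [h1]; exact hgen _ (Ideal.subset_span (by simp))
        · change φ (MvPolynomial.X 2) ∈ _
          rw [h2]; exact hgen _ (Ideal.subset_span (by simp))
        · change φ (MvPolynomial.X 3) ∈ _
          rw [h3]; exact Algebra.subset_adjoin (Or.inl rfl)
    · intro hr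
      exact hsub r hr

end Stmt11
end

section
/- Let p ≥ 1 be an integer and k an algebraically closed field. Then the hypersurface ring k[X,Y,Z,U]/(X² + Y³U + Z^{6p+1}U^{6p−1}) is a Cohen–Macaulay normal integral domain. -/
set_option synthInstance.maxHeartbeats 1000000
set_option maxHeartbeats 2000000

open MvPolynomial

lemma aux_wr {A : Type*} [CommRing A] (rs : List A)
    (h : ∀ i (hi : i < rs.length), (Ideal.ofList (rs.take i)).IsPrime ∧
      rs[i] ∉ Ideal.ofList (rs.take i)) : RingTheory.Sequence.IsWeaklyRegular A rs := by
  refine ⟨fun i hi => ?_⟩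
  obtain ⟨hp, hn⟩ := h i hi
  rw [isSMulRegular_iff_right_eq_zero_of_smul]
  intro x
  induction x using Submodule.Quotient.induction_on with
  | H x =>
    rw [← Submodule.Quotient.mk_smul, Submodule.Quotient.mk_eq_zero, Submodule.Quotient.mk_eq_zero]
    simp only [smul_eq_mul, Ideal.mul_top]
    intro hx
    exact (hp.mem_or_mem hx).resolve_left hn

lemma aux_ker {k : Type*} [Field k] (b : Fin 3 → MvPolynomial (Fin 3) k)
    (I : Ideal (MvPolynomial (Fin 3) k)) (h1 : ∀ i, X i - b i ∈ I)
    (h2 : I ≤ RingHom.ker (aeval b : MvPolynomial (Fin 3) k →ₐ[k] MvPolynomial (Fin 3) k)) :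
    I = RingHom.ker (aeval b : MvPolynomial (Fin 3) k →ₐ[k] MvPolynomial (Fin 3) k) := by
  refine le_antisymm h2 fun g hg => ?_
  have key : (Ideal.Quotient.mkₐ k I) = (Ideal.Quotient.mkₐ k I).comp (aeval b) := by
    ext i
    simp only [Ideal.Quotient.mkₐ_eq_mk, AlgHom.comp_apply, aeval_X]
    exact Ideal.Quotient.eq.2 (h1 i)
  have := DFunLike.congr_fun key g
  rw [AlgHom.comp_apply, (RingHom.mem_ker).1 hg, map_zero] at this
  exact Ideal.Quotient.eq_zero_iff_mem.1 this

lemma aux_point {k : Type*} [Field k] (a : Fin 3 → k) :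
    RingTheory.Sequence.IsWeaklyRegular (MvPolynomial (Fin 3) k)
      ([X 0 - C (a 0), X 1 - C (a 1), X 2 - C (a 2)] : List (MvPolynomial (Fin 3) k)) := by
  have hne : ∀ i, (X i : MvPolynomial (Fin 3) k) - C (a i) ≠ 0 := fun i h => by
    have := congrArg (MvPolynomial.eval (fun _ => a i + 1)) h
    simp at this
  apply aux_wr
  intro i hi
  simp only [List.length_cons, List.length_nil] at hi
  interval_cases i
  · simp only [List.take_zero, Ideal.ofList_nil]
    exact ⟨Ideal.isPrime_bot, by simpa using hne 0⟩
  · have := aux_ker ![C (a 0), X 1, X 2] (Ideal.ofList [X 0 - C (a 0)])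
      (by intro i; fin_cases i <;> simp)
      (by simp [Ideal.span_le, Set.singleton_subset_iff, RingHom.mem_ker])
    simp only [List.take_succ_cons, List.take_zero]
    rw [this]
    refine ⟨RingHom.ker_isPrime _, ?_⟩
    simpa [RingHom.mem_ker] using hne 1
  · have := aux_ker ![C (a 0), C (a 1), X 2] (Ideal.ofList [X 0 - C (a 0), X 1 - C (a 1)])
      (by
        intro i; fin_cases i
        · exact Ideal.subset_span (by simp)
        · exact Ideal.subset_span (by simp)
        · simp)
      (by
        rw [Ideal.ofList, Ideal.span_le]
        intro x hx
        simp at hx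
        rcases hx with rfl | rfl <;> simp [RingHom.mem_ker])
    simp only [List.take_succ_cons, List.take_zero]
    rw [this]
    refine ⟨RingHom.ker_isPrime _, ?_⟩
    simpa [RingHom.mem_ker] using hne 2

lemma aux_height {A S : Type*} [CommRing A] [CommRing S] [Algebra A S] [Algebra.IsIntegral A S]
    (P : Ideal S) [P.IsPrime] : P.height ≤ (P.comap (algebraMap A S)).height := by
  have h := Order.height_le_height_apply_of_strictMono
    (PrimeSpectrum.comap (algebraMap A S)) (fun I J h => by
      exact Ideal.IsIntegral.comap_lt_comap (R := A) (I := I.asIdeal) (J := J.asIdeal) h) ⟨P, ‹_›⟩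
  rw [← PrimeSpectrum.height_eq_orderHeight, ← PrimeSpectrum.height_eq_orderHeight] at h
  exact h

lemma aux_CM {k : Type*} [Field k] [IsAlgClosed k] {S : Type*} [CommRing S] [IsDomain S]
    [Algebra (MvPolynomial (Fin 3) k) S] [Module.Finite (MvPolynomial (Fin 3) k) S]
    [Module.Flat (MvPolynomial (Fin 3) k) S] : IsCohenMacaulayRing S := by
  have hN : IsNoetherianRing S := IsNoetherianRing.of_finite (MvPolynomial (Fin 3) k) S
  refine ⟨hN, fun P hP => ?_⟩
  have hNL : IsNoetherianRing (Localization.AtPrime P) :=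
    IsLocalization.isNoetherianRing P.primeCompl _ hN
  refine ⟨hNL, inferInstance, ?_⟩
  set Q := P.comap (algebraMap (MvPolynomial (Fin 3) k) S) with hQ
  have hPQ : P.height ≤ Q.height := aux_height P
  -- reduction to sequences downstairs
  have red : ∀ rs : List (MvPolynomial (Fin 3) k),
      RingTheory.Sequence.IsWeaklyRegular (MvPolynomial (Fin 3) k) rs →
      (∀ x ∈ rs, x ∈ Q) → (rs.length : ℕ∞) = P.height →
      ∃ rs : List (Localization.AtPrime P), (∀ x ∈ rs, x ∈ IsLocalRing.maximalIdeal _) ∧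
      RingTheory.Sequence.IsRegular (Localization.AtPrime P) rs ∧
        (rs.length : WithBot ℕ∞) = ringKrullDim (Localization.AtPrime P) := by
    intro rs h1 h2 h3
    have h4 := RingTheory.Sequence.IsWeaklyRegular.of_flat (S := S) h1
    have h5 : ∀ r ∈ rs.map (algebraMap (MvPolynomial (Fin 3) k) S), r ∈ P := by
      intro r hr
      obtain ⟨x, hx, rfl⟩ := List.mem_map.1 hr
      exact h2 x hx
    refine ⟨_, ?_, h4.isRegular_of_isLocalization_of_mem (Localization.AtPrime P) P h5, ?_⟩
    · intro x hx
      obtain ⟨y, hy, rfl⟩ := List.mem_map.1 hx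
      exact (IsLocalization.AtPrime.to_map_mem_maximal_iff _ P y).2 (h5 y hy)
    · rw [IsLocalization.AtPrime.ringKrullDim_eq_height P, ← h3]
      simp
  have hdim : ringKrullDim (MvPolynomial (Fin 3) k) = 3 := by
    rw [MvPolynomial.ringKrullDim_of_isNoetherianRing]
    simp
  have hQ3 : Q.height ≤ 3 := by
    have := Ideal.height_le_ringKrullDim_of_isPrime (I := Q)
    rw [hdim] at this
    exact WithBot.coe_le_coe.1 this
  by_cases h0 : P.height = 0
  · exact red [] (.nil _ _) (by simp) (by simp [h0])
  have hQ0 : Q ≠ ⊥ := by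
    intro h
    rw [h, Ideal.height_bot] at hPQ
    exact h0 (le_antisymm hPQ bot_le)
  obtain ⟨π, hπQ, hπ⟩ := Ideal.IsPrime.exists_mem_prime_of_ne_bot (I := Q) inferInstance hQ0
  have hpi : (Ideal.span {π}).IsPrime := (Ideal.span_singleton_prime hπ.ne_zero).2 hπ
  by_cases h1 : P.height = 1
  · refine red [π] (aux_wr _ ?_) (by simpa using hπQ) (by simp [h1])
    intro i hi
    simp only [List.length_cons, List.length_nil] at hi
    interval_cases i
    simpa using ⟨Ideal.isPrime_bot, hπ.ne_zero⟩
  have h2' : 2 ≤ P.height := by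
    revert h0 h1
    induction P.height using ENat.recTopCoe with
    | top => simp
    | coe n => norm_cast; omega
  have hg : ∃ g ∈ Q, g ∉ Ideal.span {π} := by
    by_contra! hcon
    have hle : Q.height ≤ 1 := (Ideal.height_mono (fun g hg => hcon g hg)).trans
      (Ideal.height_span_singleton_le_one hπ.not_isUnit)
    have := (h2'.trans hPQ).trans hle
    exact absurd this (by decide)
  obtain ⟨g, hgQ, hg⟩ := hg
  by_cases h2 : P.height = 2
  · refine red [π, g] (aux_wr _ ?_) (by simpa using ⟨hπQ, hgQ⟩) (by simp [h2])
    intro i hi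
    simp only [List.length_cons, List.length_nil] at hi
    interval_cases i
    · simpa using ⟨Ideal.isPrime_bot, hπ.ne_zero⟩
    · simpa using ⟨hpi, hg⟩
  have h3 : P.height = 3 := by
    have := hPQ.trans hQ3
    revert h2 h2' this
    induction P.height using ENat.recTopCoe with
    | top => simp
    | coe n => norm_cast; omega
  have hQmax : Q.IsMaximal := by
    have : FiniteRingKrullDim (MvPolynomial (Fin 3) k) := by
      rw [finiteRingKrullDim_iff_ne_bot_and_top, hdim]
      exact ⟨by decide, by decide⟩
    apply Ideal.isMaximal_of_height_eq_ringKrullDim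
    rw [hdim, le_antisymm hQ3 (h3 ▸ hPQ)]
    rfl
  obtain ⟨a, ha⟩ := (MvPolynomial.isMaximal_iff_eq_vanishingIdeal_singleton (I := Q)).1 hQmax
  refine red _ (aux_point a) ?_ (by simp [h3])
  rw [ha]
  simp

/-- The polynomial `Y³U + Z^{6p+1}U^{6p−1}` with `p = q + 1`. -/
noncomputable def auxF (k : Type*) [Field k] (q : ℕ) : MvPolynomial (Fin 3) k :=
  X 0 ^ 3 * X 2 + X 1 ^ (6 * q + 7) * X 2 ^ (6 * q + 5)

lemma aux_two_vars {k : Type*} [Field k] {π : MvPolynomial (Fin 3) k} (hπ : Prime π)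
    {i j : Fin 3} (hi : π ∣ X i) (hj : π ∣ X j) : i = j := by
  have h : Associated π (X i) :=
    hπ.irreducible.associated_of_dvd (MvPolynomial.X_prime (i := i)).irreducible hi
  exact MvPolynomial.X_dvd_X.1 (h.symm.dvd.trans hj)

lemma aux_dvd_C_mul {k : Type*} [Field k] {π g : MvPolynomial (Fin 3) k} {c : k} (hc : c ≠ 0)
    (h : π ∣ C c * g) : π ∣ g := by
  have hu : IsUnit (C c : MvPolynomial (Fin 3) k) := (IsUnit.mk0 c hc).map C
  exact (hu.dvd_mul_left).1 h

/-- No prime divides all partial derivatives of `auxF`. -/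
lemma aux_jac {k : Type*} [Field k] (q : ℕ) {π : MvPolynomial (Fin 3) k} (hπ : Prime π)
    (h : ∀ i, π ∣ pderiv i (auxF k q)) : False := by
  have hY : π ∣ C (3 : k) * (X 0 ^ 2 * X 2) := by
    have := h 0
    simp [auxF, Derivation.leibniz, Derivation.leibniz_pow, pderiv_X] at this
    convert this using 1
    simp only [← map_natCast (C : k →+* MvPolynomial (Fin 3) k), ← map_ofNat (C : k →+* MvPolynomial (Fin 3) k), ← map_add, ← map_mul]
    push_cast
    ring
  have hZ : π ∣ C ((6 * q + 7 : ℕ) : k) * (X 1 ^ (6 * q + 6) * X 2 ^ (6 * q + 5)) := by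
    have := h 1
    simp [auxF, Derivation.leibniz, Derivation.leibniz_pow, pderiv_X] at this
    convert this using 1
    simp only [← map_natCast (C : k →+* MvPolynomial (Fin 3) k), ← map_ofNat (C : k →+* MvPolynomial (Fin 3) k), ← map_add, ← map_mul]
    push_cast
    ring
  have hU : π ∣ X 0 ^ 3 + C ((6 * q + 5 : ℕ) : k) * (X 1 ^ (6 * q + 7) * X 2 ^ (6 * q + 4)) := by
    have := h 2
    simp [auxF, Derivation.leibniz, Derivation.leibniz_pow, pderiv_X] at this
    convert this using 1
    simp only [← map_natCast (C : k →+* MvPolynomial (Fin 3) k), ← map_ofNat (C : k →+* MvPolynomial (Fin 3) k), ← map_add, ← map_mul]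
    push_cast
    ring
  clear h
  by_cases h2 : π ∣ X 2
  · have h0 : π ∣ X 0 ^ 3 := by
      refine (dvd_add_left ?_).1 hU
      exact Dvd.dvd.mul_left (Dvd.dvd.mul_left (dvd_pow h2 (by omega)) _) _
    exact absurd (aux_two_vars hπ h2 (hπ.dvd_of_dvd_pow h0)) (by decide)
  have hU' : ∀ n, ¬ π ∣ X 2 ^ n := fun n hn => h2 (hπ.dvd_of_dvd_pow hn)
  suffices hz : π ∣ X 1 by
    have h0 : π ∣ X 0 ^ 3 := by
      refine (dvd_add_left ?_).1 hU
      exact Dvd.dvd.mul_left (Dvd.dvd.mul_right (dvd_pow hz (by omega)) _) _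
    exact absurd (aux_two_vars hπ hz (hπ.dvd_of_dvd_pow h0)) (by decide)
  by_cases hc : ((6 * q + 7 : ℕ) : k) = 0
  · have h3 : (3 : k) ≠ 0 := by
      intro h3
      have : ((6 * q + 7 : ℕ) : k) = 1 := by
        push_cast
        linear_combination (2 * (q : k) + 2) * h3
      exact one_ne_zero (this.symm.trans hc)
    have h5 : ((6 * q + 5 : ℕ) : k) ≠ 0 := by
      intro h5
      have : (1 : k) = 0 := by
        push_cast at h5 hc
        linear_combination (-3 * (q : k) - 3) * (hc - h5) + hc
      exact one_ne_zero this
    have h0 : π ∣ X 0 :=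
      hπ.dvd_of_dvd_pow ((hπ.dvd_or_dvd (aux_dvd_C_mul h3 hY)).resolve_right h2)
    have := aux_dvd_C_mul h5 ((dvd_add_right (dvd_pow h0 (by norm_num))).1 hU)
    exact hπ.dvd_of_dvd_pow ((hπ.dvd_or_dvd this).resolve_right (hU' _))
  · exact hπ.dvd_of_dvd_pow ((hπ.dvd_or_dvd (aux_dvd_C_mul hc hZ)).resolve_right (hU' _))

lemma aux_key {k : Type*} [Field k] (q : ℕ) {π a c : MvPolynomial (Fin 3) k} (hπ : Prime π)
    (h : π ^ 2 ∣ a ^ 2 + auxF k q * c ^ 2) (h2 : π ∣ 2 * a) : π ∣ a ∧ π ∣ c := by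
  -- derivatives of multiples of `π ^ 2` are multiples of `π`
  have hD : ∀ (i : Fin 3) (g : MvPolynomial (Fin 3) k), π ^ 2 ∣ g → π ∣ pderiv i g := by
    rintro i _ ⟨g, rfl⟩
    rw [Derivation.leibniz, Derivation.leibniz_pow]
    refine dvd_add ?_ ?_
    · exact ⟨π * pderiv i g, by simp only [smul_eq_mul]; ring⟩
    · exact ⟨g * (2 * pderiv i π), by simp only [smul_eq_mul, nsmul_eq_mul]; push_cast; ring⟩
  have hc : π ∣ c := by
    by_contra hc
    by_cases ha : π ∣ a
    · have h3 : π ^ 2 ∣ auxF k q * c ^ 2 := (dvd_add_right (pow_dvd_pow_of_dvd ha 2)).1 h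
      have h4 : π ^ 2 ∣ auxF k q :=
        hπ.pow_dvd_of_dvd_mul_right 2 (fun hh => hc (hπ.dvd_of_dvd_pow hh)) h3
      exact aux_jac q hπ fun i => hD i _ h4
    · have h20 : (2 : MvPolynomial (Fin 3) k) = 0 := by
        have h3 := (hπ.dvd_or_dvd h2).resolve_right ha
        by_contra h20
        have h2k : (2 : k) ≠ 0 := fun hh => h20 (by
          rw [← map_ofNat (C : k →+* MvPolynomial (Fin 3) k) 2]; rw [hh, map_zero])
        refine hπ.not_isUnit (isUnit_of_dvd_unit h3 ?_)
        rw [← map_ofNat (C : k →+* MvPolynomial (Fin 3) k) 2]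
        exact (IsUnit.mk0 _ h2k).map C
      refine aux_jac q hπ fun i => ?_
      have h3 := hD i _ h
      have h4 : pderiv i (a ^ 2 + auxF k q * c ^ 2) = pderiv i (auxF k q) * c ^ 2 := by
        simp only [map_add, Derivation.leibniz, Derivation.leibniz_pow, smul_eq_mul, nsmul_eq_mul]
        push_cast
        linear_combination (a * pderiv i a + auxF k q * c * pderiv i c) * h20
      rw [h4] at h3
      exact (hπ.dvd_or_dvd h3).resolve_right (fun hh => hc (hπ.dvd_of_dvd_pow hh))
  refine ⟨?_, hc⟩
  have h3 : π ^ 2 ∣ a ^ 2 := (dvd_add_left (Dvd.dvd.mul_left (pow_dvd_pow_of_dvd hc 2) _)).1 h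
  exact hπ.dvd_of_dvd_pow ((dvd_pow_self π two_ne_zero).trans h3)

lemma aux_norm_zero {k : Type*} [Field k] (q : ℕ) {a c : MvPolynomial (Fin 3) k}
    (h : a ^ 2 + auxF k q * c ^ 2 = 0) : a = 0 ∧ c = 0 := by
  have hπ : Prime (X 2 : MvPolynomial (Fin 3) k) := MvPolynomial.X_prime
  have hUf : (X 2 : MvPolynomial (Fin 3) k) ∣ auxF k q :=
    dvd_add (Dvd.intro_left _ rfl) (Dvd.dvd.mul_left (dvd_pow_self _ (by omega)) _)
  have key : ∀ n : ℕ, ∀ a c : MvPolynomial (Fin 3) k, a ^ 2 + auxF k q * c ^ 2 = 0 →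
      X 2 ^ n ∣ a ∧ X 2 ^ n ∣ c := by
    intro n
    induction n with
    | zero => simp
    | succ n ih =>
      intro a c h
      have ha : X 2 ∣ a := by
        refine hπ.dvd_of_dvd_pow (n := 2) ?_
        rw [eq_neg_of_add_eq_zero_left h]
        exact (Dvd.dvd.mul_right hUf _).neg_right
      obtain ⟨⟨a', rfl⟩, ⟨c', rfl⟩⟩ := aux_key q hπ (h ▸ dvd_zero _) (ha.mul_left 2)
      have h' : a' ^ 2 + auxF k q * c' ^ 2 = 0 := by
        have : X 2 ^ 2 * (a' ^ 2 + auxF k q * c' ^ 2) = 0 := by rw [← h]; ring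
        exact (mul_eq_zero.1 this).resolve_left (pow_ne_zero _ hπ.ne_zero)
      obtain ⟨h1, h2⟩ := ih a' c' h'
      rw [pow_succ']
      exact ⟨mul_dvd_mul_left _ h1, mul_dvd_mul_left _ h2⟩
  have fin : ∀ x : MvPolynomial (Fin 3) k, (∀ n, X 2 ^ n ∣ x) → x = 0 := by
    intro x hx
    by_contra hx0
    obtain ⟨n, hn⟩ := FiniteMultiplicity.of_prime_left hπ hx0
    exact hn (hx _)
  exact ⟨fin a fun n => (key n a c h).1, fin c fun n => (key n a c h).2⟩

/-- The quadratic extension `A[ω]`, `ω² = -f`. -/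
abbrev AuxS (k : Type*) [Field k] (q : ℕ) := QuadraticAlgebra (MvPolynomial (Fin 3) k) (-auxF k q) 0

lemma aux_norm {k : Type*} [Field k] (q : ℕ) (z : AuxS k q) :
    QuadraticAlgebra.norm z = z.re ^ 2 + auxF k q * z.im ^ 2 := by
  rw [QuadraticAlgebra.norm_def]; ring

lemma aux_norm_eq_zero {k : Type*} [Field k] (q : ℕ) (z : AuxS k q)
    (h : QuadraticAlgebra.norm z = 0) : z = 0 := by
  rw [aux_norm] at h
  obtain ⟨h1, h2⟩ := aux_norm_zero q h
  ext <;> simp [h1, h2]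

instance aux_isDomain {k : Type*} [Field k] (q : ℕ) : IsDomain (AuxS k q) := by
  have : NoZeroDivisors (AuxS k q) := ⟨fun {x y} h => by
    have := congrArg QuadraticAlgebra.norm h
    rw [map_mul, QuadraticAlgebra.norm_zero, mul_eq_zero] at this
    exact this.imp (aux_norm_eq_zero q x) (aux_norm_eq_zero q y)⟩
  exact NoZeroDivisors.to_isDomain _

lemma aux_int_dvd {A L : Type*} [CommRing A] [IsDomain A] [IsIntegrallyClosed A] [Field L]
    [Algebra A L] (hinj : Function.Injective (algebraMap A L)) {x d : A} (hd : d ≠ 0)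
    (h : IsIntegral A (algebraMap A L x / algebraMap A L d)) : d ∣ x := by
  let K := FractionRing A
  let φ : K →ₐ[A] L := IsFractionRing.liftAlgHom (g := Algebra.ofId A L) hinj
  have h1 : φ (algebraMap A K x / algebraMap A K d) = algebraMap A L x / algebraMap A L d := by
    rw [map_div₀, AlgHom.commutes, AlgHom.commutes]
  rw [← h1, isIntegral_algHom_iff φ φ.toRingHom.injective] at h
  obtain ⟨y, hy⟩ := IsIntegrallyClosed.algebraMap_eq_of_integral h
  have hd' : algebraMap A K d ≠ 0 := by simpa using hd
  rw [eq_div_iff hd', ← map_mul] at hy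
  exact ⟨y, by rw [mul_comm]; exact (IsFractionRing.injective A K hy).symm⟩

/-- Conjugation as an algebra homomorphism. -/
noncomputable def auxConj (k : Type*) [Field k] (q : ℕ) : AuxS k q →ₐ[MvPolynomial (Fin 3) k] AuxS k q where
  __ := starRingEnd (AuxS k q)
  commutes' r := by
    change star _ = _
    ext <;> simp

lemma aux_trace {k : Type*} [Field k] (q : ℕ) (r : AuxS k q) :
    algebraMap (MvPolynomial (Fin 3) k) (AuxS k q) (2 * r.re) = r + star r := by
  apply QuadraticAlgebra.ext
  · rw [QuadraticAlgebra.re_add, QuadraticAlgebra.re_star]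
    change 2 * r.re = _
    ring
  · rw [QuadraticAlgebra.im_add, QuadraticAlgebra.im_star]
    change (0 : MvPolynomial (Fin 3) k) = _
    ring

lemma aux_prime_dvd {k : Type*} [Field k] (q : ℕ) {π : MvPolynomial (Fin 3) k} (hπ : Prime π)
    {L : Type*} [Field L] [Algebra (AuxS k q) L] [IsFractionRing (AuxS k q) L]
    [Algebra (MvPolynomial (Fin 3) k) L] [IsScalarTower (MvPolynomial (Fin 3) k) (AuxS k q) L]
    (r : AuxS k q)
    (h : IsIntegral (MvPolynomial (Fin 3) k) (algebraMap (AuxS k q) L r /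
      algebraMap (MvPolynomial (Fin 3) k) L π)) :
    algebraMap _ (AuxS k q) π ∣ r := by
  let A := MvPolynomial (Fin 3) k
  have hinjS : Function.Injective (algebraMap (AuxS k q) L) := IsFractionRing.injective _ _
  have htower : ∀ x : A, algebraMap A L x = algebraMap (AuxS k q) L (algebraMap A _ x) :=
    fun x => IsScalarTower.algebraMap_apply _ _ _ _
  have hinj : Function.Injective (algebraMap A L) := by
    intro x y hxy
    rw [htower, htower] at hxy
    exact QuadraticAlgebra.algebraMap_injective (hinjS hxy)
  have hπL : algebraMap A L π ≠ 0 := by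
    rw [Ne, map_eq_zero_iff _ hinj]; exact hπ.ne_zero
  have hg : Function.Injective ((IsScalarTower.toAlgHom A (AuxS k q) L).comp (auxConj k q)) := by
    intro x y hxy
    exact star_injective (hinjS hxy)
  let τ : L →ₐ[A] L := (IsLocalization.liftAlgHom (M := nonZeroDivisors (AuxS k q))
    (f := (IsScalarTower.toAlgHom A (AuxS k q) L).comp (auxConj k q)) (by
      intro y
      refine IsUnit.mk0 _ ?_
      intro h0
      have := hg (h0.trans (map_zero _).symm)
      exact nonZeroDivisors.ne_zero y.2 this))
  have hτ : ∀ x : AuxS k q, τ (algebraMap _ L x) = algebraMap _ L (star x) := by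
    intro x
    simp only [τ, IsLocalization.liftAlgHom_apply]
    erw [IsLocalization.lift_eq]
    rfl
  have hτz : τ (algebraMap (AuxS k q) L r / algebraMap A L π) =
      algebraMap _ L (star r) / algebraMap A L π := by
    rw [map_div₀, hτ, AlgHom.commutes]
  have hconj := h.map τ
  rw [hτz] at hconj
  have htr : π ∣ 2 * r.re := by
    refine aux_int_dvd hinj hπ.ne_zero ?_
    have e0 : algebraMap A (AuxS k q) (2 * r.re) = r + star r := aux_trace q r
    have e : algebraMap A L (2 * r.re) / algebraMap A L π =
        algebraMap (AuxS k q) L r / algebraMap A L π +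
          algebraMap (AuxS k q) L (star r) / algebraMap A L π := by
      rw [← add_div, ← map_add, htower (2 * r.re), e0]
    rw [e]
    exact h.add hconj
  have hnm : π ^ 2 ∣ r.re ^ 2 + auxF k q * r.im ^ 2 := by
    refine aux_int_dvd hinj (pow_ne_zero 2 hπ.ne_zero) ?_
    have e : algebraMap A L (r.re ^ 2 + auxF k q * r.im ^ 2) / algebraMap A L (π ^ 2) =
        algebraMap (AuxS k q) L r / algebraMap A L π *
          (algebraMap (AuxS k q) L (star r) / algebraMap A L π) := by
      rw [div_mul_div_comm, ← map_mul, map_pow, sq (algebraMap A L π), ← aux_norm,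
        htower (QuadraticAlgebra.norm r), QuadraticAlgebra.algebraMap_norm_eq_mul_star]
    rw [e]
    exact h.mul hconj
  obtain ⟨h1, h2⟩ := aux_key q hπ hnm htr
  exact QuadraticAlgebra.algebraMap_dvd_iff.2 ⟨h1, h2⟩

lemma aux_dvd {k : Type*} [Field k] (q : ℕ)
    {L : Type*} [Field L] [Algebra (AuxS k q) L] [IsFractionRing (AuxS k q) L]
    [Algebra (MvPolynomial (Fin 3) k) L] [IsScalarTower (MvPolynomial (Fin 3) k) (AuxS k q) L]
    (d : MvPolynomial (Fin 3) k) : d ≠ 0 →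
    ∀ r : AuxS k q,
    IsIntegral (MvPolynomial (Fin 3) k) (algebraMap (AuxS k q) L r /
      algebraMap (MvPolynomial (Fin 3) k) L d) →
    algebraMap _ (AuxS k q) d ∣ r := by
  have htower : ∀ x : MvPolynomial (Fin 3) k, algebraMap _ L x =
      algebraMap (AuxS k q) L (algebraMap _ _ x) :=
    fun x => IsScalarTower.algebraMap_apply _ _ _ _
  have hinjS : Function.Injective (algebraMap (AuxS k q) L) :=
    IsFractionRing.injective _ _
  have hne : ∀ x : MvPolynomial (Fin 3) k, x ≠ 0 →
      algebraMap _ L x ≠ 0 := by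
    intro x hx h
    rw [htower, map_eq_zero_iff _ hinjS,
      map_eq_zero_iff _ QuadraticAlgebra.algebraMap_injective] at h
    exact hx h
  induction d using UniqueFactorizationMonoid.induction_on_prime with
  | h₁ => intro h; exact absurd rfl h
  | h₂ d hd => intro _ r _; exact (hd.map (algebraMap _ (AuxS k q))).dvd
  | h₃ d π hd hπ ih =>
    intro _ r hr
    have hd' := hne d hd
    have hπ' := hne π hπ.ne_zero
    have h1 : algebraMap _ (AuxS k q) π ∣ r := by
      apply aux_prime_dvd (L := L) q hπ
      have e : algebraMap (AuxS k q) L r / algebraMap (MvPolynomial (Fin 3) k) L π =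
          algebraMap (AuxS k q) L r / algebraMap (MvPolynomial (Fin 3) k) L (π * d) *
            algebraMap (MvPolynomial (Fin 3) k) L d := by
        rw [map_mul]
        field_simp
      rw [e]
      exact hr.mul isIntegral_algebraMap
    obtain ⟨s, rfl⟩ := h1
    rw [map_mul]
    refine mul_dvd_mul_left _ (ih hd s ?_)
    have e : algebraMap (AuxS k q) L s / algebraMap (MvPolynomial (Fin 3) k) L d =
        algebraMap (AuxS k q) L (algebraMap _ (AuxS k q) π * s) /
          algebraMap (MvPolynomial (Fin 3) k) L (π * d) := by
      rw [map_mul, map_mul, ← htower]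
      field_simp
    rw [e]
    exact hr

lemma aux_closed_aux {k : Type*} [Field k] (q : ℕ)
    {L : Type*} [Field L] [Algebra (AuxS k q) L] [IsFractionRing (AuxS k q) L]
    [Algebra (MvPolynomial (Fin 3) k) L] [IsScalarTower (MvPolynomial (Fin 3) k) (AuxS k q) L]
    (z : L) (hz : IsIntegral (AuxS k q) z) : ∃ y, algebraMap (AuxS k q) L y = z := by
  have hz' : IsIntegral (MvPolynomial (Fin 3) k) z := isIntegral_trans z hz
  obtain ⟨r, s, hs, rfl⟩ := IsFractionRing.div_surjective (A := AuxS k q) z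
  have hs0 : s ≠ 0 := nonZeroDivisors.ne_zero hs
  have hinjS : Function.Injective (algebraMap (AuxS k q) L) :=
    IsFractionRing.injective _ _
  have hn : QuadraticAlgebra.norm s ≠ 0 := fun h => hs0 (aux_norm_eq_zero q s h)
  have hss : star s ≠ 0 := by simpa using hs0
  have e1 : algebraMap (AuxS k q) L s ≠ 0 := by
    rwa [Ne, map_eq_zero_iff _ hinjS]
  have e2 : algebraMap (AuxS k q) L (star s) ≠ 0 := by
    rwa [Ne, map_eq_zero_iff _ hinjS]
  have e : algebraMap (AuxS k q) L (r * star s) /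
      algebraMap (MvPolynomial (Fin 3) k) L (QuadraticAlgebra.norm s) =
      algebraMap (AuxS k q) L r / algebraMap (AuxS k q) L s := by
    rw [IsScalarTower.algebraMap_apply (MvPolynomial (Fin 3) k) (AuxS k q) L,
      QuadraticAlgebra.algebraMap_norm_eq_mul_star, map_mul, map_mul]
    field_simp
  obtain ⟨t, ht⟩ := aux_dvd q (L := L) _ hn (r * star s) (by
    rw [e]
    exact hz')
  refine ⟨t, ?_⟩
  rw [QuadraticAlgebra.algebraMap_norm_eq_mul_star] at ht
  have : r = s * t := mul_right_cancel₀ hss (by rw [ht]; ring)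
  rw [this, map_mul]
  field_simp

lemma aux_closed {k : Type*} [Field k] (q : ℕ) : IsIntegrallyClosed (AuxS k q) := by
  rw [isIntegrallyClosed_iff (FractionRing (AuxS k q))]
  intro z hz
  exact aux_closed_aux q z hz

theorem aux_main_abs (q : ℕ) {k : Type*} [Field k] [IsAlgClosed k] {R : Type*} [CommRing R]
    [Algebra k R] (mk : MvPolynomial (Fin 4) k →ₐ[k] R) (hs : Function.Surjective mk)
    (hker : ∀ x, mk x = 0 ↔ ((X 0 : MvPolynomial (Fin 4) k) ^ 2 + X 1 ^ 3 * X 3 +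
      X 2 ^ (6 * q + 7) * X 3 ^ (6 * q + 5)) ∣ x) : IsCMNormalDomain R := by
  set F : MvPolynomial (Fin 4) k := X 0 ^ 2 + X 1 ^ 3 * X 3 +
    X 2 ^ (6 * q + 7) * X 3 ^ (6 * q + 5) with hF
  let ι : MvPolynomial (Fin 3) k →ₐ[k] R := aeval ![mk (X 1), mk (X 2), mk (X 3)]
  let : Algebra (MvPolynomial (Fin 3) k) R := ι.toRingHom.toAlgebra
  have hι : ∀ x, algebraMap (MvPolynomial (Fin 3) k) R x = ι x := fun _ => rfl
  have : IsScalarTower k (MvPolynomial (Fin 3) k) R :=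
    IsScalarTower.of_algebraMap_eq fun x => (ι.commutes x).symm
  have hmkF : mk F = 0 := (hker F).2 dvd_rfl
  have hrel : mk (X 0) * mk (X 0) = (-auxF k q) • (1 : R) +
      (0 : MvPolynomial (Fin 3) k) • mk (X 0) := by
    have h1 : mk (X 0) ^ 2 + mk (X 1) ^ 3 * mk (X 3) +
        mk (X 2) ^ (6 * q + 7) * mk (X 3) ^ (6 * q + 5) = 0 := by
      rw [← hmkF, hF]; simp only [map_add, map_mul, map_pow]
    rw [zero_smul, add_zero, Algebra.smul_def, mul_one, hι]
    simp only [auxF, ι, map_neg, map_add, map_mul, map_pow, aeval_X]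
    simp only [Matrix.cons_val]
    linear_combination h1
  let ψ : AuxS k q →ₐ[MvPolynomial (Fin 3) k] R := QuadraticAlgebra.lift ⟨mk (X 0), hrel⟩
  have hψω : ψ QuadraticAlgebra.omega = mk (X 0) := by
    change (0 : MvPolynomial (Fin 3) k) • (1 : R) + (1 : MvPolynomial (Fin 3) k) • mk (X 0) = _
    rw [zero_smul, one_smul, zero_add]
  let φ₀ : MvPolynomial (Fin 4) k →ₐ[k] AuxS k q := aeval
    ![QuadraticAlgebra.omega, algebraMap (MvPolynomial (Fin 3) k) _ (X 0),
      algebraMap (MvPolynomial (Fin 3) k) _ (X 1), algebraMap (MvPolynomial (Fin 3) k) _ (X 2)]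
  have hφF : φ₀ F = 0 := by
    have h1 : (QuadraticAlgebra.omega : AuxS k q) ^ 2 =
        algebraMap (MvPolynomial (Fin 3) k) _
          (-(X 0 ^ 3 * X 2 + X 1 ^ (6 * q + 7) * X 2 ^ (6 * q + 5))) := by
      rw [sq, QuadraticAlgebra.omega_mul_omega_eq_mk]; rfl
    simp only [φ₀, hF, map_add, map_mul, map_pow, aeval_X]
    simp only [Matrix.cons_val]
    rw [h1]
    simp only [map_neg, map_add, map_mul, map_pow]
    ring
  have hcomp : ∀ x, ψ (φ₀ x) = mk x := by
    have : (ψ.restrictScalars k).comp φ₀ = mk := by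
      apply MvPolynomial.algHom_ext
      intro i
      change ψ (φ₀ (X i)) = _
      simp only [φ₀, aeval_X]
      fin_cases i
      · exact hψω
      · exact (ψ.commutes _).trans (by simp [hι, ι])
      · exact (ψ.commutes _).trans (by simp [hι, ι])
      · exact (ψ.commutes _).trans (by simp [hι, ι])
    exact fun x => DFunLike.congr_fun this x
  have hren : ∀ a : MvPolynomial (Fin 3) k, φ₀ (rename Fin.succ a) = algebraMap _ _ a := by
    have : φ₀.comp (rename Fin.succ) =
        IsScalarTower.toAlgHom k (MvPolynomial (Fin 3) k) (AuxS k q) := by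
      apply MvPolynomial.algHom_ext
      intro i
      fin_cases i <;> simp [φ₀]
    exact fun x => DFunLike.congr_fun this x
  have hφs : ∀ s : AuxS k q, ∃ t, φ₀ t = s := by
    intro s
    refine ⟨rename Fin.succ s.re + rename Fin.succ s.im * X 0, ?_⟩
    have h0 : φ₀ (X 0) = QuadraticAlgebra.omega := by simp [φ₀]
    rw [map_add, map_mul, hren, hren, h0]
    ext <;> simp
  have hinj : Function.Injective ψ := by
    rw [injective_iff_map_eq_zero]
    intro s h
    obtain ⟨t, rfl⟩ := hφs s
    rw [hcomp, hker] at h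
    obtain ⟨u, rfl⟩ := h
    rw [map_mul, hφF, zero_mul]
  have hsurj : Function.Surjective ψ := by
    intro x
    obtain ⟨y, rfl⟩ := hs x
    exact ⟨φ₀ y, hcomp y⟩
  let e : AuxS k q ≃ₐ[MvPolynomial (Fin 3) k] R := AlgEquiv.ofBijective ψ ⟨hinj, hsurj⟩
  have hdom : IsDomain R := e.symm.toMulEquiv.isDomain
  have : Module.Finite (MvPolynomial (Fin 3) k) R := Module.Finite.equiv e.toLinearEquiv
  have : Module.Flat (MvPolynomial (Fin 3) k) R := Module.Flat.of_linearEquiv e.symm.toLinearEquiv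
  have := aux_closed (k := k) q
  exact ⟨aux_CM (k := k), hdom, IsIntegrallyClosed.of_equiv e.toRingEquiv⟩

theorem aux_main (q : ℕ) (k : Type*) [Field k] [IsAlgClosed k] :
    IsCMNormalDomain
      (MvPolynomial (Fin 4) k ⧸
        (Ideal.span {(MvPolynomial.X 0 : MvPolynomial (Fin 4) k) ^ 2 +
          MvPolynomial.X 1 ^ 3 * MvPolynomial.X 3 +
          MvPolynomial.X 2 ^ (6 * q + 7) * MvPolynomial.X 3 ^ (6 * q + 5)})) :=
  aux_main_abs q (Ideal.Quotient.mkₐ k _) Ideal.Quotient.mk_surjective fun x => by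
    rw [← Ideal.mem_span_singleton]
    exact Ideal.Quotient.eq_zero_iff_mem

/-- For every integer `p ≥ 1` and every algebraically closed field
`k`, the hypersurface ring `k[X,Y,Z,U]/(X² + Y³U + Z^{6p+1}U^{6p−1})` is a
Cohen–Macaulay normal integral domain. -/
theorem stmt12 (p : ℕ) (hp : 1 ≤ p) (k : Type*) [Field k] [IsAlgClosed k] :
    IsCMNormalDomain
      (MvPolynomial (Fin 4) k ⧸
        (Ideal.span {(MvPolynomial.X 0 : MvPolynomial (Fin 4) k) ^ 2 +
          MvPolynomial.X 1 ^ 3 * MvPolynomial.X 3 +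
          MvPolynomial.X 2 ^ (6 * p + 1) * MvPolynomial.X 3 ^ (6 * p - 1)})) := by
  obtain ⟨q, rfl⟩ : ∃ q, p = q + 1 := ⟨p - 1, by omega⟩
  have h1 : 6 * (q + 1) + 1 = 6 * q + 7 := by ring
  have h2 : 6 * (q + 1) - 1 = 6 * q + 5 := by omega
  rw [h1, h2]
  exact aux_main q k
end
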